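/- arXiv:1707.02659 — 4 statements merged into one kernel-verified Lean document; each statement's English description precedes it below -/
import Mathlib

section
/- Let X be a measurable space, P a Markov (probability) kernel on X, V : X → ℝ measurable with V(x) ≥ 1 for all x, K ⊆ X a measurable set, λ ∈ (0,1) and b ∈ [0,∞), and suppose the drift condition ∫ V(y) P(x,dy) ≤ λ·V(x) + b·1_K(x) holds for all x ∈ X. Then for all x ∈ X, ∫ √(V(y)) P(x,dy) ≤ √λ·√(V(x)) + √b·1_K(x). -/
open MeasureTheory ProbabilityTheory Filter
open scoped ENNReal NNReal Topology

noncomputable section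

theorem lintegral_rpow_le_rpow_lintegral_mul_measure_univ {α : Type*} [MeasurableSpace α]
    {μ : Measure α} {f : α → ℝ≥0∞} (hf : AEMeasurable f μ) {p : ℝ} (hp0 : 0 ≤ p) (hp1 : p ≤ 1) :
    ∫⁻ a, f a ^ p ∂μ ≤ (∫⁻ a, f a ∂μ) ^ p * μ Set.univ ^ (1 - p) := by
  simpa using ENNReal.lintegral_mul_norm_pow_le hf (aemeasurable_const (b := (1 : ℝ≥0∞)))
    hp0 (sub_nonneg.2 hp1) (add_sub_cancel p 1)

theorem lintegral_rpow_le_rpow_lintegral {α : Type*} [MeasurableSpace α] {μ : Measure α}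
    (hμ : μ Set.univ ≤ 1) {f : α → ℝ≥0∞} (hf : AEMeasurable f μ)
    {p : ℝ} (hp0 : 0 ≤ p) (hp1 : p ≤ 1) :
    ∫⁻ a, f a ^ p ∂μ ≤ (∫⁻ a, f a ∂μ) ^ p :=
  (lintegral_rpow_le_rpow_lintegral_mul_measure_univ hf hp0 hp1).trans <|
    mul_le_of_le_one_right' <| ENNReal.rpow_le_one hμ (sub_nonneg.2 hp1)

theorem mul_add_mul_indicator_one_rpow_le {α : Type*} (s : Set α) (a : α) {c v b p : ℝ}
    (hc : 0 ≤ c) (hv : 0 ≤ v) (hb : 0 ≤ b) (hp0 : 0 ≤ p) (hp1 : p ≤ 1) :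
    (c * v + b * s.indicator (fun _ => 1) a) ^ p
      ≤ c ^ p * v ^ p + b ^ p * s.indicator (fun _ => 1) a := by
  rw [← Real.mul_rpow hc hv]
  by_cases ha : a ∈ s
  · simpa [ha] using Real.rpow_add_le_add_rpow (mul_nonneg hc hv) hb hp0 hp1
  · simp [ha]

theorem drift_sqrt_general {X : Type*} [MeasurableSpace X]
    (P : Kernel X X) (hP : ∀ x, P x Set.univ ≤ 1)
    (V : X → ℝ) (hVmeas : Measurable V) (hV0 : ∀ x, 0 ≤ V x) (K : Set X)
    (l b p : ℝ) (hl : 0 ≤ l) (hb : 0 ≤ b) (hp0 : 0 ≤ p) (hp1 : p ≤ 1)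
    (hdrift : ∀ x, ∫⁻ y, ENNReal.ofReal (V y) ∂(P x)
      ≤ ENNReal.ofReal (l * V x + b * K.indicator (fun _ => 1) x)) (x : X) :
    ∫⁻ y, ENNReal.ofReal (V y ^ p) ∂(P x)
      ≤ ENNReal.ofReal (l ^ p * V x ^ p + b ^ p * K.indicator (fun _ => 1) x) := by
  have hbound : 0 ≤ l * V x + b * K.indicator (fun _ => 1) x :=
    add_nonneg (mul_nonneg hl (hV0 x))
      (mul_nonneg hb (Set.indicator_nonneg (fun _ _ => zero_le_one) x))
  calc ∫⁻ y, ENNReal.ofReal (V y ^ p) ∂(P x)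
      = ∫⁻ y, ENNReal.ofReal (V y) ^ p ∂(P x) := by
        simp only [ENNReal.ofReal_rpow_of_nonneg (hV0 _) hp0]
    _ ≤ (∫⁻ y, ENNReal.ofReal (V y) ∂(P x)) ^ p :=
        lintegral_rpow_le_rpow_lintegral (hP x) hVmeas.ennreal_ofReal.aemeasurable hp0 hp1
    _ ≤ ENNReal.ofReal (l * V x + b * K.indicator (fun _ => 1) x) ^ p :=
        ENNReal.rpow_le_rpow (hdrift x) hp0
    _ = ENNReal.ofReal ((l * V x + b * K.indicator (fun _ => 1) x) ^ p) :=
        ENNReal.ofReal_rpow_of_nonneg hbound hp0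
    _ ≤ ENNReal.ofReal (l ^ p * V x ^ p + b ^ p * K.indicator (fun _ => 1) x) :=
        ENNReal.ofReal_le_ofReal <|
          mul_add_mul_indicator_one_rpow_le K x hl (hV0 x) hb hp0 hp1

/-- Jensen plus subadditivity of the square root:
`∫ √V dP(x,·) ≤ √λ·√V(x) + √b·1_K(x)`. -/
theorem drift_sqrt {X : Type*} [MeasurableSpace X]
    (P : Kernel X X) [IsMarkovKernel P]
    (V : X → ℝ) (hVmeas : Measurable V) (hV1 : ∀ x, 1 ≤ V x)
    (K : Set X) (hK : MeasurableSet K)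
    (l b : ℝ) (hl0 : 0 < l) (hl1 : l < 1) (hb : 0 ≤ b)
    (hdrift : ∀ x, ∫⁻ y, ENNReal.ofReal (V y) ∂(P x)
      ≤ ENNReal.ofReal (l * V x + b * K.indicator (fun _ => 1) x)) :
    ∀ x : X, ∫⁻ y, ENNReal.ofReal (Real.sqrt (V y)) ∂(P x)
      ≤ ENNReal.ofReal (Real.sqrt l * Real.sqrt (V x)
          + Real.sqrt b * K.indicator (fun _ => 1) x) := by
  simpa only [Real.sqrt_eq_rpow] using drift_sqrt_general P (fun _ => prob_le_one) V hVmeas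
    (fun x => zero_le_one.trans (hV1 x)) K l b (1 / 2) hl0.le hb (by norm_num) (by norm_num) hdrift

end
end

section
/- Let X be a measurable space, P a Markov kernel on X, V : X → ℝ measurable with V(x) ≥ 1, satisfying ∫ V(y) P(x,dy) ≤ λ·V(x) + b·1_K(x) for all x (λ ∈ (0,1), b < ∞, K measurable), and μ an initial distribution with ∫ V dμ < ∞. Let q : X × X → ℝ be jointly measurable with ∫ q(x,y) P(x,dy) = 0 and ∫ q(x,y)² P(x,dy) ≤ G·V(x) for all x; let f : X → ℝ be measurable with |f(x)| ≤ κ·√(V(x)); let f̂ : X → ℝ be measurable with |f̂(x)| ≤ c·√(V(x)) and f̂ − P f̂ = f − a pointwise for a constant a. Under the chain law P_μ set α_n = (1/n)∑_{j=0}^{n−1} f(Φ_j), D_k = q(Φ_{k−1},Φ_k), M_n = ∑_{j=1}^n D_j, and ξ_k = f̂(Φ_k) − P f̂(Φ_{k−1}). Then for every n ≥ 1, E_μ[α_n M_n] = E_μ[(α_n − a) M_n] = −(1/n)·E_μ[ f̂(Φ_n) M_n ] + (1/n)·∑_{k=1}^n E_μ[ ξ_k D_k ]. -/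
open MeasureTheory ProbabilityTheory Filter
open scoped ENNReal NNReal Topology

noncomputable section

/-- The natural filtration of the coordinate process on path space `ℕ → X`. -/
def natFiltration (X : Type*) [MeasurableSpace X] :
    Filtration ℕ (inferInstance : MeasurableSpace (ℕ → X)) where
  seq k := ⨆ i ∈ Set.Iic k, MeasurableSpace.comap (fun ω : ℕ → X => ω i) inferInstance
  mono' := fun _ _ hij => biSup_mono fun _ hk => le_trans hk hij
  le' := fun _ => iSup₂_le fun i _ => (measurable_pi_apply i).comap_le

/-- `Pμ` is the law on path space of the Markov chain with initial distribution `μ`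
and one-step transition kernel `P`. -/
def IsMarkovChainLaw {X : Type*} [MeasurableSpace X] (μ : Measure X) (P : Kernel X X)
    (Pμ : Measure (ℕ → X)) : Prop :=
  IsProbabilityMeasure Pμ ∧
  Pμ.map (fun ω => ω 0) = μ ∧
  ∀ (n : ℕ) (g : (Fin (n + 1) → X) → ℝ≥0∞) (h : X → ℝ≥0∞),
    Measurable g → Measurable h →
    ∫⁻ ω, g (fun i => ω i) * h (ω (n + 1)) ∂Pμ
      = ∫⁻ ω, g (fun i => ω i) * ∫⁻ y, h y ∂(P (ω n)) ∂Pμ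

/-!
By the Poisson equation, `n (α_n - a) = f̂(Φ_0) - f̂(Φ_n) + Z_n`, where `Z_n` is the sum of the
innovations `ξ_k = f̂(Φ_k) - P f̂(Φ_{k-1})`. The Markov property makes both `ξ` and `D` sequences of
square-integrable martingale differences, so on multiplying by `M_n` and taking expectations the
term `E[f̂(Φ_0) M_n]` vanishes, and `E[Z_n M_n]` reduces to its diagonal `∑ E[ξ_k D_k]`.
Iterating the drift condition gives `E[V(Φ_k)] < ∞`, whence the square integrability.
-/

section MartingaleDifference

variable {Ω : Type*} {m0 : MeasurableSpace Ω} {ν : Measure Ω}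

theorem integral_mul_eq_zero_of_condExp_eq_zero {m : MeasurableSpace Ω} (hm : m ≤ m0)
    [SigmaFinite (ν.trim hm)] {Y Z : Ω → ℝ} (hY : StronglyMeasurable[m] Y)
    (hYZ : Integrable (Y * Z) ν) (hZ : Integrable Z ν) (hZ0 : ν[Z | m] =ᵐ[ν] 0) :
    ∫ ω, Y ω * Z ω ∂ν = 0 := by
  have hcond : ν[Y * Z | m] =ᵐ[ν] 0 := by
    filter_upwards [condExp_mul_of_stronglyMeasurable_left hY hYZ hZ, hZ0] with ω hpull h0
    rw [hpull, Pi.mul_apply, h0, Pi.zero_apply, mul_zero]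
  calc ∫ ω, Y ω * Z ω ∂ν = ∫ ω, (ν[Y * Z | m]) ω ∂ν := (integral_condExp hm).symm
    _ = 0 := integral_eq_zero_of_ae hcond

/-- Square-integrable martingale differences: `D k` is the increment of a square-integrable
`ℱ`-martingale from time `k` to time `k + 1`, hence `ℱ (k + 1)`-measurable and centred given
`ℱ k`. -/
structure IsSqMartingaleDifference (ℱ : Filtration ℕ m0) (ν : Measure Ω) (D : ℕ → Ω → ℝ) :
    Prop where
  memLp : ∀ k, MemLp (D k) 2 ν
  stronglyMeasurable : ∀ k, StronglyMeasurable[ℱ (k + 1)] (D k)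
  condExp_eq_zero : ∀ k, ν[D k | ℱ k] =ᵐ[ν] 0

namespace IsSqMartingaleDifference

variable {ℱ : Filtration ℕ m0} {D ξ : ℕ → Ω → ℝ}

theorem memLp_sum (hD : IsSqMartingaleDifference ℱ ν D) (n : ℕ) :
    MemLp (fun ω => ∑ k ∈ Finset.range n, D k ω) 2 ν :=
  memLp_finsetSum _ fun k _ => hD.memLp k

variable [IsFiniteMeasure ν]

theorem integral_past_mul_eq_zero (hD : IsSqMartingaleDifference ℱ ν D) {Y : Ω → ℝ} {k : ℕ}
    (hY : MemLp Y 2 ν) (hYk : StronglyMeasurable[ℱ k] Y) : ∫ ω, Y ω * D k ω ∂ν = 0 :=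
  integral_mul_eq_zero_of_condExp_eq_zero (ℱ.le k) hYk (hY.integrable_mul (hD.memLp k))
    ((hD.memLp k).integrable one_le_two) (hD.condExp_eq_zero k)

theorem integral_mul_eq_zero_of_lt (hξ : IsSqMartingaleDifference ℱ ν ξ)
    (hD : IsSqMartingaleDifference ℱ ν D) {j k : ℕ} (hjk : j < k) :
    ∫ ω, ξ j ω * D k ω ∂ν = 0 :=
  hD.integral_past_mul_eq_zero (hξ.memLp j) ((hξ.stronglyMeasurable j).mono (ℱ.mono hjk))

theorem integral_mul_eq_zero_of_ne (hξ : IsSqMartingaleDifference ℱ ν ξ)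
    (hD : IsSqMartingaleDifference ℱ ν D) {j k : ℕ} (hjk : j ≠ k) :
    ∫ ω, ξ j ω * D k ω ∂ν = 0 := by
  rcases hjk.lt_or_gt with hlt | hgt
  · exact hξ.integral_mul_eq_zero_of_lt hD hlt
  · simpa only [mul_comm] using hD.integral_mul_eq_zero_of_lt hξ hgt

theorem integral_mul_sum_eq_zero (hD : IsSqMartingaleDifference ℱ ν D) {Y : Ω → ℝ}
    (hY : MemLp Y 2 ν) (hY0 : StronglyMeasurable[ℱ 0] Y) (n : ℕ) :
    ∫ ω, Y ω * ∑ k ∈ Finset.range n, D k ω ∂ν = 0 := by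
  have hint (k : ℕ) : Integrable (fun ω => Y ω * D k ω) ν := hY.integrable_mul (hD.memLp k)
  simp_rw [Finset.mul_sum]
  rw [integral_finsetSum _ fun k _ => hint k]
  exact Finset.sum_eq_zero fun k _ =>
    hD.integral_past_mul_eq_zero hY (hY0.mono (ℱ.mono k.zero_le))

theorem integral_sum_mul_sum (hξ : IsSqMartingaleDifference ℱ ν ξ)
    (hD : IsSqMartingaleDifference ℱ ν D) (n : ℕ) :
    ∫ ω, (∑ k ∈ Finset.range n, ξ k ω) * ∑ k ∈ Finset.range n, D k ω ∂ν
      = ∑ k ∈ Finset.range n, ∫ ω, ξ k ω * D k ω ∂ν := by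
  have hint (j k : ℕ) : Integrable (fun ω => ξ j ω * D k ω) ν :=
    (hξ.memLp j).integrable_mul (hD.memLp k)
  simp_rw [Finset.sum_mul_sum]
  rw [integral_finsetSum _ fun j _ => integrable_finsetSum _ fun k _ => hint j k]
  refine Finset.sum_congr rfl fun j hj => ?_
  rw [integral_finsetSum _ fun k _ => hint j k]
  exact Finset.sum_eq_single_of_mem j hj fun k _ hkj => hξ.integral_mul_eq_zero_of_ne hD hkj.symm

theorem integral_sub_const_mul_sum (hD : IsSqMartingaleDifference ℱ ν D) {Y : Ω → ℝ}
    (hY : MemLp Y 2 ν) (a : ℝ) (n : ℕ) :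
    ∫ ω, (Y ω - a) * ∑ k ∈ Finset.range n, D k ω ∂ν
      = ∫ ω, Y ω * ∑ k ∈ Finset.range n, D k ω ∂ν := by
  have hM := hD.memLp_sum n
  have hYM : Integrable (fun ω => Y ω * ∑ k ∈ Finset.range n, D k ω) ν := hY.integrable_mul hM
  simp_rw [sub_mul]
  rw [integral_sub hYM ((hM.integrable one_le_two).const_mul a),
    hD.integral_mul_sum_eq_zero (memLp_const a) stronglyMeasurable_const, sub_zero]

theorem integral_sub_add_sum_mul_sum (hξ : IsSqMartingaleDifference ℱ ν ξ)
    (hD : IsSqMartingaleDifference ℱ ν D) {U Y : Ω → ℝ} (hU : MemLp U 2 ν)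
    (hU0 : StronglyMeasurable[ℱ 0] U) (hY : MemLp Y 2 ν) (n : ℕ) :
    ∫ ω, (U ω - Y ω + ∑ k ∈ Finset.range n, ξ k ω) * ∑ k ∈ Finset.range n, D k ω ∂ν
      = -∫ ω, Y ω * ∑ k ∈ Finset.range n, D k ω ∂ν
        + ∑ k ∈ Finset.range n, ∫ ω, ξ k ω * D k ω ∂ν := by
  have hM := hD.memLp_sum n
  have hUM : Integrable (fun ω => U ω * ∑ k ∈ Finset.range n, D k ω) ν := hU.integrable_mul hM
  have hYM : Integrable (fun ω => Y ω * ∑ k ∈ Finset.range n, D k ω) ν := hY.integrable_mul hM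
  have hUYM : Integrable (fun ω => U ω * ∑ k ∈ Finset.range n, D k ω
      - Y ω * ∑ k ∈ Finset.range n, D k ω) ν := hUM.sub hYM
  have hZM : Integrable
      (fun ω => (∑ k ∈ Finset.range n, ξ k ω) * ∑ k ∈ Finset.range n, D k ω) ν :=
    (hξ.memLp_sum n).integrable_mul hM
  simp_rw [add_mul, sub_mul]
  rw [integral_add hUYM hZM, integral_sub hUM hYM, hD.integral_mul_sum_eq_zero hU hU0,
    hξ.integral_sum_mul_sum hD, zero_sub]

end IsSqMartingaleDifference

end MartingaleDifference

section SecondMoments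

variable {Ω : Type*} [MeasurableSpace Ω] {ν : Measure Ω}

theorem memLp_two_of_lintegral_sq_lt_top {g : Ω → ℝ} (hg : AEStronglyMeasurable g ν)
    (h : ∫⁻ ω, ENNReal.ofReal (g ω ^ 2) ∂ν < ⊤) : MemLp g 2 ν := by
  refine (memLp_two_iff_integrable_sq hg).2 ⟨hg.pow 2, ?_⟩
  rwa [hasFiniteIntegral_iff_ofReal (ae_of_all _ fun ω => sq_nonneg (g ω))]

theorem memLp_two_of_abs_le_mul_sqrt {V : Ω → ℝ} (hV : AEMeasurable V ν)
    (hνV : ∫⁻ ω, ENNReal.ofReal (V ω) ∂ν < ⊤) {g : Ω → ℝ} (hg : AEStronglyMeasurable g ν)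
    {c : ℝ} (hgV : ∀ ω, |g ω| ≤ c * √(V ω)) : MemLp g 2 ν := by
  have hsqrt : MemLp (fun ω => √(V ω)) 2 ν := by
    refine memLp_two_of_lintegral_sq_lt_top hV.sqrt.aestronglyMeasurable ?_
    simpa [Real.sq_sqrt', ENNReal.ofReal_max] using hνV
  exact (hsqrt.const_mul c).mono' hg (ae_of_all _ hgV)

end SecondMoments

section MarkovChain

variable {X : Type*} [MeasurableSpace X]

theorem measurable_coord_natFiltration {i k : ℕ} (hik : i ≤ k) :
    Measurable[natFiltration X k] (fun ω : ℕ → X => ω i) :=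
  Measurable.mono (comap_measurable _)
    (le_iSup₂_of_le (f := fun i (_ : i ∈ Set.Iic k) =>
      MeasurableSpace.comap (fun ω : ℕ → X => ω i) inferInstance) i hik le_rfl) le_rfl

theorem measurable_step (k : ℕ) : Measurable fun ω : ℕ → X => (ω k, ω (k + 1)) :=
  (measurable_pi_apply k).prodMk (measurable_pi_apply (k + 1))

theorem natFiltration_le_comap_prefix (k : ℕ) :
    natFiltration X k
      ≤ MeasurableSpace.comap (fun (ω : ℕ → X) (i : Fin (k + 1)) => ω i) inferInstance :=
  iSup₂_le fun i hi => by
    have hik : i < k + 1 := Nat.lt_succ_of_le hi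
    exact ((measurable_pi_apply (⟨i, hik⟩ : Fin (k + 1))).comp
      (comap_measurable fun (ω : ℕ → X) (i : Fin (k + 1)) => ω i)).comap_le

namespace IsMarkovChainLaw

variable {μ : Measure X} {P : Kernel X X} {Pμ : Measure (ℕ → X)}

theorem measure_inter_preimage_succ (h : IsMarkovChainLaw μ P Pμ) {k : ℕ} {s : Set (ℕ → X)}
    (hs : MeasurableSet[natFiltration X k] s) {u : Set X} (hu : MeasurableSet u) :
    Pμ (s ∩ {ω | ω (k + 1) ∈ u}) = ∫⁻ ω in s, P (ω k) u ∂Pμ := by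
  have hs' : MeasurableSet s := (natFiltration X).le k s hs
  have hu' : MeasurableSet {ω : ℕ → X | ω (k + 1) ∈ u} := measurable_pi_apply (k + 1) hu
  obtain ⟨t, ht, rfl⟩ := natFiltration_le_comap_prefix k s hs
  have hstep := h.2.2 k (t.indicator 1) (u.indicator 1)
    (measurable_one.indicator ht) (measurable_one.indicator hu)
  simp only [lintegral_indicator_one hu] at hstep
  rw [← lintegral_indicator_one (hs'.inter hu'), ← lintegral_indicator hs']
  convert hstep using 3 with ω ω
  · rw [Set.inter_indicator_one]; rfl
  · by_cases hω : (fun i : Fin (k + 1) => ω i) ∈ t <;> simp [hω]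

variable [IsSFiniteKernel P]

theorem map_restrict_step (h : IsMarkovChainLaw μ P Pμ) {k : ℕ} {s : Set (ℕ → X)}
    (hs : MeasurableSet[natFiltration X k] s) :
    (Pμ.restrict s).map (fun ω => (ω k, ω (k + 1)))
      = (Pμ.restrict s).map (fun ω => ω k) ⊗ₘ P := by
  have : IsProbabilityMeasure Pμ := h.1
  have hk : Measurable fun ω : ℕ → X => ω k := measurable_pi_apply k
  refine Measure.ext_prod fun {t u} ht hu => ?_
  have hst : MeasurableSet[natFiltration X k] ({ω | ω k ∈ t} ∩ s) :=
    (measurable_coord_natFiltration le_rfl ht).inter hs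
  calc (Pμ.restrict s).map (fun ω => (ω k, ω (k + 1))) (t ×ˢ u)
      = Pμ (({ω | ω k ∈ t} ∩ s) ∩ {ω | ω (k + 1) ∈ u}) := by
        rw [Measure.map_apply (measurable_step k) (ht.prod hu),
          Measure.restrict_apply (measurable_step k (ht.prod hu))]
        congr 1
        ext ω
        simp only [Set.mem_inter_iff, Set.mem_preimage, Set.mem_prod, Set.mem_ofPred_eq]
        tauto
    _ = ∫⁻ ω in {ω | ω k ∈ t} ∩ s, P (ω k) u ∂Pμ := h.measure_inter_preimage_succ hst hu
    _ = ((Pμ.restrict s).map (fun ω => ω k) ⊗ₘ P) (t ×ˢ u) := by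
        rw [Measure.compProd_apply_prod ht hu, setLIntegral_map ht (P.measurable_coe hu) hk,
          Measure.restrict_restrict (hk ht)]
        rfl

theorem lintegral_step (h : IsMarkovChainLaw μ P Pμ) {r : X → X → ℝ≥0∞}
    (hr : Measurable (Function.uncurry r)) (k : ℕ) :
    ∫⁻ ω, r (ω k) (ω (k + 1)) ∂Pμ = ∫⁻ ω, ∫⁻ y, r (ω k) y ∂(P (ω k)) ∂Pμ := by
  have : IsProbabilityMeasure Pμ := h.1
  have hk : Measurable fun ω : ℕ → X => ω k := measurable_pi_apply k
  have hlaw := h.map_restrict_step (k := k) MeasurableSet.univ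
  rw [Measure.restrict_univ] at hlaw
  calc ∫⁻ ω, r (ω k) (ω (k + 1)) ∂Pμ
      = ∫⁻ z, Function.uncurry r z ∂(Pμ.map fun ω => (ω k, ω (k + 1))) :=
        (lintegral_map hr (measurable_step k)).symm
    _ = ∫⁻ x, ∫⁻ y, r x y ∂(P x) ∂(Pμ.map fun ω => ω k) := by
        rw [hlaw, Measure.lintegral_compProd hr]; rfl
    _ = ∫⁻ ω, ∫⁻ y, r (ω k) y ∂(P (ω k)) ∂Pμ := lintegral_map hr.lintegral_kernel_prod_right hk

section Step

variable {r : X → X → ℝ}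

theorem integrable_compProd_step (h : IsMarkovChainLaw μ P Pμ)
    (hr : Measurable (Function.uncurry r)) {k : ℕ} {s : Set (ℕ → X)}
    (hs : MeasurableSet[natFiltration X k] s)
    (hint : IntegrableOn (fun ω => r (ω k) (ω (k + 1))) s Pμ) :
    Integrable (Function.uncurry r) ((Pμ.restrict s).map (fun ω => ω k) ⊗ₘ P) := by
  rw [← h.map_restrict_step hs]
  exact (integrable_map_measure hr.aestronglyMeasurable
    (measurable_step k).aemeasurable).2 hint

theorem integrable_integral_step (h : IsMarkovChainLaw μ P Pμ)
    (hr : Measurable (Function.uncurry r)) {k : ℕ} {s : Set (ℕ → X)}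
    (hs : MeasurableSet[natFiltration X k] s)
    (hint : IntegrableOn (fun ω => r (ω k) (ω (k + 1))) s Pμ) :
    IntegrableOn (fun ω => ∫ y, r (ω k) y ∂(P (ω k))) s Pμ := by
  have : IsProbabilityMeasure Pμ := h.1
  have hcomp := (h.integrable_compProd_step hr hs hint).integral_compProd
  exact hcomp.comp_measurable (measurable_pi_apply k)

theorem setIntegral_step (h : IsMarkovChainLaw μ P Pμ)
    (hr : Measurable (Function.uncurry r)) {k : ℕ} {s : Set (ℕ → X)}
    (hs : MeasurableSet[natFiltration X k] s)
    (hint : IntegrableOn (fun ω => r (ω k) (ω (k + 1))) s Pμ) :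
    ∫ ω in s, r (ω k) (ω (k + 1)) ∂Pμ = ∫ ω in s, ∫ y, r (ω k) y ∂(P (ω k)) ∂Pμ := by
  have : IsProbabilityMeasure Pμ := h.1
  have hk : Measurable fun ω : ℕ → X => ω k := measurable_pi_apply k
  calc ∫ ω in s, r (ω k) (ω (k + 1)) ∂Pμ
      = ∫ z, Function.uncurry r z ∂((Pμ.restrict s).map fun ω => (ω k, ω (k + 1))) :=
        (integral_map (measurable_step k).aemeasurable hr.aestronglyMeasurable).symm
    _ = ∫ x, ∫ y, r x y ∂(P x) ∂((Pμ.restrict s).map fun ω => ω k) := by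
        rw [h.map_restrict_step hs,
          Measure.integral_compProd (h.integrable_compProd_step hr hs hint)]
        rfl
    _ = ∫ ω in s, ∫ y, r (ω k) y ∂(P (ω k)) ∂Pμ :=
        integral_map hk.aemeasurable
          hr.stronglyMeasurable.integral_kernel_prod_right.aestronglyMeasurable

theorem stronglyMeasurable_integral_step (hr : Measurable (Function.uncurry r)) (k : ℕ) :
    StronglyMeasurable[natFiltration X k] (fun ω => ∫ y, r (ω k) y ∂(P (ω k))) :=
  hr.stronglyMeasurable.integral_kernel_prod_right.comp_measurable
    (measurable_coord_natFiltration le_rfl)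

theorem condExp_step (h : IsMarkovChainLaw μ P Pμ) (hr : Measurable (Function.uncurry r)) {k : ℕ}
    (hint : Integrable (fun ω => r (ω k) (ω (k + 1))) Pμ) :
    Pμ[fun ω => r (ω k) (ω (k + 1)) | natFiltration X k]
      =ᵐ[Pμ] fun ω => ∫ y, r (ω k) y ∂(P (ω k)) := by
  have : IsProbabilityMeasure Pμ := h.1
  exact (ae_eq_condExp_of_forall_setIntegral_eq ((natFiltration X).le k) hint
    (fun s hs _ => h.integrable_integral_step hr hs hint.integrableOn)
    (fun s hs _ => (h.setIntegral_step hr hs hint.integrableOn).symm)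
    (stronglyMeasurable_integral_step hr k).aestronglyMeasurable).symm

theorem isSqMartingaleDifference_sub_integral (h : IsMarkovChainLaw μ P Pμ)
    (hr : Measurable (Function.uncurry r))
    (hrL2 : ∀ k, MemLp (fun ω => r (ω k) (ω (k + 1))) 2 Pμ) :
    IsSqMartingaleDifference (natFiltration X) Pμ
      (fun k ω => r (ω k) (ω (k + 1)) - ∫ y, r (ω k) y ∂(P (ω k))) := by
  have : IsProbabilityMeasure Pμ := h.1
  have hint (k : ℕ) := (hrL2 k).integrable one_le_two
  have hcond (k : ℕ) := h.condExp_step hr (hint k)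
  have hmean (k : ℕ) : MemLp (fun ω => ∫ y, r (ω k) y ∂(P (ω k))) 2 Pμ :=
    ((hrL2 k).condExp one_le_two).ae_eq (hcond k)
  have hpast (k : ℕ) := stronglyMeasurable_integral_step (P := P) hr k
  refine ⟨fun k => (hrL2 k).sub (hmean k), fun k => ?_, fun k => ?_⟩
  · have hcoords := (measurable_coord_natFiltration (X := X) k.le_succ).prodMk
      (measurable_coord_natFiltration (X := X) le_rfl)
    exact (hr.stronglyMeasurable.comp_measurable hcoords).sub
      ((hpast k).mono ((natFiltration X).mono k.le_succ))
  · have hsub := condExp_sub (hint k) ((hmean k).integrable one_le_two) (natFiltration X k)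
    rw [condExp_of_stronglyMeasurable ((natFiltration X).le k) (hpast k)
      ((hmean k).integrable one_le_two)] at hsub
    filter_upwards [hsub, hcond k] with ω hω hωk
    exact hω.trans (sub_eq_zero.2 hωk)

theorem isSqMartingaleDifference (h : IsMarkovChainLaw μ P Pμ)
    (hr : Measurable (Function.uncurry r)) (hr0 : ∀ x, ∫ y, r x y ∂(P x) = 0)
    (hrL2 : ∀ k, MemLp (fun ω => r (ω k) (ω (k + 1))) 2 Pμ) :
    IsSqMartingaleDifference (natFiltration X) Pμ (fun k ω => r (ω k) (ω (k + 1))) := by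
  simpa only [hr0, sub_zero] using h.isSqMartingaleDifference_sub_integral hr hrL2

end Step

theorem lintegral_lt_top_of_drift (h : IsMarkovChainLaw μ P Pμ) {W : X → ℝ≥0∞}
    (hW : Measurable W) {C B : ℝ≥0∞} (hC : C ≠ ⊤) (hB : B ≠ ⊤)
    (hdrift : ∀ x, ∫⁻ y, W y ∂(P x) ≤ C * W x + B) (hμW : ∫⁻ x, W x ∂μ < ⊤) (k : ℕ) :
    ∫⁻ ω, W (ω k) ∂Pμ < ⊤ := by
  have : IsProbabilityMeasure Pμ := h.1
  induction k with
  | zero => rwa [← h.2.1, lintegral_map hW (measurable_pi_apply 0)] at hμW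
  | succ k ih =>
    calc ∫⁻ ω, W (ω (k + 1)) ∂Pμ = ∫⁻ ω, ∫⁻ y, W y ∂(P (ω k)) ∂Pμ :=
          h.lintegral_step (r := fun _ y => W y) (hW.comp measurable_snd) k
      _ ≤ ∫⁻ ω, (C * W (ω k) + B) ∂Pμ := lintegral_mono fun ω => hdrift (ω k)
      _ = C * ∫⁻ ω, W (ω k) ∂Pμ + B := by
          rw [lintegral_add_right _ measurable_const, lintegral_const_mul' _ _ hC,
            lintegral_const, measure_univ, mul_one]
      _ < ⊤ := ENNReal.add_lt_top.2 ⟨ENNReal.mul_lt_top hC.lt_top ih, hB.lt_top⟩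

theorem memLp_two_step (h : IsMarkovChainLaw μ P Pμ)
    {q : X → X → ℝ} (hq : Measurable (Function.uncurry q)) {V : X → ℝ} {G : ℝ} (hG : 0 ≤ G)
    (hq_sq : ∀ x, ∫⁻ y, ENNReal.ofReal (q x y ^ 2) ∂(P x) ≤ ENNReal.ofReal (G * V x)) {k : ℕ}
    (hV : ∫⁻ ω, ENNReal.ofReal (V (ω k)) ∂Pμ < ⊤) :
    MemLp (fun ω => q (ω k) (ω (k + 1))) 2 Pμ := by
  refine memLp_two_of_lintegral_sq_lt_top (hq.comp (measurable_step k)).aestronglyMeasurable ?_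
  calc ∫⁻ ω, ENNReal.ofReal (q (ω k) (ω (k + 1)) ^ 2) ∂Pμ
      = ∫⁻ ω, ∫⁻ y, ENNReal.ofReal (q (ω k) y ^ 2) ∂(P (ω k)) ∂Pμ :=
        h.lintegral_step (r := fun x y => ENNReal.ofReal (q x y ^ 2))
          (hq.pow_const 2).ennreal_ofReal k
    _ ≤ ∫⁻ ω, ENNReal.ofReal G * ENNReal.ofReal (V (ω k)) ∂Pμ :=
        lintegral_mono fun ω => (hq_sq (ω k)).trans_eq (ENNReal.ofReal_mul hG)
    _ = ENNReal.ofReal G * ∫⁻ ω, ENNReal.ofReal (V (ω k)) ∂Pμ :=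
        lintegral_const_mul' _ _ ENNReal.ofReal_ne_top
    _ < ⊤ := ENNReal.mul_lt_top ENNReal.ofReal_lt_top hV

end IsMarkovChainLaw

end MarkovChain

theorem average_sub_eq_of_poisson {X 𝕜 : Type*} [Field 𝕜] [CharZero 𝕜] {f g Pg : X → 𝕜} {a : 𝕜}
    (hPoisson : ∀ x, g x - Pg x = f x - a) {n : ℕ} (hn : n ≠ 0) (ω : ℕ → X) :
    (1 / (n : 𝕜)) * ∑ j ∈ Finset.range n, f (ω j) - a
      = (1 / (n : 𝕜)) *
          (g (ω 0) - g (ω n) + ∑ k ∈ Finset.range n, (g (ω (k + 1)) - Pg (ω k))) := by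
  have hn' : (n : 𝕜) ≠ 0 := Nat.cast_ne_zero.2 hn
  have htelescope : ∑ k ∈ Finset.range n, (g (ω (k + 1)) - Pg (ω k))
      = g (ω n) - g (ω 0) + (∑ k ∈ Finset.range n, f (ω k) - n * a) := by
    calc ∑ k ∈ Finset.range n, (g (ω (k + 1)) - Pg (ω k))
        = ∑ k ∈ Finset.range n, ((g (ω (k + 1)) - g (ω k)) + (f (ω k) - a)) :=
          Finset.sum_congr rfl fun k _ => by rw [← hPoisson]; ring
      _ = g (ω n) - g (ω 0) + (∑ k ∈ Finset.range n, f (ω k) - n * a) := by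
          rw [Finset.sum_add_distrib, Finset.sum_range_sub fun k => g (ω k),
            Finset.sum_sub_distrib, Finset.sum_const, Finset.card_range, nsmul_eq_mul]
  rw [htelescope]
  field_simp
  ring

theorem ofReal_mul_add_indicator_le {X : Type*} {l b : ℝ} (hl : 0 ≤ l) (hb : 0 ≤ b) (v : ℝ)
    (K : Set X) (x : X) :
    ENNReal.ofReal (l * v + b * K.indicator (fun _ => 1) x)
      ≤ ENNReal.ofReal l * ENNReal.ofReal v + ENNReal.ofReal b := by
  have hind : b * K.indicator (fun _ => 1) x ≤ b :=
    mul_le_of_le_one_right hb (Set.indicator_le_self' (fun _ _ => zero_le_one) x)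
  calc ENNReal.ofReal (l * v + b * K.indicator (fun _ => 1) x)
      ≤ ENNReal.ofReal (l * v + b) := ENNReal.ofReal_le_ofReal (by gcongr)
    _ ≤ ENNReal.ofReal (l * v) + ENNReal.ofReal b := ENNReal.ofReal_add_le
    _ = ENNReal.ofReal l * ENNReal.ofReal v + ENNReal.ofReal b := by rw [ENNReal.ofReal_mul hl]

theorem gradient_expectation_identity_general {X : Type*} [MeasurableSpace X]
    {P : Kernel X X} [IsMarkovKernel P] {μ : Measure X}
    {Pμ : Measure (ℕ → X)} (hPμ : IsMarkovChainLaw μ P Pμ)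
    {q : X → X → ℝ} (hq_meas : Measurable (Function.uncurry q))
    (hq_mean : ∀ x, ∫ y, q x y ∂(P x) = 0)
    (hq_memLp : ∀ k, MemLp (fun ω => q (ω k) (ω (k + 1))) 2 Pμ)
    {f fhat : X → ℝ} (hfhat_meas : Measurable fhat)
    (hfhat_memLp : ∀ k, MemLp (fun ω => fhat (ω k)) 2 Pμ)
    {a : ℝ} (hPoisson : ∀ x, fhat x - ∫ y, fhat y ∂(P x) = f x - a)
    {A : ℕ → (ℕ → X) → ℝ} (hA : ∀ n ω, A n ω = (1 / (n : ℝ)) * ∑ j ∈ Finset.range n, f (ω j))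
    {M : ℕ → (ℕ → X) → ℝ} (hM : ∀ n ω, M n ω = ∑ j ∈ Finset.range n, q (ω j) (ω (j + 1)))
    {n : ℕ} (hn : 1 ≤ n) :
    (∫ ω, A n ω * M n ω ∂Pμ = ∫ ω, (A n ω - a) * M n ω ∂Pμ) ∧
    ∫ ω, A n ω * M n ω ∂Pμ
      = -(1 / (n : ℝ)) * ∫ ω, fhat (ω n) * M n ω ∂Pμ
        + (1 / (n : ℝ)) * ∑ k ∈ Finset.range n,
            ∫ ω, (fhat (ω (k + 1)) - ∫ y, fhat y ∂(P (ω k))) * q (ω k) (ω (k + 1)) ∂Pμ := by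
  have : IsProbabilityMeasure Pμ := hPμ.1
  have hD := hPμ.isSqMartingaleDifference hq_meas hq_mean hq_memLp
  have hξ := hPμ.isSqMartingaleDifference_sub_integral (r := fun _ y => fhat y)
    (hfhat_meas.comp measurable_snd) fun k => hfhat_memLp (k + 1)
  have hfhat0 : StronglyMeasurable[natFiltration X 0] fun ω : ℕ → X => fhat (ω 0) :=
    hfhat_meas.stronglyMeasurable.comp_measurable (measurable_coord_natFiltration le_rfl)
  have hpoisson_sum (ω : ℕ → X) : A n ω - a = (1 / (n : ℝ)) * (fhat (ω 0) - fhat (ω n)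
      + ∑ k ∈ Finset.range n, (fhat (ω (k + 1)) - ∫ y, fhat y ∂(P (ω k)))) := by
    rw [hA, average_sub_eq_of_poisson hPoisson (Nat.one_le_iff_ne_zero.1 hn)]
  have hA_memLp : MemLp (A n) 2 Pμ := by
    simp only [funext fun ω => sub_eq_iff_eq_add.1 (hpoisson_sum ω)]
    exact ((((hfhat_memLp 0).sub (hfhat_memLp n)).add (hξ.memLp_sum n)).const_mul _).add
      (memLp_const a)
  have hcentring : ∫ ω, A n ω * M n ω ∂Pμ = ∫ ω, (A n ω - a) * M n ω ∂Pμ := by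
    simpa only [hM] using (hD.integral_sub_const_mul_sum hA_memLp a n).symm
  refine ⟨hcentring, hcentring.trans ?_⟩
  simp only [hpoisson_sum, hM, mul_assoc]
  rw [integral_const_mul,
    hξ.integral_sub_add_sum_mul_sum hD (hfhat_memLp 0) hfhat0 (hfhat_memLp n)]
  ring

/-- The central identity in the proof of convergence of `E[α_n ∇L_n(θ₀)]`:
`E_μ[α_n M_n] = E_μ[(α_n − a) M_n]
  = −(1/n) E_μ[f̂(Φ_n) M_n] + (1/n) ∑_{k=1}^n E_μ[ξ_k D_k]`. -/
theorem gradient_expectation_identity {X : Type*} [MeasurableSpace X]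
    (P : Kernel X X) [IsMarkovKernel P]
    (V : X → ℝ) (hVmeas : Measurable V) (hV1 : ∀ x, 1 ≤ V x)
    (K : Set X) (hK : MeasurableSet K)
    (l b : ℝ) (hl0 : 0 < l) (hl1 : l < 1) (hb : 0 ≤ b)
    (hdrift : ∀ x, ∫⁻ y, ENNReal.ofReal (V y) ∂(P x)
      ≤ ENNReal.ofReal (l * V x + b * K.indicator (fun _ => 1) x))
    (μ : Measure X) [IsProbabilityMeasure μ]
    (hμV : ∫⁻ x, ENNReal.ofReal (V x) ∂μ < ⊤)
    (q : X → X → ℝ) (hq_meas : Measurable (Function.uncurry q))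
    (G : ℝ) (hG : 0 ≤ G)
    (hq_mean : ∀ x, ∫ y, q x y ∂(P x) = 0)
    (hq_sq : ∀ x, ∫⁻ y, ENNReal.ofReal ((q x y) ^ 2) ∂(P x) ≤ ENNReal.ofReal (G * V x))
    (f : X → ℝ) (hf_meas : Measurable f)
    (κ : ℝ) (hκ : 0 ≤ κ) (hf_bdd : ∀ x, |f x| ≤ κ * Real.sqrt (V x))
    (fhat : X → ℝ) (hfhat_meas : Measurable fhat)
    (c : ℝ) (hc : 0 ≤ c) (hfhat_bdd : ∀ x, |fhat x| ≤ c * Real.sqrt (V x))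
    (a : ℝ) (hPoisson : ∀ x, fhat x - ∫ y, fhat y ∂(P x) = f x - a)
    (Pμ : Measure (ℕ → X)) (hPμ : IsMarkovChainLaw μ P Pμ)
    (A : ℕ → (ℕ → X) → ℝ)
    (hA : ∀ n ω, A n ω = (1 / (n : ℝ)) * ∑ j ∈ Finset.range n, f (ω j))
    (M : ℕ → (ℕ → X) → ℝ)
    (hM : ∀ n ω, M n ω = ∑ j ∈ Finset.range n, q (ω j) (ω (j + 1))) :
    ∀ n : ℕ, 1 ≤ n →
      (∫ ω, A n ω * M n ω ∂Pμ = ∫ ω, (A n ω - a) * M n ω ∂Pμ) ∧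
      ∫ ω, A n ω * M n ω ∂Pμ
        = -(1 / (n : ℝ)) * ∫ ω, fhat (ω n) * M n ω ∂Pμ
          + (1 / (n : ℝ)) * ∑ k ∈ Finset.range n,
              ∫ ω, (fhat (ω (k + 1)) - ∫ y, fhat y ∂(P (ω k))) * q (ω k) (ω (k + 1)) ∂Pμ := by
  have hV_lintegral (k : ℕ) : ∫⁻ ω, ENNReal.ofReal (V (ω k)) ∂Pμ < ⊤ :=
    hPμ.lintegral_lt_top_of_drift hVmeas.ennreal_ofReal ENNReal.ofReal_ne_top
      ENNReal.ofReal_ne_top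
      (fun x => (hdrift x).trans (ofReal_mul_add_indicator_le hl0.le hb (V x) K x)) hμV k
  intro n hn
  exact gradient_expectation_identity_general hPμ hq_meas hq_mean
    (fun k => hPμ.memLp_two_step hq_meas hG hq_sq (hV_lintegral k)) hfhat_meas
    (fun k => memLp_two_of_abs_le_mul_sqrt (hVmeas.comp (measurable_pi_apply k)).aemeasurable
      (hV_lintegral k) (hfhat_meas.comp (measurable_pi_apply k)).aestronglyMeasurable
      fun ω => hfhat_bdd (ω k))
    hPoisson hA hM hn

end
end

section
/- Let X be a measurable space, P a Markov kernel on X, V : X → ℝ measurable with V(x) ≥ 1, satisfying ∫ V(y) P(x,dy) ≤ λ·V(x) + b·1_K(x) for all x (λ ∈ (0,1), b < ∞, K measurable), and μ an initial distribution with ∫ V dμ < ∞. Let q : X × X → ℝ be jointly measurable with ∫ q(x,y) P(x,dy) = 0 and ∫ q(x,y)² P(x,dy) ≤ G·V(x) for all x, and f̂ : X → ℝ measurable with |f̂(x)| ≤ c·√(V(x)) for all x. Under the chain law P_μ set D_j = q(Φ_{j−1},Φ_j) and M_n = ∑_{j=1}^n D_j. Then (1/n)·E_μ[ f̂(Φ_n)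 M_n ] → 0 as n → ∞. -/
/-!
The drift condition keeps `E V(Φ_n)` bounded in `n`, so `f̂(Φ_n)` and the increments
`D_j = q(Φ_{j-1}, Φ_j)` are bounded in `L²`. The increments are centred given the past, hence
orthogonal, so `E[M_n²] = ∑ E[D_j²] = O(n)`, and by Cauchy–Schwarz `E[f̂(Φ_n) M_n] = O(√n)`.
-/

open MeasureTheory ProbabilityTheory Filter
open scoped ENNReal NNReal Topology

noncomputable section

theorem ofReal_sq_le_of_abs_le_mul_sqrt {a c v : ℝ} (hv : 0 ≤ v) (h : |a| ≤ c * √v) :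
    ENNReal.ofReal (a ^ 2) ≤ ENNReal.ofReal (c ^ 2) * ENNReal.ofReal v := by
  rw [← ENNReal.ofReal_mul (sq_nonneg c)]
  refine ENNReal.ofReal_le_ofReal ?_
  calc a ^ 2 = |a| ^ 2 := (sq_abs a).symm
    _ ≤ (c * √v) ^ 2 := by gcongr
    _ = c ^ 2 * v := by rw [mul_pow, Real.sq_sqrt hv]

theorem ofReal_mul_add_mul_indicator_le {α : Type*} {l b : ℝ} (hl : 0 ≤ l) (hb : 0 ≤ b) (v : ℝ)
    (K : Set α) (x : α) :
    ENNReal.ofReal (l * v + b * K.indicator (fun _ => 1) x)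
      ≤ ENNReal.ofReal l * ENNReal.ofReal v + ENNReal.ofReal b := by
  rw [← ENNReal.ofReal_mul hl]
  refine ENNReal.ofReal_add_le.trans ?_
  gcongr
  exact mul_le_of_le_one_right hb (Set.indicator_le_self' (fun _ _ => zero_le_one) x)

section SecondMoments

variable {Ω : Type*} [MeasurableSpace Ω] {ν : Measure Ω}

theorem lintegral_le_mul_of_le_mul {F W : Ω → ℝ≥0∞} {r C : ℝ≥0∞} (hW : Measurable W)
    (hFW : ∀ ω, F ω ≤ r * W ω) (hC : ∫⁻ ω, W ω ∂ν ≤ C) : ∫⁻ ω, F ω ∂ν ≤ r * C :=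
  calc ∫⁻ ω, F ω ∂ν ≤ ∫⁻ ω, r * W ω ∂ν := lintegral_mono hFW
    _ = r * ∫⁻ ω, W ω ∂ν := lintegral_const_mul r hW
    _ ≤ r * C := by gcongr

theorem memLp_two_of_lintegral_ofReal_sq_le {f : Ω → ℝ} {C : ℝ≥0∞}
    (hf : AEStronglyMeasurable f ν) (hC : C ≠ ⊤)
    (h : ∫⁻ ω, ENNReal.ofReal (f ω ^ 2) ∂ν ≤ C) : MemLp f 2 ν := by
  refine (memLp_two_iff_integrable_sq hf).2 ⟨hf.pow 2, ?_⟩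
  rw [hasFiniteIntegral_iff_ofReal (ae_of_all _ fun _ => sq_nonneg _)]
  exact h.trans_lt hC.lt_top

theorem integral_sq_le_toReal {f : Ω → ℝ} {C : ℝ≥0∞} (hf : AEStronglyMeasurable f ν)
    (hC : C ≠ ⊤) (h : ∫⁻ ω, ENNReal.ofReal (f ω ^ 2) ∂ν ≤ C) :
    ∫ ω, f ω ^ 2 ∂ν ≤ C.toReal := by
  rw [integral_eq_lintegral_of_nonneg_ae (ae_of_all _ fun _ => sq_nonneg _) (hf.pow 2)]
  exact ENNReal.toReal_mono hC h

theorem abs_integral_mul_le_sqrt_mul_sqrt {f g : Ω → ℝ} (hf : MemLp f 2 ν) (hg : MemLp g 2 ν) :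
    |∫ ω, f ω * g ω ∂ν| ≤ √(∫ ω, f ω ^ 2 ∂ν) * √(∫ ω, g ω ^ 2 ∂ν) := by
  have cauchy_schwarz := integral_mul_norm_le_Lp_mul_Lq (μ := ν) Real.HolderConjugate.two_two
    (by simpa using hf) (by simpa using hg)
  simp only [Real.rpow_two, Real.norm_eq_abs, sq_abs, ← Real.sqrt_eq_rpow] at cauchy_schwarz
  calc |∫ ω, f ω * g ω ∂ν| ≤ ∫ ω, |f ω * g ω| ∂ν := abs_integral_le_integral_abs
    _ = ∫ ω, |f ω| * |g ω| ∂ν := by simp only [abs_mul]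
    _ ≤ _ := cauchy_schwarz

theorem integral_sum_sq_of_pairwise_orthogonal {ι : Type*} {s : Finset ι} {D : ι → Ω → ℝ}
    (hD : ∀ i ∈ s, MemLp (D i) 2 ν)
    (horth : (s : Set ι).Pairwise fun i j => ∫ ω, D i ω * D j ω ∂ν = 0) :
    ∫ ω, (∑ i ∈ s, D i ω) ^ 2 ∂ν = ∑ i ∈ s, ∫ ω, D i ω ^ 2 ∂ν := by
  have hint : ∀ i ∈ s, ∀ j ∈ s, Integrable (fun ω => D i ω * D j ω) ν :=
    fun i hi j hj => (hD i hi).integrable_mul (hD j hj)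
  simp only [sq, Finset.sum_mul_sum]
  rw [integral_finsetSum _ fun i hi => integrable_finsetSum _ (hint i hi)]
  refine Finset.sum_congr rfl fun i hi => ?_
  rw [integral_finsetSum _ (hint i hi)]
  exact Finset.sum_eq_single_of_mem i hi fun j hj hji => horth hi hj hji.symm

theorem tendsto_integral_mul_sum_div_of_pairwise_orthogonal {f D : ℕ → Ω → ℝ} {A B : ℝ}
    (hf : ∀ n, MemLp (f n) 2 ν) (hD : ∀ n, MemLp (D n) 2 ν)
    (hfA : ∀ n, ∫ ω, f n ω ^ 2 ∂ν ≤ A) (hDB : ∀ n, ∫ ω, D n ω ^ 2 ∂ν ≤ B)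
    (horth : Pairwise fun i j => ∫ ω, D i ω * D j ω ∂ν = 0) :
    Tendsto (fun n : ℕ => (1 / (n : ℝ)) * ∫ ω, f n ω * ∑ j ∈ Finset.range n, D j ω ∂ν)
      atTop (𝓝 0) := by
  have hsum_sq (n : ℕ) : ∫ ω, (∑ j ∈ Finset.range n, D j ω) ^ 2 ∂ν ≤ n * B := by
    rw [integral_sum_sq_of_pairwise_orthogonal (fun j _ => hD j) (horth.set_pairwise _)]
    simpa using Finset.sum_le_card_nsmul (Finset.range n) _ B fun j _ => hDB j
  have hbound (n : ℕ) :
      ‖(1 / (n : ℝ)) * ∫ ω, f n ω * ∑ j ∈ Finset.range n, D j ω ∂ν‖ ≤ √A * √B / √n :=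
    calc ‖(1 / (n : ℝ)) * ∫ ω, f n ω * ∑ j ∈ Finset.range n, D j ω ∂ν‖
        = |∫ ω, f n ω * ∑ j ∈ Finset.range n, D j ω ∂ν| / n := by
          rw [one_div_mul_eq_div, norm_div, Real.norm_eq_abs, RCLike.norm_natCast]
      _ ≤ √A * √(n * B) / n := by
          gcongr
          refine (abs_integral_mul_le_sqrt_mul_sqrt (hf n)
            (memLp_finsetSum _ fun j _ => hD j)).trans ?_
          gcongr
          exacts [hfA n, hsum_sq n]
      _ = √A * √B * (√n / n) := by rw [Real.sqrt_mul n.cast_nonneg]; ring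
      _ = √A * √B / √n := by rw [Real.sqrt_div_self, div_eq_mul_inv]
  exact squeeze_zero_norm hbound <|
    tendsto_const_nhds.div_atTop (Real.tendsto_sqrt_atTop.comp tendsto_natCast_atTop_atTop)

end SecondMoments

namespace IsMarkovChainLaw

variable {X : Type*} [MeasurableSpace X] {μ : Measure X} {P : Kernel X X} {Pμ : Measure (ℕ → X)}

theorem lintegral_eval_succ (hPμ : IsMarkovChainLaw μ P Pμ) (n : ℕ) {h : X → ℝ≥0∞}
    (hh : Measurable h) : ∫⁻ ω, h (ω (n + 1)) ∂Pμ = ∫⁻ ω, ∫⁻ y, h y ∂P (ω n) ∂Pμ := by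
  simpa only [Pi.one_apply, one_mul] using hPμ.2.2 n 1 h measurable_one hh

theorem lintegral_eval_le_of_drift (hPμ : IsMarkovChainLaw μ P Pμ) {W : X → ℝ≥0∞}
    (hW : Measurable W) {r b : ℝ≥0∞} (hdrift : ∀ x, ∫⁻ y, W y ∂P x ≤ r * W x + b) (n : ℕ) :
    ∫⁻ ω, W (ω n) ∂Pμ ≤ r ^ n * ∫⁻ x, W x ∂μ + b * ∑ i ∈ Finset.range n, r ^ i := by
  have := hPμ.1
  induction n with
  | zero =>
    rw [← hPμ.2.1, lintegral_map hW (measurable_pi_apply 0)]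
    simp
  | succ n ih =>
    calc ∫⁻ ω, W (ω (n + 1)) ∂Pμ
        = ∫⁻ ω, ∫⁻ y, W y ∂P (ω n) ∂Pμ := hPμ.lintegral_eval_succ n hW
      _ ≤ ∫⁻ ω, (r * W (ω n) + b) ∂Pμ := lintegral_mono fun ω => hdrift (ω n)
      _ = r * ∫⁻ ω, W (ω n) ∂Pμ + b := by
          rw [lintegral_add_right _ measurable_const, lintegral_const_mul _ (by fun_prop),
            lintegral_const, measure_univ, mul_one]
      _ ≤ r * (r ^ n * ∫⁻ x, W x ∂μ + b * ∑ i ∈ Finset.range n, r ^ i) + b := by gcongr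
      _ = r ^ (n + 1) * ∫⁻ x, W x ∂μ + b * ∑ i ∈ Finset.range (n + 1), r ^ i := by
          rw [geom_sum_succ]
          ring

theorem exists_lintegral_eval_le_of_drift (hPμ : IsMarkovChainLaw μ P Pμ) {W : X → ℝ≥0∞}
    (hW : Measurable W) (hμW : ∫⁻ x, W x ∂μ ≠ ⊤) {r b : ℝ≥0∞} (hr : r < 1) (hb : b ≠ ⊤)
    (hdrift : ∀ x, ∫⁻ y, W y ∂P x ≤ r * W x + b) :
    ∃ C : ℝ≥0∞, C ≠ ⊤ ∧ ∀ n, ∫⁻ ω, W (ω n) ∂Pμ ≤ C := by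
  refine ⟨∫⁻ x, W x ∂μ + b * (1 - r)⁻¹, by finiteness [(tsub_pos_of_lt hr).ne'], fun n => ?_⟩
  refine (hPμ.lintegral_eval_le_of_drift hW hdrift n).trans ?_
  rw [← ENNReal.tsum_geometric]
  gcongr
  · exact mul_le_of_le_one_left' (pow_le_one₀ zero_le hr.le)
  · exact ENNReal.sum_le_tsum _

theorem map_initial_prodMk_succ [IsSFiniteKernel P] (hPμ : IsMarkovChainLaw μ P Pμ) (n : ℕ) :
    Pμ.map (fun ω => (fun i : Fin (n + 1) => ω i, ω (n + 1)))
      = Pμ.map (fun ω (i : Fin (n + 1)) => ω i) ⊗ₘ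
        P.comap (fun x => x (Fin.last n)) (measurable_pi_apply _) := by
  have := hPμ.1
  have hinit : Measurable fun (ω : ℕ → X) (i : Fin (n + 1)) => ω i := by fun_prop
  have hpair : Measurable fun ω : ℕ → X => (fun i : Fin (n + 1) => ω i, ω (n + 1)) := by fun_prop
  refine Measure.ext_prod fun {s} {t} hs ht => ?_
  have hmarkov := hPμ.2.2 n (s.indicator 1) (t.indicator 1) (measurable_one.indicator hs)
    (measurable_one.indicator ht)
  simp only [lintegral_indicator_one ht] at hmarkov
  rw [Measure.compProd_apply_prod hs ht, ← lintegral_indicator hs,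
    lintegral_map ((Kernel.measurable_coe _ ht).indicator hs) hinit,
    ← lintegral_indicator_one (hs.prod ht),
    lintegral_map (measurable_one.indicator (hs.prod ht)) hpair]
  convert hmarkov using 3 with ω ω
  · rw [Set.indicator_prod_one]
  · by_cases hω : (fun i : Fin (n + 1) => ω i) ∈ s <;> simp [hω]

theorem lintegral_eval_pair [IsSFiniteKernel P] (hPμ : IsMarkovChainLaw μ P Pμ) (n : ℕ)
    {F : X → X → ℝ≥0∞} (hF : Measurable (Function.uncurry F)) :
    ∫⁻ ω, F (ω n) (ω (n + 1)) ∂Pμ = ∫⁻ ω, ∫⁻ y, F (ω n) y ∂P (ω n) ∂Pμ := by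
  have := hPμ.1
  have hF' : Measurable fun z : (Fin (n + 1) → X) × X => F (z.1 (Fin.last n)) z.2 := by
    fun_prop
  have hmap := lintegral_map (μ := Pμ) hF'
    (by fun_prop : Measurable fun ω : ℕ → X => (fun i : Fin (n + 1) => ω i, ω (n + 1)))
  rw [hPμ.map_initial_prodMk_succ, Measure.lintegral_compProd hF',
    lintegral_map hF'.lintegral_kernel_prod_right' (by fun_prop)] at hmap
  simpa using hmap.symm

theorem integral_initial_mul_eq_zero [IsSFiniteKernel P] (hPμ : IsMarkovChainLaw μ P Pμ) {n : ℕ}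
    {g : (Fin (n + 1) → X) → ℝ} (hg : Measurable g) {q : X → X → ℝ}
    (hq : Measurable (Function.uncurry q)) (hmean : ∀ x, ∫ y, q x y ∂P x = 0)
    (hint : Integrable (fun ω => g (fun i => ω i) * q (ω n) (ω (n + 1))) Pμ) :
    ∫ ω, g (fun i => ω i) * q (ω n) (ω (n + 1)) ∂Pμ = 0 := by
  have := hPμ.1
  let F (z : (Fin (n + 1) → X) × X) : ℝ := g z.1 * q (z.1 (Fin.last n)) z.2
  have hF : Measurable F := by fun_prop
  have hpair : Measurable fun ω : ℕ → X => (fun i : Fin (n + 1) => ω i, ω (n + 1)) := by fun_prop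
  have hFint : Integrable F (Pμ.map fun ω => (fun i : Fin (n + 1) => ω i, ω (n + 1))) :=
    (integrable_map_measure hF.aestronglyMeasurable hpair.aemeasurable).2 hint
  calc ∫ ω, g (fun i => ω i) * q (ω n) (ω (n + 1)) ∂Pμ
      = ∫ z, F z ∂Pμ.map fun ω => (fun i : Fin (n + 1) => ω i, ω (n + 1)) :=
        (integral_map hpair.aemeasurable hF.aestronglyMeasurable).symm
    _ = ∫ x, ∫ y, g x * q (x (Fin.last n)) y ∂P (x (Fin.last n))
          ∂Pμ.map fun ω (i : Fin (n + 1)) => ω i := by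
        rw [hPμ.map_initial_prodMk_succ] at hFint ⊢
        exact Measure.integral_compProd hFint
    _ = 0 := by simp only [integral_const_mul, hmean, mul_zero, integral_zero]

theorem pairwise_integral_increment_mul_eq_zero [IsSFiniteKernel P]
    (hPμ : IsMarkovChainLaw μ P Pμ) {q : X → X → ℝ} (hq : Measurable (Function.uncurry q))
    (hmean : ∀ x, ∫ y, q x y ∂P x = 0)
    (hL2 : ∀ n, MemLp (fun ω => q (ω n) (ω (n + 1))) 2 Pμ) :
    Pairwise fun i j => ∫ ω, q (ω i) (ω (i + 1)) * q (ω j) (ω (j + 1)) ∂Pμ = 0 := by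
  have : Std.Symm fun i j => ∫ ω, q (ω i) (ω (i + 1)) * q (ω j) (ω (j + 1)) ∂Pμ = 0 :=
    ⟨fun i j h => by simpa only [mul_comm] using h⟩
  refine Pairwise.of_lt fun i j hij => ?_
  have hpast : Measurable fun x : Fin (j + 1) → X =>
      q (x ⟨i, by lia⟩) (x ⟨i + 1, by lia⟩) := by fun_prop
  exact hPμ.integral_initial_mul_eq_zero hpast hq hmean ((hL2 i).integrable_mul (hL2 j))

end IsMarkovChainLaw

/-- The boundary term vanishes: `(1/n)·E_μ[f̂(Φ_n) M_n] → 0` as `n → ∞`. -/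
theorem boundary_term_vanishes {X : Type*} [MeasurableSpace X]
    (P : Kernel X X) [IsMarkovKernel P]
    (V : X → ℝ) (hVmeas : Measurable V) (hV1 : ∀ x, 1 ≤ V x)
    (K : Set X) (hK : MeasurableSet K)
    (l b : ℝ) (hl0 : 0 < l) (hl1 : l < 1) (hb : 0 ≤ b)
    (hdrift : ∀ x, ∫⁻ y, ENNReal.ofReal (V y) ∂(P x)
      ≤ ENNReal.ofReal (l * V x + b * K.indicator (fun _ => 1) x))
    (μ : Measure X) [IsProbabilityMeasure μ]
    (hμV : ∫⁻ x, ENNReal.ofReal (V x) ∂μ < ⊤)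
    (q : X → X → ℝ) (hq_meas : Measurable (Function.uncurry q))
    (G : ℝ) (hG : 0 ≤ G)
    (hq_mean : ∀ x, ∫ y, q x y ∂(P x) = 0)
    (hq_sq : ∀ x, ∫⁻ y, ENNReal.ofReal ((q x y) ^ 2) ∂(P x) ≤ ENNReal.ofReal (G * V x))
    (fhat : X → ℝ) (hfhat_meas : Measurable fhat)
    (c : ℝ) (hc : 0 ≤ c) (hfhat_bdd : ∀ x, |fhat x| ≤ c * Real.sqrt (V x))
    (Pμ : Measure (ℕ → X)) (hPμ : IsMarkovChainLaw μ P Pμ)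
    (M : ℕ → (ℕ → X) → ℝ)
    (hM : ∀ n ω, M n ω = ∑ j ∈ Finset.range n, q (ω j) (ω (j + 1))) :
    Tendsto (fun n : ℕ => (1 / (n : ℝ)) * ∫ ω, fhat (ω n) * M n ω ∂Pμ)
      atTop (nhds 0) := by
  obtain rfl : M = fun n ω => ∑ j ∈ Finset.range n, q (ω j) (ω (j + 1)) := funext₂ hM
  obtain ⟨C, hC, hVC⟩ : ∃ C : ℝ≥0∞, C ≠ ⊤ ∧ ∀ n, ∫⁻ ω, ENNReal.ofReal (V (ω n)) ∂Pμ ≤ C :=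
    hPμ.exists_lintegral_eval_le_of_drift hVmeas.ennreal_ofReal hμV.ne
      (ENNReal.ofReal_lt_one.2 hl1) ENNReal.ofReal_ne_top fun x =>
        (hdrift x).trans (ofReal_mul_add_mul_indicator_le hl0.le hb (V x) K x)
  have hf_meas (n : ℕ) : AEStronglyMeasurable (fun ω : ℕ → X => fhat (ω n)) Pμ :=
    Measurable.aestronglyMeasurable (by fun_prop)
  have hD_meas (n : ℕ) : AEStronglyMeasurable (fun ω : ℕ → X => q (ω n) (ω (n + 1))) Pμ :=
    Measurable.aestronglyMeasurable (by fun_prop)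
  have hf_sq (n : ℕ) : ∫⁻ ω, ENNReal.ofReal (fhat (ω n) ^ 2) ∂Pμ ≤ ENNReal.ofReal (c ^ 2) * C :=
    lintegral_le_mul_of_le_mul (by fun_prop) (fun ω => ofReal_sq_le_of_abs_le_mul_sqrt
      (zero_le_one.trans (hV1 (ω n))) (hfhat_bdd (ω n))) (hVC n)
  have hD_sq (n : ℕ) :
      ∫⁻ ω, ENNReal.ofReal (q (ω n) (ω (n + 1)) ^ 2) ∂Pμ ≤ ENNReal.ofReal G * C := by
    rw [hPμ.lintegral_eval_pair n (F := fun x y => ENNReal.ofReal (q x y ^ 2)) (by fun_prop)]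
    exact lintegral_le_mul_of_le_mul (by fun_prop)
      (fun ω => (hq_sq (ω n)).trans_eq (ENNReal.ofReal_mul hG)) (hVC n)
  have hf_L2 (n : ℕ) := memLp_two_of_lintegral_ofReal_sq_le (hf_meas n) (by finiteness) (hf_sq n)
  have hD_L2 (n : ℕ) := memLp_two_of_lintegral_ofReal_sq_le (hD_meas n) (by finiteness) (hD_sq n)
  exact tendsto_integral_mul_sum_div_of_pairwise_orthogonal hf_L2 hD_L2
    (fun n => integral_sq_le_toReal (hf_meas n) (by finiteness) (hf_sq n))
    (fun n => integral_sq_le_toReal (hD_meas n) (by finiteness) (hD_sq n))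
    (hPμ.pairwise_integral_increment_mul_eq_zero hq_meas hq_mean hD_L2)

end
end

section
/- Let X be a measurable space, θ₀ ∈ ℝ^d, and for each θ in a neighborhood B_ε(θ₀) let P(θ) be a Markov kernel on X with P(θ,x,dy) = p(θ,x,y)·P(θ₀,x,dy), where p is nonnegative, jointly measurable, p(θ₀,x,y) = 1, and θ ↦ p(θ,x,y) is differentiable at θ₀ with partial derivatives ∂_i p(θ₀,x,y). Assume: (i) there is a nonzero σ-finite measure ψ on X such that for every θ ∈ B_ε(θ₀), every measurable A with ψ(A) > 0, and every x, there exists n with P(θ)^n(x,A) > 0; (ii) there exist a measurable set K, δ > 0, m ∈ ℕ and a probability measure ν with P(θ)^m(x,·) ≥ δ·ν for all x ∈ K and θ ∈ B_ε(θ₀); (iii) there are V : X → [1,∞) measurable, λ ∈ (0,1), b < ∞ with ∫ V dP(θ)(x,·) ≤ λV(x) + b·1_K(x) for all x and θ ∈ B_ε(θ₀); (iv) for each i, with P^{(i)}(θ₀,x,dy) = ∂_i p(θ₀,x,y)P(θ₀,x,dy), the V-operator norm |||P^{(i)}(θ₀)|||_V is finite and |||(P(θ₀+h e_i)−P(θ₀))/h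 − P^{(i)}(θ₀)|||_V → 0 as h → 0; (v) g_{ij}(x) = ∫ ∂_i p(θ₀,x,y)·∂_j p(θ₀,x,y) P(θ₀,x,dy) satisfies sup_x g_{ii}(x)/V(x) < ∞ for each i; (vi) f : X → ℝ is measurable with sup_x |f(x)|/√(V(x)) < ∞. Let π be an invariant probability measure for P(θ₀) with ∫ V dπ < ∞, set α(θ₀) = ∫ f dπ and Σ ∈ ℝ^{d×d} with Σ_{ij} = ∫ g_{ij} dπ. Let μ be an initial distribution with ∫ V dμ < ∞, and under the chain law P_μ for P(θ₀) set α_n = (1/n)∑_{j=0}^{n−1} f(Φ_j), D_j = (∂_1 p(θ₀,Φ_{j−1},Φ_j), …, ∂_d p(θ₀,Φ_{j−1},Φ_j)) ∈ ℝ^d and M_n = ∑_{j=1}^n D_j. Then the laws of n^{−1/2}·α_n·M_n converge weakly, as n → ∞, to the centered multivariate Gaussian distribution on ℝ^d with covariance matrix α(θ₀)²·Σ. -/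
open MeasureTheory ProbabilityTheory Filter
open scoped ENNReal NNReal Topology

noncomputable section

/-- The `k`-step transition kernel `P^k`. -/
def kpow {X : Type*} [MeasurableSpace X] (P : Kernel X X) : ℕ → Kernel X X
  | 0 => Kernel.id
  | k + 1 => P ∘ₖ kpow P k

/-!
Drift and minorization provide a Green kernel of the chain, hence `V`-bounded solutions of Poisson's
equation. For a martingale increment `ξ`, a function `u = O(V)` and
`γ = -½ ∫∫ ξ² dP dπ + i ∫ u dπ`, let `h` solve Poisson's equation for `-½ ∫ ξ² dP + i u - γ`. Then
`1 + a² h` is, up to `o(a²)`, an eigenfunction of the kernel `exp (i (a ξ + a² u)) P` with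
eigenvalue `exp (a² γ)`. Iterating `n` times with `a = n^{-1/2}` shows that the joint characteristic
function of the normalized martingale and of the ergodic average converges to `exp γ`. By Lévy's
theorem the pair converges in distribution to a Gaussian vector paired with a constant, and the
continuous map `(z, s) ↦ s • z` yields the limit of the product.
-/

section KernelOperator

variable {X : Type*} [MeasurableSpace X] {κ η : Kernel X X} {F G : X → ℝ≥0∞}

/-- The function `x ↦ ∫ F(y) κ(x, dy)`, i.e. a kernel acting on nonnegative functions from the
left; `κ ⊙ F` is `κF` in the usual notation for Markov chains. -/
def lintegralOp (κ : Kernel X X) (F : X → ℝ≥0∞) (x : X) : ℝ≥0∞ :=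
  ∫⁻ y, F y ∂κ x

local infixr:74 " ⊙ " => lintegralOp

lemma measurable_lintegralOp (hF : Measurable F) : Measurable (κ ⊙ F) :=
  hF.lintegral_kernel

lemma lintegralOp_mono (h : F ≤ G) : κ ⊙ F ≤ κ ⊙ G :=
  fun _ ↦ lintegral_mono h

lemma lintegralOp_add (hF : Measurable F) (G : X → ℝ≥0∞) : κ ⊙ (F + G) = κ ⊙ F + κ ⊙ G :=
  funext fun _ ↦ lintegral_add_left hF G

lemma lintegralOp_sum {ι : Type*} (s : Finset ι) {F : ι → X → ℝ≥0∞} (hF : ∀ i, Measurable (F i)) :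
    κ ⊙ ∑ i ∈ s, F i = ∑ i ∈ s, κ ⊙ F i :=
  funext fun x ↦ by simpa [lintegralOp] using lintegral_finsetSum s fun i _ ↦ hF i

lemma lintegralOp_smul (c : ℝ≥0∞) (hF : Measurable F) : κ ⊙ (c • F) = c • κ ⊙ F :=
  funext fun _ ↦ lintegral_const_mul c hF

lemma add_lintegralOp : (κ + η) ⊙ F = κ ⊙ F + η ⊙ F :=
  funext fun x ↦ lintegral_add_measure F (κ x) (η x)

lemma mul_lintegralOp (hF : Measurable F) : (η * κ) ⊙ F = κ ⊙ η ⊙ F :=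
  funext fun x ↦ Kernel.lintegral_comp η κ x hF

lemma one_lintegralOp (hF : Measurable F) : (1 : Kernel X X) ⊙ F = F :=
  funext fun x ↦ Kernel.lintegral_id' hF x

lemma lintegralOp_one_apply (x : X) : (κ ⊙ 1) x = κ x Set.univ :=
  lintegral_one

lemma kernel_ext_of_lintegralOp_eq (h : ∀ F, Measurable F → κ ⊙ F = η ⊙ F) : κ = η :=
  Kernel.ext_fun fun x F hF ↦ congrFun (h F hF) x

instance isFiniteKernel_pow [IsFiniteKernel κ] (n : ℕ) : IsFiniteKernel (κ ^ n) := by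
  induction n with
  | zero => exact inferInstanceAs (IsFiniteKernel Kernel.id)
  | succ n ih => exact pow_succ κ n ▸ inferInstanceAs (IsFiniteKernel ((κ ^ n) ∘ₖ κ))

/-- The kernel `x ↦ c κ(x, ·)`; Mathlib only provides multiples by natural numbers. -/
def scaleKernel (c : ℝ≥0) (κ : Kernel X X) : Kernel X X where
  toFun x := c • κ x
  measurable' := Measure.measurable_of_measurable_coe _ fun _ hs ↦
    (κ.measurable_coe hs).const_smul c

lemma scaleKernel_lintegralOp (c : ℝ≥0) : scaleKernel c κ ⊙ F = (c : ℝ≥0∞) • κ ⊙ F :=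
  funext fun x ↦ lintegral_smul_measure (μ := κ x) c F

/-- The potential kernel `∑ₙ κⁿ` of `κ`. -/
def potentialKernel (κ : Kernel X X) : Kernel X X :=
  Kernel.sum fun n ↦ κ ^ n

instance isSFiniteKernel_potentialKernel [IsFiniteKernel κ] : IsSFiniteKernel (potentialKernel κ) :=
  inferInstanceAs (IsSFiniteKernel (Kernel.sum fun n ↦ κ ^ n))

lemma potentialKernel_eq_one_add : potentialKernel κ = 1 + Kernel.sum fun n ↦ κ ^ (n + 1) := by
  ext x s hs
  rw [add_apply, Measure.add_apply, potentialKernel, Kernel.sum_apply' _ _ hs,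
    Kernel.sum_apply' _ _ hs]
  exact tsum_eq_zero_add' (f := fun n ↦ (κ ^ n) x s) ENNReal.summable

lemma potentialKernel_eq_one_add_mul : potentialKernel κ = 1 + potentialKernel κ * κ := by
  conv_lhs => rw [potentialKernel_eq_one_add, funext (pow_succ κ)]
  exact congrArg _ (Kernel.comp_sum_left κ _).symm

lemma potentialKernel_eq_one_add_mul' : potentialKernel κ = 1 + κ * potentialKernel κ := by
  conv_lhs => rw [potentialKernel_eq_one_add, funext (pow_succ' κ)]
  exact congrArg _ (Kernel.comp_sum_right _ κ).symm

lemma potentialKernel_lintegralOp_le {W : X → ℝ≥0∞} (hF : Measurable F) (hW : F + κ ⊙ W ≤ W) :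
    potentialKernel κ ⊙ F ≤ W := by
  have partial_sums (N : ℕ) : ∑ n ∈ Finset.range N, (κ ^ n ⊙ F) ≤ W := by
    induction N with
    | zero => simp
    | succ N ih =>
      calc ∑ n ∈ Finset.range (N + 1), κ ^ n ⊙ F
          = F + κ ⊙ ∑ n ∈ Finset.range N, κ ^ n ⊙ F := by
            rw [Finset.sum_range_succ', pow_zero, one_lintegralOp hF, add_comm]
            simp only [pow_succ, mul_lintegralOp hF]
            rw [lintegralOp_sum _ fun n ↦ measurable_lintegralOp hF]
        _ ≤ F + κ ⊙ W := by gcongr; exact lintegralOp_mono ih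
        _ ≤ W := hW
  intro x
  rw [lintegralOp, potentialKernel, Kernel.sum_apply, lintegral_sum_measure,
    ENNReal.tsum_eq_iSup_nat]
  exact iSup_le fun N ↦ by simpa [lintegralOp] using partial_sums N x

lemma potentialKernel_lintegralOp_le_of_drift {V : X → ℝ≥0∞} {a : ℝ≥0∞} (ha : a ≤ 1)
    (hV : Measurable V) (hF : Measurable F) (h : κ ⊙ V ≤ a • V + F) :
    (1 - a) • potentialKernel κ ⊙ V ≤ V + potentialKernel κ ⊙ F := by
  rw [← lintegralOp_smul _ hV]
  refine potentialKernel_lintegralOp_le (hV.const_smul _) ?_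
  calc (1 - a) • V + κ ⊙ (V + potentialKernel κ ⊙ F)
      = (1 - a) • V + (κ ⊙ V + κ ⊙ potentialKernel κ ⊙ F) := by rw [lintegralOp_add hV]
    _ ≤ (1 - a) • V + (a • V + F + κ ⊙ potentialKernel κ ⊙ F) := by gcongr
    _ = V + potentialKernel κ ⊙ F := by
        conv_rhs => rw [potentialKernel_eq_one_add_mul, add_lintegralOp, one_lintegralOp hF,
          mul_lintegralOp hF, ← one_smul ℝ≥0∞ V, ← tsub_add_cancel_of_le ha, add_smul]
        abel

lemma kernel_add_left_cancel {κ₁ κ₂ : Kernel X X} [∀ x, IsFiniteMeasure (κ x)]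
    (h : κ + κ₁ = κ + κ₂) : κ₁ = κ₂ := by
  ext x s _
  have at_set : κ x s + κ₁ x s = κ x s + κ₂ x s :=
    DFunLike.congr_fun (DFunLike.congr_fun h x) s
  exact (ENNReal.add_right_inj (measure_ne_top _ _)).1 at_set

lemma scaleKernel_half_add_self : scaleKernel 2⁻¹ κ + scaleKernel 2⁻¹ κ = κ :=
  kernel_ext_of_lintegralOp_eq fun F _ ↦ by
    rw [add_lintegralOp, scaleKernel_lintegralOp, ← add_smul]
    simp [ENNReal.inv_two_add_inv_two]

lemma mul_scaleKernel (c : ℝ≥0) : κ * scaleKernel c η = scaleKernel c κ * η :=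
  kernel_ext_of_lintegralOp_eq fun F hF ↦ by
    rw [mul_lintegralOp hF, mul_lintegralOp hF, scaleKernel_lintegralOp, scaleKernel_lintegralOp,
      lintegralOp_smul _ (measurable_lintegralOp hF)]

/-- The geometric resolvent `∑ₙ 2⁻⁽ⁿ⁺¹⁾ Pⁿ`, the law of the chain at an independent geometric
time; it sees all iterates of `P` at once, which makes periodicity irrelevant. -/
def resolventKernel (P : Kernel X X) : Kernel X X :=
  scaleKernel 2⁻¹ (potentialKernel (scaleKernel 2⁻¹ P))

section Resolvent

variable {P : Kernel X X} {V : X → ℝ≥0∞} {l : ℝ≥0∞}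

lemma resolventKernel_add_self :
    resolventKernel P + resolventKernel P = 1 + resolventKernel P * P := by
  rw [resolventKernel, scaleKernel_half_add_self, ← mul_scaleKernel]
  exact potentialKernel_eq_one_add_mul

lemma resolventKernel_add_self' :
    resolventKernel P + resolventKernel P = 1 + P * resolventKernel P := by
  rw [resolventKernel, scaleKernel_half_add_self, mul_scaleKernel]
  exact potentialKernel_eq_one_add_mul'

lemma commute_resolventKernel : Commute P (resolventKernel P) := by
  have : ∀ x, IsFiniteMeasure ((1 : Kernel X X) x) := fun x ↦
    inferInstanceAs (IsFiniteMeasure (Kernel.id x))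
  exact kernel_add_left_cancel (resolventKernel_add_self'.symm.trans resolventKernel_add_self)

lemma resolventKernel_lintegralOp_pow_le (hF : Measurable F) (n : ℕ) :
    resolventKernel P ⊙ P ^ n ⊙ F ≤ (2 : ℝ≥0∞) ^ n • resolventKernel P ⊙ F := by
  induction n with
  | zero => simp [one_lintegralOp hF]
  | succ n ih =>
    have hPF : Measurable (P ^ n ⊙ F) := measurable_lintegralOp hF
    calc resolventKernel P ⊙ P ^ (n + 1) ⊙ F
        = (P * resolventKernel P) ⊙ P ^ n ⊙ F := by
          rw [mul_lintegralOp hPF, ← mul_lintegralOp hF (κ := P), ← pow_succ]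
      _ ≤ (1 + P * resolventKernel P) ⊙ P ^ n ⊙ F := by
          rw [add_lintegralOp]; exact le_add_self
      _ = (2 : ℝ≥0∞) • resolventKernel P ⊙ P ^ n ⊙ F := by
          rw [← resolventKernel_add_self', add_lintegralOp, two_smul]
      _ ≤ (2 : ℝ≥0∞) ^ (n + 1) • resolventKernel P ⊙ F := by
          rw [pow_succ', mul_smul]; gcongr

lemma resolventKernel_lintegralOp_le_of_drift (hl : l ≤ 1) (hV : Measurable V)
    (hF : Measurable F) (h : P ⊙ V ≤ l • V + F) :
    (2 - l) • resolventKernel P ⊙ V ≤ V + resolventKernel P ⊙ F := by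
  have half_drift : scaleKernel 2⁻¹ P ⊙ V ≤ (2⁻¹ * l) • V + (2⁻¹ : ℝ≥0∞) • F := by
    rw [scaleKernel_lintegralOp, mul_smul, ← smul_add]
    push_cast
    gcongr
  have hl' : 2⁻¹ * l ≤ 1 := mul_le_one' (by simp) hl
  have rate : (2 - l) * 2⁻¹ = 1 - 2⁻¹ * l := by
    rw [ENNReal.sub_mul (by simp), mul_comm l, ENNReal.mul_inv_cancel two_ne_zero (by simp)]
  calc (2 - l) • resolventKernel P ⊙ V
      = (1 - 2⁻¹ * l) • potentialKernel (scaleKernel 2⁻¹ P) ⊙ V := by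
        rw [resolventKernel, scaleKernel_lintegralOp, smul_smul, ← rate]; simp
    _ ≤ V + potentialKernel (scaleKernel 2⁻¹ P) ⊙ ((2⁻¹ : ℝ≥0∞) • F) :=
        potentialKernel_lintegralOp_le_of_drift hl' hV (hF.const_smul _) half_drift
    _ = V + resolventKernel P ⊙ F := by
        rw [lintegralOp_smul _ hF, resolventKernel, scaleKernel_lintegralOp]; simp

lemma resolventKernel_lintegralOp_one_le [IsMarkovKernel P] : resolventKernel P ⊙ 1 ≤ 1 := by
  have drift_one : P ⊙ 1 ≤ (1 : ℝ≥0∞) • 1 + 0 := fun x ↦ by simp [lintegralOp_one_apply]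
  have bound := resolventKernel_lintegralOp_le_of_drift le_rfl measurable_one measurable_zero
    drift_one
  have zero : resolventKernel P ⊙ (0 : X → ℝ≥0∞) = 0 := funext fun x ↦ lintegral_zero
  have two_sub_one : (2 : ℝ≥0∞) - 1 = 1 := by
    rw [← one_add_one_eq_two, ENNReal.add_sub_cancel_right ENNReal.one_ne_top]
  rwa [zero, add_zero, two_sub_one, one_smul] at bound

lemma pow_mul_resolventKernel_lintegralOp_le (hl : l ≤ 1) (hV : Measurable V)
    (hF : Measurable F) (h : P ⊙ V ≤ l • V + F) (m : ℕ) :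
    (2 - l) • (P ^ m * resolventKernel P) ⊙ V
      ≤ V + (2 : ℝ≥0∞) ^ (m + 1) • resolventKernel P ⊙ F := by
  induction m with
  | zero =>
    rw [pow_zero, one_mul, zero_add, pow_one, two_smul]
    exact (resolventKernel_lintegralOp_le_of_drift hl hV hF h).trans (by gcongr; exact le_self_add)
  | succ m ih =>
    set U := resolventKernel P
    calc (2 - l) • (P ^ (m + 1) * U) ⊙ V
        = (2 - l) • U ⊙ P ^ m ⊙ P ⊙ V := by
          rw [mul_lintegralOp hV, pow_succ', mul_lintegralOp hV]
      _ ≤ (2 - l) • U ⊙ P ^ m ⊙ (V + F) := by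
          gcongr
          refine lintegralOp_mono (lintegralOp_mono (h.trans ?_))
          gcongr
          exact fun x ↦ mul_le_of_le_one_left' hl
      _ = (2 - l) • (P ^ m * U) ⊙ V + (2 - l) • U ⊙ P ^ m ⊙ F := by
          rw [lintegralOp_add hV, lintegralOp_add (measurable_lintegralOp hV),
            mul_lintegralOp hV, smul_add]
      _ ≤ V + (2 : ℝ≥0∞) ^ (m + 1) • U ⊙ F + (2 : ℝ≥0∞) • (2 : ℝ≥0∞) ^ m • U ⊙ F := by
          gcongr
          exact fun x ↦ mul_le_mul' tsub_le_self (resolventKernel_lintegralOp_pow_le hF m x)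
      _ = V + (2 : ℝ≥0∞) ^ (m + 1 + 1) • U ⊙ F := by
          rw [smul_smul, ← pow_succ', add_assoc, ← two_smul ℝ≥0∞, smul_smul, ← pow_succ']

end Resolvent

section Green

/-- `Λ` is a Green kernel for `P`: a `V`-bounded solution of `Λ + s ⊗ ρ = I + PΛ`. It inverts
`I - P` up to the rank-one kernel `s ⊗ ρ`. The product `PΛ` of operators is `Λ ∘ₖ P` in Mathlib. -/
structure IsGreenKernel (P : Kernel X X) (V : X → ℝ≥0∞) (Λ : Kernel X X) (s : X → ℝ≥0∞)
    (ρ : Measure X) : Prop where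
  isSFiniteKernel : IsSFiniteKernel Λ
  measurable : Measurable s
  le_one : s ≤ 1
  exists_le : ∃ C : ℝ≥0∞, C ≠ ∞ ∧ Λ ⊙ V ≤ C • V
  add_smul_eq : ∀ x, Λ x + s x • ρ = Measure.dirac x + (Λ ∘ₖ P) x

variable {Q : Kernel X X} {V s : X → ℝ≥0∞} {ν : Measure X} {lam β : ℝ≥0∞}

lemma exists_residual_kernel [IsFiniteKernel Q] [IsProbabilityMeasure ν] (hs : Measurable s)
    (h : ∀ x, s x • ν ≤ Q x) :
    ∃ R : Kernel X X, IsFiniteKernel R ∧ ∀ x, Q x = R x + s x • ν := by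
  have finite (x : X) : IsFiniteMeasure (s x • ν) := isFiniteMeasure_of_le _ (h x)
  let R : Kernel X X :=
    { toFun := fun x ↦ Q x - s x • ν
      measurable' := Measure.measurable_of_measurable_coe _ fun A hA ↦ by
        simp_rw [fun x ↦ Measure.sub_apply hA (h x), Measure.smul_apply, smul_eq_mul]
        exact (Q.measurable_coe hA).sub (hs.mul_const _) }
  exact ⟨R, isFiniteKernel_of_le (ν := Q) fun x ↦ Measure.sub_le,
    fun x ↦ (Measure.sub_add_cancel_of_le (h x)).symm⟩

lemma le_one_of_smul_le [IsProbabilityMeasure ν] (hQ : Q ⊙ 1 ≤ 1) (h : ∀ x, s x • ν ≤ Q x) :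
    s ≤ 1 := fun x ↦
  calc s x = (s x • ν) Set.univ := by simp
    _ ≤ (Q ⊙ 1) x := (h x Set.univ).trans_eq (lintegralOp_one_apply x).symm
    _ ≤ 1 := hQ x

/-- The mass `s ν(V + β) ≥ β s` removed by the minorization compensates the term `β s` of the
drift condition. -/
lemma residual_lintegralOp_add_const_le {R : Kernel X X} [IsProbabilityMeasure ν]
    (hQ : Q ⊙ 1 ≤ 1) (hV : Measurable V) (h : ∀ x, Q x = R x + s x • ν) (hβ : β ≠ ∞)
    (hdrift : Q ⊙ V ≤ lam • V + β • s) :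
    R ⊙ (V + β • 1) ≤ lam • V + β • 1 := by
  intro x
  have mass (κ : Kernel X X) : (κ ⊙ (V + β • 1)) x = (κ ⊙ V) x + β * κ x Set.univ := by
    rw [lintegralOp_add hV, lintegralOp_smul _ measurable_one]
    simp [lintegralOp_one_apply]
  have s_le_one : s x ≤ 1 :=
    le_one_of_smul_le hQ (fun y ↦ by rw [h]; exact Measure.le_add_left le_rfl) x
  refine (ENNReal.add_le_add_iff_right
    (ENNReal.mul_ne_top hβ (s_le_one.trans_lt ENNReal.one_lt_top).ne)).1 ?_
  calc (R ⊙ (V + β • 1)) x + β * s x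
      ≤ (R ⊙ (V + β • 1)) x + s x * ∫⁻ y, (V + β • 1) y ∂ν := by
        rw [mul_comm]
        gcongr
        calc β = ∫⁻ _, β ∂ν := by simp
          _ ≤ ∫⁻ y, (V + β • 1) y ∂ν := lintegral_mono fun y ↦ by simp
    _ = (Q ⊙ (V + β • 1)) x := by
        rw [lintegralOp, lintegralOp, h, lintegral_add_measure, lintegral_smul_measure, smul_eq_mul]
    _ ≤ (lam * V x + β * s x) + β * 1 := by
        rw [mass]
        gcongr
        · exact hdrift x
        · exact (lintegralOp_one_apply x).symm.trans_le (hQ x)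
    _ = (lam • V + β • 1) x + β * s x := by simp [add_right_comm]

lemma exists_isGreenKernel_of_minorization [IsFiniteKernel Q] [IsProbabilityMeasure ν]
    (hQ : Q ⊙ 1 ≤ 1) (hV : Measurable V) (hV_one : 1 ≤ V) (hs : Measurable s)
    (hmin : ∀ x, s x • ν ≤ Q x) (hlam : lam < 1) (hβ : β ≠ ∞)
    (hdrift : Q ⊙ V ≤ lam • V + β • s) :
    ∃ G : Kernel X X, IsGreenKernel Q V G s (ν.bind G) := by
  obtain ⟨R, _, hR⟩ := exists_residual_kernel hs hmin
  have supersolution : (1 - lam) • V + R ⊙ (V + β • 1) ≤ V + β • 1 :=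
    calc (1 - lam) • V + R ⊙ (V + β • 1)
        ≤ (1 - lam) • V + (lam • V + β • 1) := by
          gcongr; exact residual_lintegralOp_add_const_le hQ hV hR hβ hdrift
      _ = V + β • 1 := by rw [← add_assoc, ← add_smul, tsub_add_cancel_of_le hlam.le, one_smul]
  have gap : 1 - lam ≠ 0 := (tsub_pos_of_lt hlam).ne'
  refine ⟨potentialKernel R, inferInstance, hs, le_one_of_smul_le hQ hmin,
    ⟨(1 - lam)⁻¹ * (1 + β), by finiteness, ?_⟩, fun x ↦ ?_⟩
  · have bound := potentialKernel_lintegralOp_le (hV.const_smul _) supersolution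
    calc potentialKernel R ⊙ V
        = (1 - lam)⁻¹ • potentialKernel R ⊙ ((1 - lam) • V) := by
          rw [lintegralOp_smul _ hV, smul_smul, ENNReal.inv_mul_cancel gap (by finiteness),
            one_smul]
      _ ≤ (1 - lam)⁻¹ • (V + β • V) := by gcongr; exact bound.trans (by gcongr)
      _ = ((1 - lam)⁻¹ * (1 + β)) • V := by rw [mul_smul, add_smul, one_smul]
  · have G_eq : potentialKernel R x = Measure.dirac x + (R x).bind (potentialKernel R) :=
      (DFunLike.congr_fun potentialKernel_eq_one_add_mul x).trans <| by
        rw [add_apply]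
        exact congrArg₂ _ (Kernel.id_apply x) (Kernel.comp_apply ..)
    rw [Kernel.comp_apply, hR, Measure.comp_add, Measure.comp_smul, ← add_assoc, ← G_eq]

lemma IsGreenKernel.lintegral_add {P Λ : Kernel X X} {ρ : Measure X} {F : X → ℝ≥0∞}
    (hΛ : IsGreenKernel P V Λ s ρ) (hF : Measurable F) (x : X) :
    (Λ ⊙ F) x + s x * ∫⁻ y, F y ∂ρ = F x + (P ⊙ Λ ⊙ F) x := by
  have := congrArg (fun μ ↦ ∫⁻ y, F y ∂μ) (hΛ.add_smul_eq x)
  rwa [lintegral_add_measure, lintegral_smul_measure, lintegral_add_measure,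
    lintegral_dirac' _ hF, Kernel.lintegral_comp _ _ _ hF] at this

lemma IsGreenKernel.apply_lt_top {P Λ : Kernel X X} {ρ : Measure X}
    (hΛ : IsGreenKernel P V Λ s ρ) (hV : 1 ≤ V) {x : X} (hx : V x ≠ ∞) (A : Set X) :
    Λ x A < ∞ := by
  obtain ⟨C, hC, hΛV⟩ := hΛ.exists_le
  calc Λ x A ≤ (Λ ⊙ 1) x := (measure_mono A.subset_univ).trans_eq (lintegralOp_one_apply x).symm
    _ ≤ (Λ ⊙ V) x := lintegralOp_mono hV x
    _ ≤ C * V x := hΛV x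
    _ < ∞ := by finiteness

-- In operator notation `hB` is `(I - P) B = I - Q`, written without subtraction.
lemma IsGreenKernel.mul {P G B : Kernel X X} [IsSFiniteKernel B] {ρ : Measure X} {C : ℝ≥0∞}
    (hG : IsGreenKernel Q V G s ρ) (hV : Measurable V) (hV_one : 1 ≤ V) (hV_top : ∀ x, V x ≠ ∞)
    (hC : C ≠ ∞) (hBV : B ⊙ V ≤ C • V) (hB : 1 + B * P = B + Q) :
    IsGreenKernel P V (G * B) s ρ := by
  obtain ⟨D, hD, hGV⟩ := hG.exists_le
  have := hG.isSFiniteKernel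
  refine ⟨inferInstanceAs (IsSFiniteKernel (G ∘ₖ B)), hG.measurable, hG.le_one,
    ⟨D * C, by finiteness, ?_⟩, fun x ↦ ?_⟩
  · calc (G * B) ⊙ V = B ⊙ G ⊙ V := mul_lintegralOp hV
      _ ≤ B ⊙ (D • V) := lintegralOp_mono hGV
      _ = D • B ⊙ V := lintegralOp_smul _ hV
      _ ≤ (D * C) • V := by rw [mul_smul]; gcongr
  · have resolvent_identity : G + G * B * P = G * B + G * Q := by
      calc G + G ∘ₖ B ∘ₖ P = G ∘ₖ (Kernel.id + B ∘ₖ P) := by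
            rw [Kernel.comp_add_right, Kernel.comp_id, Kernel.comp_assoc]
        _ = G ∘ₖ (B + Q) := congrArg (G ∘ₖ ·) hB
        _ = G ∘ₖ B + G ∘ₖ Q := Kernel.comp_add_right ..
    ext A _
    have green : G x A + s x * ρ A = Measure.dirac x A + (G ∘ₖ Q) x A :=
      congrArg (· A) (hG.add_smul_eq x)
    have resolvent : G x A + (G * B * P) x A = (G * B) x A + (G ∘ₖ Q) x A :=
      congrArg (· A) (DFunLike.congr_fun resolvent_identity x)
    refine (ENNReal.add_right_inj (hG.apply_lt_top hV_one (hV_top x) A).ne).1 ?_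
    calc G x A + ((G * B) x A + s x * ρ A)
        = (G * B) x A + (G x A + s x * ρ A) := add_left_comm ..
      _ = Measure.dirac x A + ((G * B) x A + (G ∘ₖ Q) x A) := by rw [green, add_left_comm]
      _ = G x A + (Measure.dirac x A + (G * B * P) x A) := by rw [← resolvent, add_left_comm]

end Green

section GeometricErgodicity

/-- The Foster–Lyapunov condition `PV ≤ l V + b 1_K` of geometric ergodicity, for a finite
Lyapunov function `V ≥ 1`. -/
structure IsGeometricDrift (P : Kernel X X) (V : X → ℝ≥0∞) (K : Set X) (l b : ℝ≥0∞) : Prop where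
  measurable : Measurable V
  one_le : 1 ≤ V
  ne_top : ∀ x, V x ≠ ∞
  measurableSet : MeasurableSet K
  rate_lt_one : l < 1
  const_ne_top : b ≠ ∞
  lintegralOp_le : P ⊙ V ≤ l • V + b • K.indicator 1

/-- The set `K` is small for `P`: on `K` the `m`-step transition probabilities dominate a fixed
nonzero multiple of the measure `ν`. -/
def IsSmallSet (P : Kernel X X) (K : Set X) (m : ℕ) (δ : ℝ≥0) (ν : Measure X) : Prop :=
  δ ≠ 0 ∧ ∀ x ∈ K, δ • ν ≤ (P ^ m) x

variable {P : Kernel X X} [IsMarkovKernel P] {V : X → ℝ≥0∞} {K : Set X} {l b : ℝ≥0∞} {m : ℕ}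
  {δ : ℝ≥0} {ν : Measure X}

instance isMarkovKernel_pow (n : ℕ) : IsMarkovKernel (P ^ n) := by
  induction n with
  | zero => exact inferInstanceAs (IsMarkovKernel Kernel.id)
  | succ n ih => exact pow_succ P n ▸ inferInstanceAs (IsMarkovKernel ((P ^ n) ∘ₖ P))

instance isFiniteKernel_resolventKernel : IsFiniteKernel (resolventKernel P) :=
  ⟨1, ENNReal.one_lt_top, fun x ↦
    (lintegralOp_one_apply x).symm.trans_le (resolventKernel_lintegralOp_one_le x)⟩

instance isFiniteKernel_pow_mul_resolventKernel :
    IsFiniteKernel (P ^ m * resolventKernel P) :=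
  inferInstanceAs (IsFiniteKernel ((P ^ m) ∘ₖ resolventKernel P))

omit [IsMarkovKernel P] in
lemma IsSmallSet.smul_le_pow_mul_resolventKernel (hK : MeasurableSet K)
    (hsmall : IsSmallSet P K m δ ν) (x : X) :
    ((δ : ℝ≥0∞) • resolventKernel P ⊙ K.indicator 1) x • ν ≤ (P ^ m * resolventKernel P) x := by
  refine Measure.le_iff.2 fun A hA ↦ ?_
  calc δ * (resolventKernel P ⊙ K.indicator 1) x * ν A
      = ∫⁻ y, δ * ν A * K.indicator 1 y ∂resolventKernel P x := by
        rw [lintegral_const_mul _ (measurable_one.indicator hK), lintegralOp, mul_right_comm]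
    _ ≤ ∫⁻ y, (P ^ m) y A ∂resolventKernel P x := lintegral_mono fun y ↦ by
        by_cases hy : y ∈ K
        · simpa [hy] using hsmall.2 y hy A
        · simp [hy]
    _ = (P ^ m * resolventKernel P) x A := (Kernel.comp_apply' _ _ _ hA).symm

lemma pow_mul_resolventKernel_lintegralOp_one_le :
    (P ^ m * resolventKernel P) ⊙ 1 ≤ 1 := by
  have pow_one_eq : (P ^ m) ⊙ (1 : X → ℝ≥0∞) = 1 :=
    funext fun x ↦ (lintegralOp_one_apply x).trans measure_univ
  rw [mul_lintegralOp measurable_one, pow_one_eq]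
  exact resolventKernel_lintegralOp_one_le

omit [IsMarkovKernel P] in
lemma IsGeometricDrift.one_lt_two_sub (hdrift : IsGeometricDrift P V K l b) : 1 < 2 - l := by
  rw [lt_tsub_iff_right, ← one_add_one_eq_two]
  exact ENNReal.add_lt_add_left ENNReal.one_ne_top hdrift.rate_lt_one

lemma IsGeometricDrift.exists_pow_mul_resolventKernel_le (hdrift : IsGeometricDrift P V K l b)
    (m : ℕ) : ∃ C : ℝ≥0∞, C ≠ ∞ ∧ (P ^ m * resolventKernel P) ⊙ V ≤ C • V := by
  have hb := hdrift.const_ne_top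
  have one_le_rate : 1 ≤ 2 - l := hdrift.one_lt_two_sub.le
  have drift_const : P ⊙ V ≤ l • V + b • 1 := hdrift.lintegralOp_le.trans <| by
    gcongr
    exact Set.indicator_le_self' fun _ _ ↦ zero_le_one
  refine ⟨1 + 2 ^ (m + 1) * b, by finiteness, ?_⟩
  calc (P ^ m * resolventKernel P) ⊙ V
      ≤ (2 - l) • (P ^ m * resolventKernel P) ⊙ V := fun x ↦ le_mul_of_one_le_left' one_le_rate
    _ ≤ V + (2 : ℝ≥0∞) ^ (m + 1) • resolventKernel P ⊙ (b • 1) :=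
        pow_mul_resolventKernel_lintegralOp_le hdrift.rate_lt_one.le hdrift.measurable
          (measurable_one.const_smul b) drift_const m
    _ ≤ V + (2 : ℝ≥0∞) ^ (m + 1) • b • V := by
        rw [lintegralOp_smul _ measurable_one]
        gcongr
        exact resolventKernel_lintegralOp_one_le.trans hdrift.one_le
    _ = (1 + 2 ^ (m + 1) * b) • V := by rw [add_smul, one_smul, mul_smul]

lemma IsGeometricDrift.exists_resolvent_eq (hdrift : IsGeometricDrift P V K l b) (m : ℕ) :
    ∃ B : Kernel X X, IsSFiniteKernel B ∧ (∃ C : ℝ≥0∞, C ≠ ∞ ∧ B ⊙ V ≤ C • V) ∧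
      1 + B * P = B + P ^ m * resolventKernel P := by
  induction m with
  | zero =>
    obtain ⟨C, hC, hCV⟩ := hdrift.exists_pow_mul_resolventKernel_le 0
    rw [pow_zero, one_mul] at hCV
    exact ⟨resolventKernel P, inferInstance, ⟨C, hC, hCV⟩, by
      rw [pow_zero, one_mul, resolventKernel_add_self]⟩
  | succ m ih =>
    obtain ⟨B, _, ⟨C, hC, hCV⟩, hB⟩ := ih
    obtain ⟨D, hD, hDV⟩ := hdrift.exists_pow_mul_resolventKernel_le m
    refine ⟨B + P ^ m * resolventKernel P, inferInstance, ⟨C + D, by finiteness, ?_⟩, ?_⟩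
    · rw [add_lintegralOp, add_smul]
      gcongr
    · have shift : P ^ m * resolventKernel P * P = P ^ (m + 1) * resolventKernel P := by
        rw [mul_assoc, ← commute_resolventKernel.eq, ← mul_assoc, pow_succ]
      calc 1 + (B + P ^ m * resolventKernel P) * P
          = 1 + (B * P + P ^ m * resolventKernel P * P) :=
            congrArg _ (Kernel.comp_add_left P B _)
        _ = B + P ^ m * resolventKernel P + P ^ (m + 1) * resolventKernel P := by
            rw [← add_assoc, hB, shift]

theorem IsGeometricDrift.exists_isGreenKernel [IsProbabilityMeasure ν]
    (hdrift : IsGeometricDrift P V K l b) (hsmall : IsSmallSet P K m δ ν) :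
    ∃ Λ s ρ, IsGreenKernel P V Λ s ρ := by
  set U := resolventKernel P
  set s : X → ℝ≥0∞ := (δ : ℝ≥0∞) • U ⊙ K.indicator 1
  have hδ : (δ : ℝ≥0∞) ≠ 0 := by simpa using hsmall.1
  have hind : Measurable (K.indicator (1 : X → ℝ≥0∞)) :=
    measurable_one.indicator hdrift.measurableSet
  have hUs : U ⊙ K.indicator 1 = (δ : ℝ≥0∞)⁻¹ • s := by
    rw [smul_smul, ENNReal.inv_mul_cancel hδ ENNReal.coe_ne_top, one_smul]
  have hb := hdrift.const_ne_top
  have hrate : 2 - l ≠ 0 := (zero_lt_one.trans hdrift.one_lt_two_sub).ne'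
  have drift : (P ^ m * U) ⊙ V
      ≤ (2 - l)⁻¹ • V + ((2 - l)⁻¹ * (2 ^ (m + 1) * b * (δ : ℝ≥0∞)⁻¹)) • s :=
    calc (P ^ m * U) ⊙ V = (2 - l)⁻¹ • (2 - l) • (P ^ m * U) ⊙ V := by
          rw [smul_smul, ENNReal.inv_mul_cancel hrate (by finiteness), one_smul]
      _ ≤ (2 - l)⁻¹ • (V + (2 : ℝ≥0∞) ^ (m + 1) • U ⊙ (b • K.indicator 1)) := by
          gcongr
          exact pow_mul_resolventKernel_lintegralOp_le hdrift.rate_lt_one.le hdrift.measurable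
            (hind.const_smul b) hdrift.lintegralOp_le m
      _ = (2 - l)⁻¹ • V + ((2 - l)⁻¹ * (2 ^ (m + 1) * b * (δ : ℝ≥0∞)⁻¹)) • s := by
          rw [lintegralOp_smul _ hind, smul_add, mul_smul, mul_smul, mul_smul, ← hUs]
  obtain ⟨G, hG⟩ := exists_isGreenKernel_of_minorization
    pow_mul_resolventKernel_lintegralOp_one_le hdrift.measurable hdrift.one_le
    ((measurable_lintegralOp hind).const_smul _)
    (hsmall.smul_le_pow_mul_resolventKernel hdrift.measurableSet)
    (ENNReal.inv_lt_one.2 hdrift.one_lt_two_sub) (by finiteness) drift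
  obtain ⟨B, _, ⟨C, hC, hBV⟩, hB⟩ := hdrift.exists_resolvent_eq m
  exact ⟨_, _, _, hG.mul hdrift.measurable hdrift.one_le hdrift.ne_top hC hBV hB⟩

omit [IsMarkovKernel P] in
lemma IsGeometricDrift.lintegralOp_le_smul (hdrift : IsGeometricDrift P V K l b) :
    P ⊙ V ≤ (l + b) • V := by
  refine hdrift.lintegralOp_le.trans ?_
  rw [add_smul]
  gcongr
  exact (Set.indicator_le_self' fun _ _ ↦ zero_le_one).trans hdrift.one_le

omit [IsMarkovKernel P] in
lemma IsGeometricDrift.add_lintegralOp_lt_top (hdrift : IsGeometricDrift P V K l b) (x : X) :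
    V x + (P ⊙ V) x < ∞ := by
  have hl := hdrift.rate_lt_one.ne_top
  have hV := hdrift.ne_top x
  have hb := hdrift.const_ne_top
  calc V x + (P ⊙ V) x ≤ V x + (l + b) * V x := by gcongr; exact hdrift.lintegralOp_le_smul x
    _ < ∞ := by finiteness

omit [MeasurableSpace X] in
lemma isBigO_top_toReal_iff {E : Type*} [NormedAddCommGroup E] {g : X → E} (hV : ∀ x, V x ≠ ∞) :
    g =O[⊤] (fun x ↦ (V x).toReal) ↔ ∃ C : ℝ≥0∞, C ≠ ∞ ∧ ∀ x, ‖g x‖ₑ ≤ C * V x := by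
  rw [Asymptotics.isBigO_top]
  have enorm_le_iff {C : ℝ≥0} (x : X) :
      ‖g x‖ₑ ≤ C * V x ↔ ‖g x‖ ≤ C * ‖(V x).toReal‖ := by
    rw [← ofReal_norm, ENNReal.ofReal_le_iff_le_toReal (by finiteness [hV x]),
      ENNReal.toReal_mul, Real.norm_of_nonneg ENNReal.toReal_nonneg, ENNReal.coe_toReal]
  refine ⟨fun ⟨c, hc⟩ ↦ ⟨c.toNNReal, ENNReal.coe_ne_top, fun x ↦ ?_⟩, fun ⟨C, hC, hgV⟩ ↦ ?_⟩
  · exact (enorm_le_iff x).2 <| (hc x).trans <| by gcongr; exact Real.le_coe_toNNReal c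
  · lift C to ℝ≥0 using hC
    exact ⟨C, fun x ↦ (enorm_le_iff x).1 (hgV x)⟩

lemma integrable_of_enorm_le_mul {E : Type*} [NormedAddCommGroup E] {g : X → E} {ρ : Measure X}
    {c : ℝ≥0∞} (hg : StronglyMeasurable g) (hc : c ≠ ∞) (hgV : ∀ x, ‖g x‖ₑ ≤ c * V x)
    (hV : Measurable V) (hρV : ∫⁻ x, V x ∂ρ < ∞) : Integrable g ρ :=
  ⟨hg.aestronglyMeasurable, (lintegral_mono hgV).trans_lt <| by
    rw [lintegral_const_mul _ hV]; exact ENNReal.mul_lt_top hc.lt_top hρV⟩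

end GeometricErgodicity

section Poisson

variable {P Λ : Kernel X X} {V s : X → ℝ≥0∞} {ρ π : Measure X} {E : Type*}
  [NormedAddCommGroup E] [NormedSpace ℝ E] {g : X → E} {c : ℝ≥0∞}

lemma lintegral_lintegralOp_of_invariant (hπ : P.Invariant π) {F : X → ℝ≥0∞} (hF : Measurable F) :
    ∫⁻ x, (P ⊙ F) x ∂π = ∫⁻ x, F x ∂π := by
  conv_rhs => rw [← hπ.def, Measure.lintegral_bind P.aemeasurable hF.aemeasurable]
  rfl

namespace IsGreenKernel

variable (hΛ : IsGreenKernel P V Λ s ρ)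
include hΛ

lemma lintegral_mul_lintegral (hV : Measurable V) (hπ : P.Invariant π) (hπV : ∫⁻ x, V x ∂π < ∞)
    {F : X → ℝ≥0∞} (hF : Measurable F) (hFV : F ≤ V) :
    (∫⁻ x, s x ∂π) * ∫⁻ y, F y ∂ρ = ∫⁻ x, F x ∂π := by
  obtain ⟨C, hC, hΛV⟩ := hΛ.exists_le
  have hΛF : ∫⁻ x, (Λ ⊙ F) x ∂π ≠ ∞ := by
    refine ((lintegral_mono fun x ↦ (lintegralOp_mono hFV x).trans (hΛV x)).trans_lt ?_).ne
    exact (lintegral_const_mul C hV).trans_lt (ENNReal.mul_lt_top hC.lt_top hπV)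
  refine (ENNReal.add_right_inj hΛF).1 ?_
  calc ∫⁻ x, (Λ ⊙ F) x ∂π + (∫⁻ x, s x ∂π) * ∫⁻ y, F y ∂ρ
      = ∫⁻ x, (F x + (P ⊙ Λ ⊙ F) x) ∂π := by
        rw [← lintegral_mul_const _ hΛ.measurable, ← lintegral_add_left (measurable_lintegralOp hF)]
        simp_rw [hΛ.lintegral_add hF]
    _ = ∫⁻ x, (Λ ⊙ F) x ∂π + ∫⁻ x, F x ∂π := by
        rw [lintegral_add_left hF, add_comm,
          lintegral_lintegralOp_of_invariant hπ (measurable_lintegralOp hF)]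

lemma lintegral_ne_zero [IsProbabilityMeasure π] (hV : Measurable V) (hV_one : 1 ≤ V)
    (hπ : P.Invariant π) (hπV : ∫⁻ x, V x ∂π < ∞) : ∫⁻ x, s x ∂π ≠ 0 := fun h ↦ by
  have := hΛ.lintegral_mul_lintegral hV hπ hπV measurable_one hV_one
  simp [h] at this

lemma integral_toReal_ne_zero [IsProbabilityMeasure π] (hV : Measurable V) (hV_one : 1 ≤ V)
    (hπ : P.Invariant π) (hπV : ∫⁻ x, V x ∂π < ∞) : ∫ x, (s x).toReal ∂π ≠ 0 := by
  have hs (x : X) : s x < ∞ := (hΛ.le_one x).trans_lt ENNReal.one_lt_top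
  have hπs : ∫⁻ x, s x ∂π ≤ 1 := (lintegral_mono hΛ.le_one).trans_eq (by simp)
  rw [integral_toReal hΛ.measurable.aemeasurable (ae_of_all _ hs), ENNReal.toReal_ne_zero]
  exact ⟨hΛ.lintegral_ne_zero hV hV_one hπ hπV, (hπs.trans_lt ENNReal.one_lt_top).ne⟩

lemma lintegral_lt_top [IsProbabilityMeasure π] (hV : Measurable V) (hV_one : 1 ≤ V)
    (hπ : P.Invariant π) (hπV : ∫⁻ x, V x ∂π < ∞) : ∫⁻ x, V x ∂ρ < ∞ := by
  by_contra! h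
  have := hΛ.lintegral_mul_lintegral hV hπ hπV hV le_rfl
  rw [top_le_iff.1 h, ENNReal.mul_top (hΛ.lintegral_ne_zero hV hV_one hπ hπV)] at this
  exact hπV.ne this.symm

lemma exists_enorm_integral_le (hV : Measurable V) (hc : c ≠ ∞) (hgV : ∀ x, ‖g x‖ₑ ≤ c * V x) :
    ∃ C : ℝ≥0∞, C ≠ ∞ ∧ ∀ x, ‖∫ y, g y ∂Λ x‖ₑ ≤ C * V x := by
  obtain ⟨C, hC, hΛV⟩ := hΛ.exists_le
  refine ⟨c * C, by finiteness, fun x ↦ ?_⟩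
  calc ‖∫ y, g y ∂Λ x‖ₑ ≤ ∫⁻ y, c * V y ∂Λ x :=
        (enorm_integral_le_lintegral_enorm g).trans (lintegral_mono hgV)
    _ = c * ∫⁻ y, V y ∂Λ x := lintegral_const_mul c hV
    _ ≤ c * C * V x := by rw [mul_assoc]; gcongr; exact hΛV x

lemma integral_add_smul_integral [CompleteSpace E] (hV : Measurable V)
    (hPV : ∀ x, V x + (P ⊙ V) x < ∞)
    (hρV : ∫⁻ x, V x ∂ρ < ∞) (hg : StronglyMeasurable g) (hc : c ≠ ∞)
    (hgV : ∀ x, ‖g x‖ₑ ≤ c * V x) (x : X) :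
    ∫ y, g y ∂Λ x + (s x).toReal • ∫ y, g y ∂ρ = g x + ∫ y, ∫ z, g z ∂Λ y ∂P x := by
  obtain ⟨C, hC, hΛV⟩ := hΛ.exists_le
  have hs : s x ≠ ∞ := ((hΛ.le_one x).trans_lt ENNReal.one_lt_top).ne
  have integrable {μ : Measure X} (hμV : ∫⁻ x, V x ∂μ < ∞) : Integrable g μ :=
    integrable_of_enorm_le_mul hg hc hgV hV hμV
  have integrable_comp : Integrable g ((Λ ∘ₖ P) x) := integrable <|
    calc ∫⁻ y, V y ∂(Λ ∘ₖ P) x = (P ⊙ Λ ⊙ V) x := Kernel.lintegral_comp _ _ _ hV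
      _ ≤ (P ⊙ (C • V)) x := lintegralOp_mono hΛV x
      _ = C * (P ⊙ V) x := congrFun (lintegralOp_smul C hV) x
      _ < ∞ := ENNReal.mul_lt_top hC.lt_top (le_add_self.trans_lt (hPV x))
  have integrable_green : Integrable g (Λ x) := integrable <|
    (hΛV x).trans_lt (ENNReal.mul_lt_top hC.lt_top (le_self_add.trans_lt (hPV x)))
  have integrable_dirac : Integrable g (Measure.dirac x) := integrable <| by
    rw [lintegral_dirac' x hV]; exact le_self_add.trans_lt (hPV x)
  have := congrArg (∫ y, g y ∂·) (hΛ.add_smul_eq x)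
  rwa [integral_add_measure integrable_green ((integrable hρV).smul_measure hs),
    integral_smul_measure, integral_add_measure integrable_dirac integrable_comp,
    integral_dirac' _ _ hg, Kernel.integral_comp integrable_comp] at this

end IsGreenKernel

lemma integrable_integral_of_invariant (hπ : P.Invariant π) {h : X → E} (hh : Integrable h π) :
    Integrable (fun x ↦ ∫ y, h y ∂P x) π := by
  have comp_const : (P ∘ₖ Kernel.const Unit π) () = π := by
    rw [← Measure.comp_eq_comp_const_apply, hπ.def]
  exact (comp_const.symm ▸ hh : Integrable h ((P ∘ₖ Kernel.const Unit π) ())).integral_comp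

lemma integral_integral_of_invariant (hπ : P.Invariant π) {h : X → E} (hh : Integrable h π) :
    ∫ x, ∫ y, h y ∂P x ∂π = ∫ x, h x ∂π := by
  have comp_const : (P ∘ₖ Kernel.const Unit π) () = π := by
    rw [← Measure.comp_eq_comp_const_apply, hπ.def]
  have := Kernel.integral_comp (comp_const.symm ▸ hh : Integrable h ((P ∘ₖ Kernel.const Unit π) ()))
  rw [comp_const] at this
  exact this.symm

theorem IsGreenKernel.exists_poisson_solution [CompleteSpace E] [IsProbabilityMeasure π]
    {K : Set X} {l b : ℝ≥0∞} (hΛ : IsGreenKernel P V Λ s ρ) (hdrift : IsGeometricDrift P V K l b)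
    (hπ : P.Invariant π) (hπV : ∫⁻ x, V x ∂π < ∞) (hg : StronglyMeasurable g)
    (hgV : g =O[⊤] fun x ↦ (V x).toReal) (hπg : ∫ x, g x ∂π = 0) :
    ∃ h : X → E, StronglyMeasurable h ∧ (h =O[⊤] fun x ↦ (V x).toReal) ∧
      ∀ x, h x = g x + ∫ y, h y ∂P x := by
  obtain ⟨c, hc, hgV⟩ := (isBigO_top_toReal_iff hdrift.ne_top).1 hgV
  have hV := hdrift.measurable
  have hρV := hΛ.lintegral_lt_top hV hdrift.one_le hπ hπV
  have := hΛ.isSFiniteKernel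
  let h x := ∫ y, g y ∂Λ x
  have hh : StronglyMeasurable h := hg.integral_kernel
  obtain ⟨C, hC, hhV⟩ := hΛ.exists_enorm_integral_le hV hc hgV
  have identity x : h x + (s x).toReal • ∫ y, g y ∂ρ = g x + ∫ y, h y ∂P x :=
    hΛ.integral_add_smul_integral hV hdrift.add_lintegralOp_lt_top hρV hg hc hgV x
  have hg_int : Integrable g π := integrable_of_enorm_le_mul hg hc hgV hV hπV
  have hh_int : Integrable h π := integrable_of_enorm_le_mul hh hC hhV hV hπV
  have hPh_int := integrable_integral_of_invariant hπ hh_int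
  have hρg : (∫ x, (s x).toReal ∂π) • ∫ y, g y ∂ρ = 0 :=
    calc (∫ x, (s x).toReal ∂π) • ∫ y, g y ∂ρ = ∫ x, (g x + ∫ y, h y ∂P x - h x) ∂π := by
          rw [← integral_smul_const]
          exact integral_congr_ae (ae_of_all _ fun x ↦ eq_sub_of_add_eq' (identity x))
      _ = 0 := by
          rw [integral_sub (by exact hg_int.add hPh_int) hh_int, integral_add hg_int hPh_int, hπg,
            integral_integral_of_invariant hπ hh_int, zero_add, sub_self]
  have hπs := hΛ.integral_toReal_ne_zero hV hdrift.one_le hπ hπV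
  refine ⟨h, hh, (isBigO_top_toReal_iff hdrift.ne_top).2 ⟨C, hC, hhV⟩, fun x ↦ ?_⟩
  simpa [(smul_eq_zero_iff_right hπs).1 hρg] using identity x

end Poisson

section MarkovChain

variable {P : Kernel X X} {V : X → ℝ≥0∞} {μ : Measure X} {Pμ : Measure (ℕ → X)}

/-- The first `k + 1` states of a path. -/
def initialSegment (k : ℕ) (ω : ℕ → X) : Fin (k + 1) → X :=
  fun i ↦ ω i

@[fun_prop]
lemma measurable_initialSegment (k : ℕ) : Measurable (initialSegment (X := X) k) :=
  measurable_pi_lambda _ fun _ ↦ measurable_pi_apply _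

namespace IsMarkovChainLaw

variable (hPμ : IsMarkovChainLaw μ P Pμ)
include hPμ

lemma lintegral_zero {F : X → ℝ≥0∞} (hF : Measurable F) :
    ∫⁻ ω, F (ω 0) ∂Pμ = ∫⁻ x, F x ∂μ := by
  rw [← hPμ.2.1, lintegral_map hF (measurable_pi_apply 0)]

lemma lintegral_succ {F : X → ℝ≥0∞} (hF : Measurable F) (n : ℕ) :
    ∫⁻ ω, F (ω (n + 1)) ∂Pμ = ∫⁻ ω, (P ⊙ F) (ω n) ∂Pμ := by
  simpa [lintegralOp] using hPμ.2.2 n 1 F measurable_one hF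

lemma map_initialSegment_prodMk [IsMarkovKernel P] (k : ℕ) :
    Pμ.map (fun ω ↦ (initialSegment k ω, ω (k + 1)))
      = Pμ.map (initialSegment k) ⊗ₘ P.comap (· (Fin.last k)) (measurable_pi_apply _) := by
  have := hPμ.1
  have hpair : Measurable fun ω : ℕ → X ↦ (initialSegment k ω, ω (k + 1)) := by fun_prop
  have := Measure.isProbabilityMeasure_map (μ := Pμ) (measurable_initialSegment k).aemeasurable
  have := Measure.isProbabilityMeasure_map (μ := Pμ) hpair.aemeasurable
  refine Measure.ext_prod fun {s t} hs ht ↦ ?_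
  calc Pμ.map (fun ω ↦ (initialSegment k ω, ω (k + 1))) (s ×ˢ t)
      = ∫⁻ ω, s.indicator 1 (initialSegment k ω) * t.indicator 1 (ω (k + 1)) ∂Pμ := by
        rw [← lintegral_indicator_one (hs.prod ht), lintegral_map
          (measurable_one.indicator (hs.prod ht)) hpair]
        exact lintegral_congr fun ω ↦ Set.indicator_prod_one
    _ = ∫⁻ ω, s.indicator 1 (initialSegment k ω) * P (ω k) t ∂Pμ := by
        simp_rw [← lintegral_indicator_one ht]
        exact hPμ.2.2 k _ _ (measurable_one.indicator hs) (measurable_one.indicator ht)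
    _ = ∫⁻ v in s, P (v (Fin.last k)) t ∂Pμ.map (initialSegment k) := by
        rw [setLIntegral_map hs (by exact (P.measurable_coe ht).comp (measurable_pi_apply _))
          (measurable_initialSegment k), ← lintegral_indicator (measurable_initialSegment k hs)]
        refine lintegral_congr fun ω ↦ ?_
        by_cases hω : initialSegment k ω ∈ s <;> simp [hω, initialSegment]
    _ = _ := by rw [Measure.compProd_apply_prod hs ht]; rfl

lemma integral_mul_succ [IsMarkovKernel P] {k : ℕ} {w : (Fin (k + 1) → X) → ℂ} {F : X → X → ℂ}
    (hw : Measurable w) (hF : Measurable (Function.uncurry F))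
    (hint : Integrable (fun ω ↦ w (initialSegment k ω) * F (ω k) (ω (k + 1))) Pμ) :
    ∫ ω, w (initialSegment k ω) * F (ω k) (ω (k + 1)) ∂Pμ
      = ∫ ω, w (initialSegment k ω) * ∫ y, F (ω k) y ∂P (ω k) ∂Pμ := by
  have := hPμ.1
  have := Measure.isProbabilityMeasure_map (μ := Pμ) (measurable_initialSegment k).aemeasurable
  let G : (Fin (k + 1) → X) × X → ℂ := fun q ↦ w q.1 * F (q.1 (Fin.last k)) q.2
  have hG : Measurable G := by
    have : Measurable fun q : (Fin (k + 1) → X) × X ↦ F (q.1 (Fin.last k)) q.2 :=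
      hF.comp (by fun_prop : Measurable fun q : (Fin (k + 1) → X) × X ↦ (q.1 (Fin.last k), q.2))
    fun_prop
  have hpair : Measurable fun ω : ℕ → X ↦ (initialSegment k ω, ω (k + 1)) := by fun_prop
  have hGint := (integrable_map_measure hG.aestronglyMeasurable hpair.aemeasurable).2 hint
  rw [hPμ.map_initialSegment_prodMk] at hGint
  have hGP : StronglyMeasurable fun v ↦ ∫ y, G (v, y) ∂P (v (Fin.last k)) :=
    hG.stronglyMeasurable.integral_kernel_prod_right'
      (κ := P.comap (fun v : Fin (k + 1) → X ↦ v (Fin.last k)) (measurable_pi_apply _))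
  calc ∫ ω, G (initialSegment k ω, ω (k + 1)) ∂Pμ
      = ∫ v, ∫ y, G (v, y) ∂P (v (Fin.last k)) ∂Pμ.map (initialSegment k) := by
        rw [← integral_map hpair.aemeasurable hG.aestronglyMeasurable,
          hPμ.map_initialSegment_prodMk, Measure.integral_compProd hGint]
        rfl
    _ = ∫ ω, ∫ y, G (initialSegment k ω, y) ∂P (ω k) ∂Pμ :=
        integral_map (measurable_initialSegment k).aemeasurable hGP.aestronglyMeasurable
    _ = ∫ ω, w (initialSegment k ω) * ∫ y, F (ω k) y ∂P (ω k) ∂Pμ := by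
        simp only [G, integral_const_mul]
        rfl

end IsMarkovChainLaw

lemma IsGeometricDrift.exists_lintegral_le {K : Set X} {l b : ℝ≥0∞}
    (hdrift : IsGeometricDrift P V K l b) (hPμ : IsMarkovChainLaw μ P Pμ)
    (hμV : ∫⁻ x, V x ∂μ < ∞) :
    ∃ B : ℝ≥0∞, B ≠ ∞ ∧ ∀ k, ∫⁻ ω, V (ω k) ∂Pμ ≤ B := by
  have := hPμ.1
  have hb := hdrift.const_ne_top
  have hl := hdrift.rate_lt_one
  have gap : 1 - l ≠ 0 := (tsub_pos_of_lt hl).ne'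
  have ind_le : K.indicator 1 ≤ (1 : X → ℝ≥0∞) := Set.indicator_le_self' fun _ _ ↦ zero_le_one
  set B := ∫⁻ x, V x ∂μ + b * (1 - l)⁻¹
  refine ⟨B, by finiteness, fun k ↦ ?_⟩
  induction k with
  | zero => exact (hPμ.lintegral_zero hdrift.measurable).trans_le le_self_add
  | succ k ih =>
    calc ∫⁻ ω, V (ω (k + 1)) ∂Pμ ≤ ∫⁻ ω, (l * V (ω k) + b * 1) ∂Pμ := by
          rw [hPμ.lintegral_succ hdrift.measurable]
          exact lintegral_mono fun ω ↦ (hdrift.lintegralOp_le _).trans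
            (add_le_add le_rfl (mul_le_mul_right (ind_le _) b))
      _ = l * ∫⁻ ω, V (ω k) ∂Pμ + b := by
          have hVk : Measurable fun ω : ℕ → X ↦ V (ω k) :=
            hdrift.measurable.comp (measurable_pi_apply k)
          rw [lintegral_add_right _ measurable_const, lintegral_const_mul _ hVk]
          simp
      _ ≤ l * B + b := by gcongr
      _ = l * ∫⁻ x, V x ∂μ + (l + (1 - l)) * (b * (1 - l)⁻¹) := by
          rw [mul_add, add_mul, mul_left_comm (1 - l), ENNReal.mul_inv_cancel gap (by finiteness),
            mul_one, add_assoc]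
      _ ≤ B := by
          rw [add_tsub_cancel_of_le hl.le, one_mul]
          exact add_le_add (mul_le_of_le_one_left' hl.le) le_rfl

section Cesaro

variable {Λ : Kernel X X} {s : X → ℝ≥0∞} {ρ : Measure X}

lemma IsGreenKernel.sum_lintegral_le (hΛ : IsGreenKernel P V Λ s ρ)
    (hPμ : IsMarkovChainLaw μ P Pμ) {F : X → ℝ≥0∞} (hF : Measurable F) (n : ℕ) :
    ∫⁻ ω, (Λ ⊙ F) (ω n) ∂Pμ + ∑ k ∈ Finset.range n, ∫⁻ ω, F (ω k) ∂Pμ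
      ≤ ∫⁻ x, (Λ ⊙ F) x ∂μ + n * ∫⁻ x, F x ∂ρ := by
  have := hPμ.1
  have hΛF : Measurable (Λ ⊙ F) := measurable_lintegralOp hF
  induction n with
  | zero => simp [hPμ.lintegral_zero hΛF]
  | succ n ih =>
    have step : ∫⁻ ω, (Λ ⊙ F) (ω (n + 1)) ∂Pμ + ∫⁻ ω, F (ω n) ∂Pμ
        ≤ ∫⁻ ω, (Λ ⊙ F) (ω n) ∂Pμ + ∫⁻ x, F x ∂ρ :=
      calc ∫⁻ ω, (Λ ⊙ F) (ω (n + 1)) ∂Pμ + ∫⁻ ω, F (ω n) ∂Pμ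
          = ∫⁻ ω, ((Λ ⊙ F) (ω n) + s (ω n) * ∫⁻ x, F x ∂ρ) ∂Pμ := by
            rw [hPμ.lintegral_succ hΛF, ← lintegral_add_right _ (by fun_prop)]
            exact lintegral_congr fun ω ↦ (add_comm _ _).trans (hΛ.lintegral_add hF _).symm
        _ ≤ ∫⁻ ω, ((Λ ⊙ F) (ω n) + ∫⁻ x, F x ∂ρ) ∂Pμ := by
            gcongr with ω; exact mul_le_of_le_one_left' (hΛ.le_one _)
        _ = ∫⁻ ω, (Λ ⊙ F) (ω n) ∂Pμ + ∫⁻ x, F x ∂ρ := by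
            rw [lintegral_add_right _ measurable_const]; simp
    calc ∫⁻ ω, (Λ ⊙ F) (ω (n + 1)) ∂Pμ + ∑ k ∈ Finset.range (n + 1), ∫⁻ ω, F (ω k) ∂Pμ
        ≤ ∫⁻ ω, (Λ ⊙ F) (ω n) ∂Pμ + ∫⁻ x, F x ∂ρ + ∑ k ∈ Finset.range n, ∫⁻ ω, F (ω k) ∂Pμ := by
          rw [Finset.sum_range_succ, add_comm (∑ k ∈ _, _), ← add_assoc]; gcongr
      _ ≤ ∫⁻ x, (Λ ⊙ F) x ∂μ + n * ∫⁻ x, F x ∂ρ + ∫⁻ x, F x ∂ρ := by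
          rw [add_right_comm]; gcongr
      _ = ∫⁻ x, (Λ ⊙ F) x ∂μ + (n + 1 : ℕ) * ∫⁻ x, F x ∂ρ := by push_cast; ring

theorem IsGreenKernel.tendsto_average_zero (hΛ : IsGreenKernel P V Λ s ρ)
    (hPμ : IsMarkovChainLaw μ P Pμ) (hV : Measurable V) (hμV : ∫⁻ x, V x ∂μ < ∞)
    (hρV : ∫⁻ x, V x ∂ρ < ∞) {F : ℕ → X → ℝ≥0∞} (hF : ∀ n, Measurable (F n)) {c : ℝ≥0∞}
    (hc : c ≠ ∞) (hFV : ∀ n, F n ≤ c • V) (hlim : ∀ x, Tendsto (fun n ↦ F n x) atTop (𝓝 0)) :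
    Tendsto (fun n : ℕ ↦ (n : ℝ≥0∞)⁻¹ * ∑ k ∈ Finset.range n, ∫⁻ ω, F n (ω k) ∂Pμ)
      atTop (𝓝 0) := by
  obtain ⟨C, hC, hΛV⟩ := hΛ.exists_le
  have hΛF n : ∫⁻ x, (Λ ⊙ F n) x ∂μ ≤ c * C * ∫⁻ x, V x ∂μ :=
    calc ∫⁻ x, (Λ ⊙ F n) x ∂μ ≤ ∫⁻ x, c * (C * V x) ∂μ := lintegral_mono fun x ↦
          (lintegralOp_mono (hFV n) x).trans <|
            (congrFun (lintegralOp_smul c hV) x).trans_le (mul_le_mul_right (hΛV x) c)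
      _ = c * C * ∫⁻ x, V x ∂μ := by
          simp_rw [← mul_assoc]; exact lintegral_const_mul _ hV
  have hρF : Tendsto (fun n ↦ ∫⁻ x, F n x ∂ρ) atTop (𝓝 0) := by
    have hcV : ∫⁻ x, (c • V) x ∂ρ ≠ ∞ :=
      (lintegral_const_mul c hV).trans_ne (ENNReal.mul_lt_top hc.lt_top hρV).ne
    simpa using tendsto_lintegral_of_dominated_convergence (c • V) hF
      (fun n ↦ ae_of_all _ (hFV n)) hcV (ae_of_all _ hlim)
  have bound (n : ℕ) : (n : ℝ≥0∞)⁻¹ * ∑ k ∈ Finset.range n, ∫⁻ ω, F n (ω k) ∂Pμ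
      ≤ (n : ℝ≥0∞)⁻¹ * (c * C * ∫⁻ x, V x ∂μ) + ∫⁻ x, F n x ∂ρ :=
    calc (n : ℝ≥0∞)⁻¹ * ∑ k ∈ Finset.range n, ∫⁻ ω, F n (ω k) ∂Pμ
        ≤ (n : ℝ≥0∞)⁻¹ * (c * C * ∫⁻ x, V x ∂μ + n * ∫⁻ x, F n x ∂ρ) := by
          gcongr
          exact le_add_self.trans <| (hΛ.sum_lintegral_le hPμ (hF n) n).trans <| by
            gcongr; exact hΛF n
      _ ≤ (n : ℝ≥0∞)⁻¹ * (c * C * ∫⁻ x, V x ∂μ) + ∫⁻ x, F n x ∂ρ := by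
          rw [mul_add, ← mul_assoc _ (n : ℝ≥0∞)]
          gcongr
          exact mul_le_of_le_one_left' (ENNReal.inv_mul_le_one _)
  refine tendsto_of_tendsto_of_tendsto_of_le_of_le tendsto_const_nhds ?_ (fun _ ↦ zero_le) bound
  simpa using (ENNReal.Tendsto.mul_const ENNReal.tendsto_inv_nat_nhds_zero
    (.inr (by finiteness))).add hρF

end Cesaro

end MarkovChain

section Exponential

lemma norm_exp_sub_one_le_of_re_nonpos {z : ℂ} (hz : z.re ≤ 0) : ‖Complex.exp z - 1‖ ≤ ‖z‖ := by
  have := (convex_halfSpace_re_le 0).norm_image_sub_le_of_norm_hasDerivWithin_le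
    (fun w _ ↦ (Complex.hasDerivAt_exp w).hasDerivWithinAt) (C := 1)
    (fun w hw ↦ by simpa [Complex.norm_exp] using hw) (show (0 : ℂ).re ≤ 0 by simp) hz
  simpa using this

lemma norm_exp_sub_one_sub_le_of_re_nonpos {z : ℂ} (hz : z.re ≤ 0) :
    ‖Complex.exp z - 1 - z‖ ≤ ‖z‖ ^ 2 := by
  have hconvex : Convex ℝ ({w : ℂ | w.re ≤ 0} ∩ Metric.closedBall 0 ‖z‖) :=
    (convex_halfSpace_re_le 0).inter (convex_closedBall _ _)
  have := hconvex.norm_image_sub_le_of_norm_hasDerivWithin_le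
    (f := fun w ↦ Complex.exp w - 1 - w) (C := ‖z‖)
    (fun w _ ↦ (((Complex.hasDerivAt_exp w).sub_const 1).sub (hasDerivAt_id w)).hasDerivWithinAt)
    (fun w hw ↦ (norm_exp_sub_one_le_of_re_nonpos hw.1).trans (by simpa using hw.2))
    (x := 0) (by simp) (y := z) ⟨hz, by simp⟩
  simpa [sq] using this

lemma tendsto_exp_sq_mul_sub_one_div (z : ℂ) :
    Tendsto (fun a : ℝ ↦ (Complex.exp (a ^ 2 * z) - 1) / a ^ 2) (𝓝[≠] 0) (𝓝 z) := by
  have hderiv : HasDerivAt (fun w : ℂ ↦ Complex.exp (w * z)) z 0 := by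
    simpa using ((hasDerivAt_id (0 : ℂ)).mul_const z).cexp
  have hsq : Tendsto (fun a : ℝ ↦ (a : ℂ) ^ 2) (𝓝[≠] 0) (𝓝[≠] 0) := by
    refine tendsto_nhdsWithin_iff.2 ⟨?_, ?_⟩
    · exact ((by fun_prop : Continuous fun a : ℝ ↦ (a : ℂ) ^ 2).tendsto' 0 0 (by simp)).mono_left
        nhdsWithin_le_nhds
    · filter_upwards [self_mem_nhdsWithin] with a ha
      simpa using ha
  refine (hderiv.tendsto_slope.comp hsq).congr fun a ↦ ?_
  simp [slope_def_field]

end Exponential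

section CharacteristicFunction

variable {ρ : Measure X} {ξ : X → ℝ}

lemma charFun_map_eq_integral_exp (hξ : AEMeasurable ξ ρ) (a : ℝ) :
    charFun (ρ.map ξ) a = ∫ y, Complex.exp (↑(a * ξ y) * Complex.I) ∂ρ := by
  rw [charFun_apply_real, integral_map hξ (by fun_prop)]
  simp

lemma memLp_id_map_two (hξ : MemLp ξ 2 ρ) : MemLp id 2 (ρ.map ξ) :=
  (memLp_map_measure_iff aestronglyMeasurable_id hξ.aemeasurable).2 hξ

variable [IsProbabilityMeasure ρ]

lemma integrable_exp_ofReal_mul_I (hξ : AEMeasurable ξ ρ) :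
    Integrable (fun y ↦ Complex.exp (ξ y * Complex.I)) ρ :=
  .of_bound (AEMeasurable.aestronglyMeasurable (by fun_prop)) 1
    (ae_of_all _ fun y ↦ (Complex.norm_exp_ofReal_mul_I _).le)

lemma norm_charFun_map_sub_one_le (hξ : MemLp ξ 2 ρ) (hξ0 : ∫ y, ξ y ∂ρ = 0) (a : ℝ) :
    ‖charFun (ρ.map ξ) a - 1‖ ≤ a ^ 2 * ∫ y, ξ y ^ 2 ∂ρ := by
  have hlin : Integrable (fun y ↦ ((a * ξ y : ℝ) : ℂ) * Complex.I) ρ :=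
    (((hξ.integrable one_le_two).const_mul a).ofReal (𝕜 := ℂ)).mul_const _
  have hlin0 : ∫ y, ((a * ξ y : ℝ) : ℂ) * Complex.I ∂ρ = 0 := by
    rw [integral_mul_const, integral_complex_ofReal, integral_const_mul, hξ0]; simp
  have hexp := integrable_exp_ofReal_mul_I (hξ.aemeasurable.const_mul a)
  have hsplit : charFun (ρ.map ξ) a - 1
      = ∫ y, (Complex.exp (↑(a * ξ y) * Complex.I) - (1 + ↑(a * ξ y) * Complex.I)) ∂ρ := by
    have haff : Integrable (fun y ↦ 1 + ((a * ξ y : ℝ) : ℂ) * Complex.I) ρ :=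
      (integrable_const _).add hlin
    rw [integral_sub hexp haff, integral_add (integrable_const _) hlin, hlin0,
      charFun_map_eq_integral_exp hξ.aemeasurable]
    simp
  rw [hsplit, ← integral_const_mul]
  refine norm_integral_le_of_norm_le (hξ.integrable_sq.const_mul _) (ae_of_all _ fun y ↦ ?_)
  rw [← sub_sub]
  refine (norm_exp_sub_one_sub_le_of_re_nonpos (by simp)).trans_eq ?_
  rw [norm_mul, Complex.norm_I, mul_one, Complex.norm_real, Real.norm_eq_abs, sq_abs, mul_pow]

lemma tendsto_charFun_map_sub_one_div_sq (hξ : MemLp ξ 2 ρ) (hξ0 : ∫ y, ξ y ∂ρ = 0) :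
    Tendsto (fun a : ℝ ↦ (charFun (ρ.map ξ) a - 1) / (a : ℂ) ^ 2) (𝓝[≠] 0)
      (𝓝 (-((∫ y, ξ y ^ 2 ∂ρ : ℝ) : ℂ) / 2)) := by
  have := Measure.isProbabilityMeasure_map (μ := ρ) hξ.aemeasurable
  have htaylor := taylor_tendsto (n := 2) convex_univ (Set.mem_univ (0 : ℝ))
    (contDiff_charFun (memLp_id_map_two hξ)).contDiffOn
  simp only [taylorWithinEval_charFun_two_zero hξ.aemeasurable (memLp_id_map_two hξ), hξ0,
    nhdsWithin_univ, sub_zero] at htaylor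
  rw [← zero_add (-_ / 2 : ℂ)]
  refine ((htaylor.mono_left nhdsWithin_le_nhds).add_const _).congr' ?_
  filter_upwards [self_mem_nhdsWithin] with a ha
  have ha' : (a : ℂ) ≠ 0 := Complex.ofReal_ne_zero.2 ha
  simp only [Complex.real_smul, Pi.pow_apply]
  push_cast
  field_simp
  ring

end CharacteristicFunction

section EigenfunctionDefect

variable {ρ : Measure X} [IsProbabilityMeasure ρ] {ξ : X → ℝ} {u : ℝ} {h : X → ℂ} {γ H : ℂ}

/-- The amount by which `1 + a² h` fails to be an eigenfunction, with eigenvalue `exp (a² γ)`, of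
the one-step operator `f ↦ ∫ exp (i (a ξ + a² u)) f dρ`, at a point where `h` takes the value `H`
and from which the chain moves according to `ρ`. -/
def eigenfunctionDefect (ρ : Measure X) (ξ : X → ℝ) (u : ℝ) (h : X → ℂ) (γ H : ℂ) (a : ℝ) : ℂ :=
  ∫ y, Complex.exp (↑(a * ξ y + a ^ 2 * u) * Complex.I) * (1 + a ^ 2 * h y) ∂ρ
    - Complex.exp (a ^ 2 * γ) * (1 + a ^ 2 * H)

lemma eigenfunctionDefect_eq (hξ : AEMeasurable ξ ρ) (hh : Integrable h ρ) (a : ℝ) :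
    eigenfunctionDefect ρ ξ u h γ H a
      = Complex.exp (a ^ 2 * (u * Complex.I)) * (charFun (ρ.map ξ) a - 1)
        + (Complex.exp (a ^ 2 * (u * Complex.I)) - 1) - (Complex.exp (a ^ 2 * γ) - 1)
        + a ^ 2 * (Complex.exp (a ^ 2 * (u * Complex.I))
            * ∫ y, Complex.exp (↑(a * ξ y) * Complex.I) * h y ∂ρ
          - Complex.exp (a ^ 2 * γ) * H) := by
  have hexp := integrable_exp_ofReal_mul_I (hξ.const_mul a)
  have hexph : Integrable (fun y ↦ Complex.exp (↑(a * ξ y) * Complex.I) * h y) ρ :=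
    hh.bdd_mul (c := 1) hexp.1 (ae_of_all _ fun y ↦ (Complex.norm_exp_ofReal_mul_I _).le)
  have hsplit y : Complex.exp (↑(a * ξ y + a ^ 2 * u) * Complex.I) * (1 + a ^ 2 * h y)
      = Complex.exp (a ^ 2 * (u * Complex.I)) * (Complex.exp (↑(a * ξ y) * Complex.I)
        + a ^ 2 * (Complex.exp (↑(a * ξ y) * Complex.I) * h y)) := by
    rw [Complex.ofReal_add, add_mul, Complex.exp_add]
    push_cast
    ring_nf
  simp_rw [eigenfunctionDefect, hsplit]
  rw [integral_const_mul, integral_add hexp (hexph.const_mul _), integral_const_mul,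
    charFun_map_eq_integral_exp hξ]
  ring

lemma norm_eigenfunctionDefect_le (hξ : MemLp ξ 2 ρ) (hξ0 : ∫ y, ξ y ∂ρ = 0)
    (hh : Integrable h ρ) (hγ : γ.re ≤ 0) (a : ℝ) :
    ‖eigenfunctionDefect ρ ξ u h γ H a‖
      ≤ a ^ 2 * (∫ y, ξ y ^ 2 ∂ρ + ‖u‖ + ‖γ‖ + (∫ y, ‖h y‖ ∂ρ + ‖H‖)) := by
  have hsq : ‖(a : ℂ) ^ 2‖ = a ^ 2 := by simp
  have hre (z : ℂ) : ((a : ℂ) ^ 2 * z).re = a ^ 2 * z.re := by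
    rw [← Complex.ofReal_pow, Complex.re_ofReal_mul]
  have hexp {z : ℂ} (hz : z.re ≤ 0) : ‖Complex.exp (a ^ 2 * z)‖ ≤ 1 := by
    rw [Complex.norm_exp, Real.exp_le_one_iff, hre]
    exact mul_nonpos_of_nonneg_of_nonpos (sq_nonneg a) hz
  have hexp_sub {z : ℂ} (hz : z.re ≤ 0) : ‖Complex.exp (a ^ 2 * z) - 1‖ ≤ a ^ 2 * ‖z‖ := by
    rw [← hsq, ← norm_mul]
    refine norm_exp_sub_one_le_of_re_nonpos ?_
    rw [hre]; exact mul_nonpos_of_nonneg_of_nonpos (sq_nonneg a) hz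
  have hu : (u * Complex.I).re ≤ 0 := by simp
  have hu_norm : ‖u * Complex.I‖ = ‖u‖ := by simp
  have hξh : ‖∫ y, Complex.exp (↑(a * ξ y) * Complex.I) * h y ∂ρ‖ ≤ ∫ y, ‖h y‖ ∂ρ :=
    norm_integral_le_of_norm_le hh.norm <| ae_of_all _ fun y ↦ by
      rw [norm_mul, Complex.norm_exp_ofReal_mul_I, one_mul]
  rw [eigenfunctionDefect_eq hξ.aemeasurable hh]
  refine (norm_add_le_of_le (norm_sub_le_of_le (norm_add_le_of_le ?_ (hexp_sub hu)) (hexp_sub hγ))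
    ((norm_mul_le _ _).trans (mul_le_mul hsq.le ?_ (norm_nonneg _) (sq_nonneg a)))).trans_eq
    (b := a ^ 2 * ∫ y, ξ y ^ 2 ∂ρ + a ^ 2 * ‖u * Complex.I‖ + a ^ 2 * ‖γ‖
      + a ^ 2 * (∫ y, ‖h y‖ ∂ρ + ‖H‖)) (by rw [hu_norm]; ring)
  · exact (norm_mul_le _ _).trans <| (mul_le_of_le_one_left (norm_nonneg _) (hexp hu)).trans
      (norm_charFun_map_sub_one_le hξ hξ0 a)
  · refine norm_sub_le_of_le ((norm_mul_le _ _).trans ?_) ((norm_mul_le _ _).trans ?_)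
    · exact (mul_le_of_le_one_left (norm_nonneg _) (hexp hu)).trans hξh
    · exact mul_le_of_le_one_left (norm_nonneg _) (hexp hγ)

lemma tendsto_eigenfunctionDefect_div_sq (hξ : MemLp ξ 2 ρ) (hξ0 : ∫ y, ξ y ∂ρ = 0)
    (hh : Integrable h ρ)
    (hpoisson : H = -((∫ y, ξ y ^ 2 ∂ρ : ℝ) : ℂ) / 2 + u * Complex.I - γ + ∫ y, h y ∂ρ) :
    Tendsto (fun a : ℝ ↦ eigenfunctionDefect ρ ξ u h γ H a / (a : ℂ) ^ 2) (𝓝[≠] 0) (𝓝 0) := by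
  have hexp_lim (z : ℂ) : Tendsto (fun a : ℝ ↦ Complex.exp (a ^ 2 * z)) (𝓝[≠] 0) (𝓝 1) :=
    ((by fun_prop : Continuous fun a : ℝ ↦ Complex.exp (a ^ 2 * z)).tendsto' 0 1
      (by simp)).mono_left nhdsWithin_le_nhds
  have hξh_lim : Tendsto (fun a : ℝ ↦ ∫ y, Complex.exp (↑(a * ξ y) * Complex.I) * h y ∂ρ)
      (𝓝[≠] 0) (𝓝 (∫ y, h y ∂ρ)) := by
    refine tendsto_integral_filter_of_dominated_convergence (fun y ↦ ‖h y‖) ?_ ?_ hh.norm ?_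
    · exact .of_forall fun a ↦
        (integrable_exp_ofReal_mul_I (hξ.aemeasurable.const_mul a)).1.mul hh.1
    · exact .of_forall fun a ↦ ae_of_all _ fun y ↦ by
        rw [norm_mul, Complex.norm_exp_ofReal_mul_I, one_mul]
    · refine ae_of_all _ fun y ↦ Tendsto.mono_left ?_ nhdsWithin_le_nhds
      exact (by fun_prop : Continuous fun a : ℝ ↦
        Complex.exp (↑(a * ξ y) * Complex.I) * h y).tendsto' _ _ (by simp)
  have hlim := ((((hexp_lim (u * Complex.I)).mul (tendsto_charFun_map_sub_one_div_sq hξ hξ0)).add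
    (tendsto_exp_sq_mul_sub_one_div (u * Complex.I))).sub (tendsto_exp_sq_mul_sub_one_div γ)).add
    (((hexp_lim (u * Complex.I)).mul hξh_lim).sub ((hexp_lim γ).mul_const H))
  rw [show (0 : ℂ) = 1 * (-((∫ y, ξ y ^ 2 ∂ρ : ℝ) : ℂ) / 2) + u * Complex.I - γ
    + (1 * ∫ y, h y ∂ρ - 1 * H) by rw [hpoisson]; ring]
  refine hlim.congr' ?_
  filter_upwards [self_mem_nhdsWithin] with a ha
  have ha' : (a : ℂ) ≠ 0 := Complex.ofReal_ne_zero.2 ha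
  rw [eigenfunctionDefect_eq hξ.aemeasurable hh]
  field_simp

end EigenfunctionDefect

section PathProduct

lemma enorm_mul_le_of_norm_le_one {z w : ℂ} (hz : ‖z‖ ≤ 1) : ‖z * w‖ₑ ≤ ‖w‖ₑ :=
  enorm_le_iff_norm_le.2 <| (norm_mul_le z w).trans (mul_le_of_le_one_left (norm_nonneg w) hz)

/-- The multiplicative functional `∏_{k < n} e(ω_k, ω_{k+1})` of a path `ω`. -/
def pathProd {X : Type*} (e : X → X → ℂ) (n : ℕ) (ω : ℕ → X) : ℂ :=
  ∏ k ∈ Finset.range n, e (ω k) (ω (k + 1))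

lemma pathProd_succ {X : Type*} (e : X → X → ℂ) (n : ℕ) (ω : ℕ → X) :
    pathProd e (n + 1) ω = pathProd e n ω * e (ω n) (ω (n + 1)) :=
  Finset.prod_range_succ ..

lemma norm_pathProd_le_one {X : Type*} {e : X → X → ℂ} (he1 : ∀ x y, ‖e x y‖ ≤ 1) (n : ℕ)
    (ω : ℕ → X) : ‖pathProd e n ω‖ ≤ 1 := by
  rw [pathProd, norm_prod]
  exact Finset.prod_le_one (fun _ _ ↦ norm_nonneg _) fun _ _ ↦ he1 _ _

variable {P : Kernel X X} {μ : Measure X} {Pμ : Measure (ℕ → X)} {e : X → X → ℂ} {H : X → ℂ}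

lemma exists_measurable_pathProd_eq (he : Measurable (Function.uncurry e)) (n : ℕ) :
    ∃ w : (Fin (n + 1) → X) → ℂ, Measurable w ∧ ∀ ω, pathProd e n ω = w (initialSegment n ω) := by
  refine ⟨fun v ↦ ∏ k : Fin n, e (v k.castSucc) (v k.succ),
    Finset.measurable_fun_prod _ fun k _ ↦ ?_, fun ω ↦ ?_⟩
  · exact he.comp (by fun_prop : Measurable fun v : Fin (n + 1) → X ↦ (v k.castSucc, v k.succ))
  · simp [pathProd, initialSegment, Finset.prod_range]

lemma measurable_pathProd (he : Measurable (Function.uncurry e)) (n : ℕ) :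
    Measurable (pathProd e n) := by
  obtain ⟨w, hw, hew⟩ := exists_measurable_pathProd_eq he n
  rw [funext hew]
  fun_prop

lemma integrable_pathProd_mul (he : Measurable (Function.uncurry e)) (he1 : ∀ x y, ‖e x y‖ ≤ 1)
    {Z : (ℕ → X) → ℂ} (hZ : Integrable Z Pμ) (n : ℕ) :
    Integrable (fun ω ↦ pathProd e n ω * Z ω) Pμ :=
  hZ.bdd_mul (measurable_pathProd he n).aestronglyMeasurable
    (ae_of_all _ fun ω ↦ norm_pathProd_le_one he1 n ω)

lemma enorm_integral_pathProd_mul_le (he1 : ∀ x y, ‖e x y‖ ≤ 1) (Z : (ℕ → X) → ℂ) (n : ℕ) :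
    ‖∫ ω, pathProd e n ω * Z ω ∂Pμ‖ₑ ≤ ∫⁻ ω, ‖Z ω‖ₑ ∂Pμ := by
  refine (enorm_integral_le_lintegral_enorm _).trans (lintegral_mono fun ω ↦ ?_)
  exact enorm_mul_le_of_norm_le_one (norm_pathProd_le_one he1 n ω)

lemma IsMarkovChainLaw.integral_pathProd_succ_mul [IsMarkovKernel P]
    (hPμ : IsMarkovChainLaw μ P Pμ) (he : Measurable (Function.uncurry e))
    (he1 : ∀ x y, ‖e x y‖ ≤ 1) (hH : Measurable H) {n : ℕ}
    (hint : Integrable (fun ω ↦ H (ω (n + 1))) Pμ) :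
    ∫ ω, pathProd e (n + 1) ω * H (ω (n + 1)) ∂Pμ
      = ∫ ω, pathProd e n ω * ∫ y, e (ω n) y * H y ∂P (ω n) ∂Pμ := by
  obtain ⟨w, hw, hew⟩ := exists_measurable_pathProd_eq he n
  have hint' := integrable_pathProd_mul he he1 hint (n + 1)
  simp only [pathProd_succ, mul_assoc, hew] at hint' ⊢
  exact hPμ.integral_mul_succ (F := fun x y ↦ e x y * H y) hw
    (he.mul (hH.comp measurable_snd)) hint'

lemma IsMarkovChainLaw.integrable_integral_mul [IsMarkovKernel P]
    (hPμ : IsMarkovChainLaw μ P Pμ) (he : Measurable (Function.uncurry e))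
    (he1 : ∀ x y, ‖e x y‖ ≤ 1) (hH : Measurable H) {n : ℕ}
    (hint : Integrable (fun ω ↦ H (ω (n + 1))) Pμ) :
    Integrable (fun ω ↦ ∫ y, e (ω n) y * H y ∂P (ω n)) Pμ := by
  have hmeas : Measurable fun x ↦ ∫ y, e x y * H y ∂P x :=
    (he.mul (hH.comp measurable_snd)).stronglyMeasurable.integral_kernel_prod_right'.measurable
  refine ⟨(hmeas.comp (measurable_pi_apply n)).aestronglyMeasurable, ?_⟩
  calc ∫⁻ ω, ‖∫ y, e (ω n) y * H y ∂P (ω n)‖ₑ ∂Pμ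
      ≤ ∫⁻ ω, (P ⊙ fun y ↦ ‖H y‖ₑ) (ω n) ∂Pμ := lintegral_mono fun ω ↦ by
        refine (enorm_integral_le_lintegral_enorm _).trans (lintegral_mono fun y ↦ ?_)
        exact enorm_mul_le_of_norm_le_one (he1 _ y)
    _ = ∫⁻ ω, ‖H (ω (n + 1))‖ₑ ∂Pμ := (hPμ.lintegral_succ hH.enorm n).symm
    _ < ∞ := hint.2

theorem IsMarkovChainLaw.enorm_integral_pathProd_mul_sub_le [IsMarkovKernel P]
    (hPμ : IsMarkovChainLaw μ P Pμ) (he : Measurable (Function.uncurry e))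
    (he1 : ∀ x y, ‖e x y‖ ≤ 1) (hH : Measurable H)
    (hint : ∀ k, Integrable (fun ω ↦ H (ω k)) Pμ) {r : ℂ} (hr : ‖r‖ ≤ 1) (n : ℕ) :
    ‖∫ ω, pathProd e n ω * H (ω n) ∂Pμ - r ^ n * ∫ ω, H (ω 0) ∂Pμ‖ₑ
      ≤ ∑ k ∈ Finset.range n, ∫⁻ ω, ‖∫ y, e (ω k) y * H y ∂P (ω k) - r * H (ω k)‖ₑ ∂Pμ := by
  induction n with
  | zero => simp [pathProd]
  | succ n ih =>
    set D : (ℕ → X) → ℂ := fun ω ↦ ∫ y, e (ω n) y * H y ∂P (ω n) - r * H (ω n)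
    have hD : Integrable D Pμ :=
      (hPμ.integrable_integral_mul he he1 hH (hint (n + 1))).sub ((hint n).const_mul r)
    have hstep : ∫ ω, pathProd e (n + 1) ω * H (ω (n + 1)) ∂Pμ
        = r * ∫ ω, pathProd e n ω * H (ω n) ∂Pμ + ∫ ω, pathProd e n ω * D ω ∂Pμ := by
      rw [hPμ.integral_pathProd_succ_mul he he1 hH (hint (n + 1)), ← integral_const_mul,
        ← integral_add ((integrable_pathProd_mul he he1 (hint n) n).const_mul r)
          (integrable_pathProd_mul he he1 hD n)]
      exact integral_congr_ae (ae_of_all _ fun ω ↦ by simp only [D]; ring)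
    calc ‖∫ ω, pathProd e (n + 1) ω * H (ω (n + 1)) ∂Pμ - r ^ (n + 1) * ∫ ω, H (ω 0) ∂Pμ‖ₑ
        = ‖r * (∫ ω, pathProd e n ω * H (ω n) ∂Pμ - r ^ n * ∫ ω, H (ω 0) ∂Pμ)
            + ∫ ω, pathProd e n ω * D ω ∂Pμ‖ₑ := by rw [hstep]; ring_nf
      _ ≤ ‖∫ ω, pathProd e n ω * H (ω n) ∂Pμ - r ^ n * ∫ ω, H (ω 0) ∂Pμ‖ₑ + ∫⁻ ω, ‖D ω‖ₑ ∂Pμ := by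
          exact (enorm_add_le _ _).trans
            (add_le_add (enorm_mul_le_of_norm_le_one hr) (enorm_integral_pathProd_mul_le he1 D n))
      _ ≤ _ := by rw [Finset.sum_range_succ]; gcongr

end PathProduct

section MartingaleIncrement

variable {P : Kernel X X} {V : X → ℝ≥0∞} {K : Set X} {l b : ℝ≥0∞}

/-- `ξ(x, y)` is a martingale increment of the chain with transition kernel `P`: it is centered and
square integrable with respect to `P(x, ·)`, its conditional variance being bounded by a multiple
of `V`. -/
structure IsMartingaleIncrement (P : Kernel X X) (V : X → ℝ≥0∞) (ξ : X → X → ℝ) : Prop where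
  measurable : Measurable (Function.uncurry ξ)
  memLp : ∀ x, MemLp (ξ x) 2 (P x)
  integral_eq_zero : ∀ x, ∫ y, ξ x y ∂P x = 0
  integral_sq_isBigO : (fun x ↦ ∫ y, ξ x y ^ 2 ∂P x) =O[⊤] fun x ↦ (V x).toReal

namespace IsMartingaleIncrement

lemma measurable_integral_sq [IsSFiniteKernel P] {ξ : X → X → ℝ}
    (hξ : IsMartingaleIncrement P V ξ) : Measurable fun x ↦ ∫ y, ξ x y ^ 2 ∂P x :=
  (hξ.measurable.pow_const 2).stronglyMeasurable.integral_kernel_prod_right'.measurable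

lemma sum_mul [IsFiniteKernel P] {ι : Type*} [Fintype ι] {ξ : ι → X → X → ℝ}
    (hξ : ∀ i, IsMartingaleIncrement P V (ξ i)) (t : ι → ℝ) :
    IsMartingaleIncrement P V fun x y ↦ ∑ i, t i * ξ i x y where
  measurable := Finset.measurable_fun_sum _ fun i _ ↦ (hξ i).measurable.const_mul (t i)
  memLp x := memLp_finsetSum _ fun i _ ↦ ((hξ i).memLp x).const_mul (t i)
  integral_eq_zero x := by
    rw [integral_finsetSum _ fun i _ ↦
      (((hξ i).memLp x).integrable one_le_two).const_mul (t i)]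
    simp [integral_const_mul, (hξ _).integral_eq_zero]
  integral_sq_isBigO := by
    have hint x i : Integrable (fun y ↦ (t i * ξ i x y) ^ 2) (P x) :=
      (((hξ i).memLp x).const_mul (t i)).integrable_sq
    have hle x : ∫ y, (∑ i, t i * ξ i x y) ^ 2 ∂P x
        ≤ Fintype.card ι * ∑ i, t i ^ 2 * ∫ y, ξ i x y ^ 2 ∂P x :=
      calc ∫ y, (∑ i, t i * ξ i x y) ^ 2 ∂P x
          ≤ ∫ y, Fintype.card ι * ∑ i, (t i * ξ i x y) ^ 2 ∂P x :=
            integral_mono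
              (memLp_finsetSum _ fun i _ ↦ ((hξ i).memLp x).const_mul (t i)).integrable_sq
              ((integrable_finsetSum _ fun i _ ↦ hint x i).const_mul _)
              fun y ↦ sq_sum_le_card_mul_sum_sq
        _ = Fintype.card ι * ∑ i, t i ^ 2 * ∫ y, ξ i x y ^ 2 ∂P x := by
            rw [integral_const_mul, integral_finsetSum _ fun i _ ↦ hint x i]
            simp_rw [mul_pow, integral_const_mul]
    have hO : (fun x ↦ Fintype.card ι * ∑ i, t i ^ 2 * ∫ y, ξ i x y ^ 2 ∂P x)
        =O[⊤] fun x ↦ (V x).toReal :=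
      (Asymptotics.IsBigO.fun_sum fun i _ ↦
        (hξ i).integral_sq_isBigO.const_mul_left (t i ^ 2)).const_mul_left _
    refine (Asymptotics.isBigO_of_le _ fun x ↦ ?_).trans hO
    exact (Real.norm_of_nonneg (integral_nonneg fun _ ↦ sq_nonneg _)).trans_le
      ((hle x).trans (le_abs_self _))

end IsMartingaleIncrement

lemma IsGeometricDrift.const_isBigO (hdrift : IsGeometricDrift P V K l b) {E : Type*}
    [NormedAddCommGroup E] (z : E) : (fun _ : X ↦ z) =O[⊤] fun x ↦ (V x).toReal :=
  (isBigO_top_toReal_iff hdrift.ne_top).2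
    ⟨‖z‖ₑ, enorm_ne_top, fun x ↦ le_mul_of_one_le_right' (hdrift.one_le x)⟩

lemma IsGeometricDrift.integral_norm_isBigO (hdrift : IsGeometricDrift P V K l b) {E : Type*}
    [NormedAddCommGroup E] {h : X → E} (hh : h =O[⊤] fun x ↦ (V x).toReal) :
    (fun x ↦ ∫ y, ‖h y‖ ∂P x) =O[⊤] fun x ↦ (V x).toReal := by
  obtain ⟨C, hC, hhV⟩ := (isBigO_top_toReal_iff hdrift.ne_top).1 hh
  have hl := hdrift.rate_lt_one.ne_top
  have hb := hdrift.const_ne_top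
  refine (isBigO_top_toReal_iff hdrift.ne_top).2 ⟨C * (l + b), by finiteness, fun x ↦ ?_⟩
  calc ‖∫ y, ‖h y‖ ∂P x‖ₑ ≤ ∫⁻ y, C * V y ∂P x :=
        (enorm_integral_le_lintegral_enorm _).trans
          (lintegral_mono fun y ↦ (enorm_norm (h y)).trans_le (hhV y))
    _ = C * (P ⊙ V) x := lintegral_const_mul C hdrift.measurable
    _ ≤ C * (l + b) * V x := by rw [mul_assoc]; gcongr; exact hdrift.lintegralOp_le_smul x

lemma IsGeometricDrift.integrable_of_isBigO (hdrift : IsGeometricDrift P V K l b) {E : Type*}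
    [NormedAddCommGroup E] {ρ : Measure X} (hρV : ∫⁻ x, V x ∂ρ < ∞) {h : X → E}
    (hh : StronglyMeasurable h) (hhV : h =O[⊤] fun x ↦ (V x).toReal) : Integrable h ρ := by
  obtain ⟨C, hC, hhC⟩ := (isBigO_top_toReal_iff hdrift.ne_top).1 hhV
  exact integrable_of_enorm_le_mul hh hC hhC hdrift.measurable hρV

lemma IsGeometricDrift.lintegral_kernel_lt_top (hdrift : IsGeometricDrift P V K l b) (x : X) :
    ∫⁻ y, V y ∂P x < ∞ :=
  le_add_self.trans_lt (hdrift.add_lintegralOp_lt_top x)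

end MartingaleIncrement

section AdditiveFunctional

variable {P : Kernel X X} [IsMarkovKernel P] {V : X → ℝ≥0∞} {K : Set X} {l b : ℝ≥0∞}
  {μ π : Measure X} {Pμ : Measure (ℕ → X)} {ξ : X → X → ℝ} {u : X → ℝ} {h : X → ℂ} {γ : ℂ}

lemma tendsto_inv_sqrt_nhdsNE_zero :
    Tendsto (fun n : ℕ ↦ (√(n : ℝ))⁻¹) atTop (𝓝[≠] 0) := by
  refine tendsto_nhdsWithin_iff.2 ⟨tendsto_inv_atTop_zero.comp
    (Real.tendsto_sqrt_atTop.comp tendsto_natCast_atTop_atTop), ?_⟩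
  filter_upwards [eventually_gt_atTop 0] with n hn
  exact inv_ne_zero (Real.sqrt_pos.2 (Nat.cast_pos.2 hn)).ne'

lemma ofReal_inv_sqrt_natCast_sq (n : ℕ) : (((√(n : ℝ))⁻¹ : ℝ) : ℂ) ^ 2 = (n : ℂ)⁻¹ := by
  rw [← Complex.ofReal_pow, inv_pow, Real.sq_sqrt n.cast_nonneg, Complex.ofReal_inv,
    Complex.ofReal_natCast]

omit [IsMarkovKernel P] in
lemma IsGeometricDrift.tendsto_inv_mul_integral_pathProd_mul
    (hdrift : IsGeometricDrift P V K l b) (hPμ : IsMarkovChainLaw μ P Pμ)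
    (hμV : ∫⁻ x, V x ∂μ < ∞) (hh : h =O[⊤] fun x ↦ (V x).toReal) {e : ℕ → X → X → ℂ}
    (he1 : ∀ n x y, ‖e n x y‖ ≤ 1) (k : ℕ → ℕ) :
    Tendsto (fun n : ℕ ↦ (n : ℂ)⁻¹ * ∫ ω, pathProd (e n) (k n) ω * h (ω (k n)) ∂Pμ)
      atTop (𝓝 0) := by
  obtain ⟨C, hC, hhV⟩ := (isBigO_top_toReal_iff hdrift.ne_top).1 hh
  obtain ⟨B, hB, hVB⟩ := hdrift.exists_lintegral_le hPμ hμV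
  have bound (n : ℕ) :
      ‖∫ ω, pathProd (e n) (k n) ω * h (ω (k n)) ∂Pμ‖ ≤ (C * B).toReal := by
    rw [← toReal_enorm]
    refine ENNReal.toReal_mono (by finiteness) ?_
    calc ‖∫ ω, pathProd (e n) (k n) ω * h (ω (k n)) ∂Pμ‖ₑ ≤ ∫⁻ ω, C * V (ω (k n)) ∂Pμ :=
          (enorm_integral_pathProd_mul_le (he1 n) _ _).trans (lintegral_mono fun ω ↦ hhV _)
      _ ≤ C * B := by
          rw [lintegral_const_mul' _ _ hC]
          gcongr
          exact hVB _
  exact tendsto_inv_atTop_nhds_zero_nat.zero_mul_isBoundedUnder_le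
    (isBoundedUnder_of ⟨_, bound⟩)

lemma measurable_eigenfunctionDefect (hξ : Measurable (Function.uncurry ξ)) (hu : Measurable u)
    (hh : Measurable h) (a : ℝ) :
    Measurable fun x ↦ eigenfunctionDefect (P x) (ξ x) (u x) h γ (h x) a := by
  refine Measurable.sub ?_ (by fun_prop)
  have : Measurable fun q : X × X ↦
      Complex.exp (↑(a * ξ q.1 q.2 + a ^ 2 * u q.1) * Complex.I) * (1 + a ^ 2 * h q.2) := by
    have hξ' : Measurable fun q : X × X ↦ ξ q.1 q.2 := hξ
    fun_prop
  exact this.stronglyMeasurable.integral_kernel_prod_right'.measurable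

lemma exists_enorm_eigenfunctionDefect_div_sq_le (hdrift : IsGeometricDrift P V K l b)
    (hξ : IsMartingaleIncrement P V ξ) (hu : u =O[⊤] fun x ↦ (V x).toReal)
    (hh : StronglyMeasurable h) (hhV : h =O[⊤] fun x ↦ (V x).toReal) (hγ : γ.re ≤ 0) :
    ∃ C : ℝ≥0∞, C ≠ ∞ ∧ ∀ (a : ℝ) x,
      ‖eigenfunctionDefect (P x) (ξ x) (u x) h γ (h x) a / (a : ℂ) ^ 2‖ₑ ≤ C * V x := by
  obtain ⟨C, hC, hCV⟩ := (isBigO_top_toReal_iff hdrift.ne_top).1 <|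
    ((hξ.integral_sq_isBigO.add hu.norm_left).add (hdrift.const_isBigO ‖γ‖)).add
      ((hdrift.integral_norm_isBigO hhV).add hhV.norm_left)
  refine ⟨C, hC, fun a x ↦ le_trans (enorm_le_iff_norm_le.2 ?_) (hCV x)⟩
  rw [norm_div, norm_pow, Complex.norm_real, Real.norm_eq_abs, sq_abs]
  exact div_le_of_le_mul₀ (sq_nonneg a) (norm_nonneg _) <|
    (norm_eigenfunctionDefect_le (hξ.memLp x) (hξ.integral_eq_zero x)
      (hdrift.integrable_of_isBigO (hdrift.lintegral_kernel_lt_top x) hh hhV) hγ a).trans <| by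
      rw [mul_comm]; gcongr; exact le_abs_self _

lemma tendsto_sum_lintegral_eigenfunctionDefect [IsProbabilityMeasure π] {Λ : Kernel X X}
    {s : X → ℝ≥0∞} {ρ : Measure X} (hΛ : IsGreenKernel P V Λ s ρ)
    (hdrift : IsGeometricDrift P V K l b) (hπ : P.Invariant π) (hπV : ∫⁻ x, V x ∂π < ∞)
    (hPμ : IsMarkovChainLaw μ P Pμ) (hμV : ∫⁻ x, V x ∂μ < ∞)
    (hξ : IsMartingaleIncrement P V ξ) (hu : Measurable u) (huV : u =O[⊤] fun x ↦ (V x).toReal)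
    (hh : StronglyMeasurable h) (hhV : h =O[⊤] fun x ↦ (V x).toReal) (hγ : γ.re ≤ 0)
    (hpoisson : ∀ x, h x = -((∫ y, ξ x y ^ 2 ∂P x : ℝ) : ℂ) / 2 + u x * Complex.I - γ
      + ∫ y, h y ∂P x) :
    Tendsto (fun n : ℕ ↦ ∑ k ∈ Finset.range n, ∫⁻ ω,
      ‖eigenfunctionDefect (P (ω k)) (ξ (ω k)) (u (ω k)) h γ (h (ω k)) (√n)⁻¹‖ₑ ∂Pμ)
      atTop (𝓝 0) := by
  obtain ⟨C, hC, hCV⟩ := exists_enorm_eigenfunctionDefect_div_sq_le hdrift hξ huV hh hhV hγ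
  have hlim x := ((tendsto_eigenfunctionDefect_div_sq (hξ.memLp x) (hξ.integral_eq_zero x)
    (hdrift.integrable_of_isBigO (hdrift.lintegral_kernel_lt_top x) hh hhV)
    (hpoisson x)).comp tendsto_inv_sqrt_nhdsNE_zero).enorm
  rw [enorm_zero] at hlim
  have hmeas (n : ℕ) := ((measurable_eigenfunctionDefect (P := P) (γ := γ) hξ.measurable hu
    hh.measurable (√n)⁻¹).div_const (((√n)⁻¹ : ℝ) ^ 2 : ℂ)).enorm
  refine (hΛ.tendsto_average_zero hPμ hdrift.measurable hμV
    (hΛ.lintegral_lt_top hdrift.measurable hdrift.one_le hπ hπV) hmeas hC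
    (fun n x ↦ hCV _ x) hlim).congr' ?_
  filter_upwards [eventually_ne_atTop 0] with n hn
  have hn0 : (n : ℝ≥0∞) ≠ 0 := Nat.cast_ne_zero.2 hn
  have hcancel (z : ℂ) : ‖z / (n : ℂ)⁻¹‖ₑ = n * ‖z‖ₑ := by
    rw [div_inv_eq_mul, mul_comm, enorm_mul]; simp [← ofReal_norm]
  simp_rw [ofReal_inv_sqrt_natCast_sq, hcancel,
    lintegral_const_mul' _ _ (ENNReal.natCast_ne_top n), ← Finset.mul_sum, ← mul_assoc,
    ENNReal.inv_mul_cancel hn0 (ENNReal.natCast_ne_top n), one_mul]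

lemma pathProd_exp_ofReal_mul_I {X : Type*} (ξ : X → X → ℝ) (u : X → ℝ) (a : ℝ) (n : ℕ)
    (ω : ℕ → X) :
    pathProd (fun x y ↦ Complex.exp (↑(a * ξ x y + a ^ 2 * u x) * Complex.I)) n ω
      = Complex.exp (↑(a * ∑ k ∈ Finset.range n, ξ (ω k) (ω (k + 1))
        + a ^ 2 * ∑ k ∈ Finset.range n, u (ω k)) * Complex.I) := by
  rw [pathProd, ← Complex.exp_sum, ← Finset.sum_mul, ← Complex.ofReal_sum,
    Finset.sum_add_distrib, Finset.mul_sum, Finset.mul_sum]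

omit [IsMarkovKernel P] in
lemma IsGeometricDrift.integrable_comp_eval (hdrift : IsGeometricDrift P V K l b)
    (hPμ : IsMarkovChainLaw μ P Pμ) (hμV : ∫⁻ x, V x ∂μ < ∞) (hh : StronglyMeasurable h)
    (hhV : h =O[⊤] fun x ↦ (V x).toReal) (k : ℕ) : Integrable (fun ω ↦ h (ω k)) Pμ := by
  obtain ⟨B, hB, hVB⟩ := hdrift.exists_lintegral_le hPμ hμV
  have heval := measurable_pi_apply (X := fun _ : ℕ ↦ X) k
  refine (hdrift.integrable_of_isBigO (ρ := Pμ.map fun ω ↦ ω k) ?_ hh hhV).comp_measurable heval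
  rw [lintegral_map hdrift.measurable heval]
  exact (hVB k).trans_lt hB.lt_top

omit [IsMarkovKernel P] in
lemma IsGeometricDrift.tendsto_integral_pathProd (hdrift : IsGeometricDrift P V K l b)
    (hPμ : IsMarkovChainLaw μ P Pμ) (hμV : ∫⁻ x, V x ∂μ < ∞) (hh : StronglyMeasurable h)
    (hhV : h =O[⊤] fun x ↦ (V x).toReal) {e : ℕ → X → X → ℂ}
    (he : ∀ n, Measurable (Function.uncurry (e n))) (he1 : ∀ n x y, ‖e n x y‖ ≤ 1) {q : ℂ}
    (hlim : Tendsto (fun n : ℕ ↦ ∫ ω, pathProd (e n) n ω * (1 + (n : ℂ)⁻¹ * h (ω n)) ∂Pμ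
      - q * ∫ ω, (1 + (n : ℂ)⁻¹ * h (ω 0)) ∂Pμ) atTop (𝓝 0)) :
    Tendsto (fun n ↦ ∫ ω, pathProd (e n) n ω ∂Pμ) atTop (𝓝 q) := by
  have := hPμ.1
  have hsplit (k n : ℕ) : ∫ ω, pathProd (e n) k ω * (1 + (n : ℂ)⁻¹ * h (ω k)) ∂Pμ
      = ∫ ω, pathProd (e n) k ω ∂Pμ + (n : ℂ)⁻¹ * ∫ ω, pathProd (e n) k ω * h (ω k) ∂Pμ := by
    have hone := integrable_pathProd_mul (he n) (he1 n) (integrable_const (μ := Pμ) (1 : ℂ)) k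
    rw [← integral_const_mul, ← integral_add (by simpa using hone)
      ((integrable_pathProd_mul (he n) (he1 n)
        (hdrift.integrable_comp_eval hPμ hμV hh hhV k) k).const_mul _)]
    exact integral_congr_ae (ae_of_all _ fun ω ↦ by ring)
  have hcorr k := hdrift.tendsto_inv_mul_integral_pathProd_mul hPμ hμV hhV he1 k
  have hsum := ((hlim.sub (hcorr id)).add ((hcorr 0).const_mul q)).const_add q
  simp only [sub_zero, mul_zero, add_zero] at hsum
  refine hsum.congr fun n ↦ ?_
  have hzero (ω : ℕ → X) : pathProd (e n) 0 ω = 1 := by simp [pathProd]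
  have h0 := hsplit 0 n
  simp only [hzero, one_mul, integral_const, probReal_univ, one_smul] at h0
  rw [hsplit n n, h0]
  simp only [hzero, Pi.zero_apply, one_mul, id_eq]
  ring

lemma IsGreenKernel.exists_corrector [IsProbabilityMeasure π] {Λ : Kernel X X}
    {s : X → ℝ≥0∞} {ρ : Measure X} (hΛ : IsGreenKernel P V Λ s ρ)
    (hdrift : IsGeometricDrift P V K l b) (hπ : P.Invariant π) (hπV : ∫⁻ x, V x ∂π < ∞)
    (hξ : IsMartingaleIncrement P V ξ) (hu : Measurable u)
    (huV : u =O[⊤] fun x ↦ (V x).toReal) :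
    ∃ h : X → ℂ, StronglyMeasurable h ∧ (h =O[⊤] fun x ↦ (V x).toReal) ∧
      ∀ x, h x = -((∫ y, ξ x y ^ 2 ∂P x : ℝ) : ℂ) / 2 + u x * Complex.I
        - (-((∫ x, ∫ y, ξ x y ^ 2 ∂P x ∂π : ℝ) : ℂ) / 2 + (∫ x, u x ∂π : ℝ) * Complex.I)
        + ∫ y, h y ∂P x := by
  have hσ := hξ.measurable_integral_sq
  have hσ_int : Integrable (fun x ↦ -((∫ y, ξ x y ^ 2 ∂P x : ℝ) : ℂ) / 2) π :=
    (hdrift.integrable_of_isBigO hπV hσ.stronglyMeasurable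
      hξ.integral_sq_isBigO).ofReal.neg.div_const 2
  have hu_int : Integrable (fun x ↦ u x * Complex.I) π :=
    (hdrift.integrable_of_isBigO hπV hu.stronglyMeasurable huV).ofReal.mul_const Complex.I
  refine hΛ.exists_poisson_solution hdrift hπ hπV (Measurable.stronglyMeasurable (by fun_prop))
    ?_ ?_
  · have hσV : (fun x ↦ -((∫ y, ξ x y ^ 2 ∂P x : ℝ) : ℂ) / 2) =O[⊤] fun x ↦ (V x).toReal := by
      simpa [div_eq_inv_mul] using
        (Complex.isBigO_ofReal_left.2 hξ.integral_sq_isBigO).neg_left.const_mul_left (2⁻¹ : ℂ)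
    have huIV : (fun x ↦ u x * Complex.I) =O[⊤] fun x ↦ (V x).toReal := by
      simpa [mul_comm] using (Complex.isBigO_ofReal_left.2 huV).const_mul_left Complex.I
    exact (hσV.add huIV).sub (hdrift.const_isBigO _)
  · rw [integral_sub (f := fun x ↦ _ + _) (hσ_int.add hu_int) (integrable_const _),
      integral_add hσ_int hu_int]
    simp only [integral_div, integral_neg, integral_mul_const, integral_complex_ofReal,
      integral_const, probReal_univ, one_smul, sub_self]

theorem tendsto_integral_exp_additiveFunctional {m : ℕ} {δ : ℝ≥0} {ν : Measure X}
    [IsProbabilityMeasure ν] [IsProbabilityMeasure π] (hdrift : IsGeometricDrift P V K l b)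
    (hsmall : IsSmallSet P K m δ ν) (hπ : P.Invariant π) (hπV : ∫⁻ x, V x ∂π < ∞)
    (hPμ : IsMarkovChainLaw μ P Pμ) (hμV : ∫⁻ x, V x ∂μ < ∞)
    (hξ : IsMartingaleIncrement P V ξ) (hu : Measurable u)
    (huV : u =O[⊤] fun x ↦ (V x).toReal) :
    Tendsto (fun n : ℕ ↦ ∫ ω, Complex.exp (↑((√n)⁻¹ * ∑ k ∈ Finset.range n, ξ (ω k) (ω (k + 1))
        + (√n)⁻¹ ^ 2 * ∑ k ∈ Finset.range n, u (ω k)) * Complex.I) ∂Pμ) atTop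
      (𝓝 (Complex.exp (-((∫ x, ∫ y, ξ x y ^ 2 ∂P x ∂π : ℝ) : ℂ) / 2
        + (∫ x, u x ∂π : ℝ) * Complex.I))) := by
  obtain ⟨Λ, s, ρ, hΛ⟩ := hdrift.exists_isGreenKernel hsmall
  obtain ⟨h, hh, hhV, hpoisson⟩ := hΛ.exists_corrector hdrift hπ hπV hξ hu huV
  set γ : ℂ := -((∫ x, ∫ y, ξ x y ^ 2 ∂P x ∂π : ℝ) : ℂ) / 2 + (∫ x, u x ∂π : ℝ) * Complex.I
    with hγ_def
  have hvar : 0 ≤ ∫ x, ∫ y, ξ x y ^ 2 ∂P x ∂π :=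
    integral_nonneg fun x ↦ integral_nonneg fun y ↦ sq_nonneg _
  have hγ : γ.re ≤ 0 := by
    simpa [hγ_def, neg_div] using div_nonneg hvar two_pos.le
  have he (n : ℕ) : Measurable (Function.uncurry fun x y ↦
      Complex.exp (↑((√n)⁻¹ * ξ x y + (√n)⁻¹ ^ 2 * u x) * Complex.I)) := by
    have hξ' : Measurable fun q : X × X ↦ ξ q.1 q.2 := hξ.measurable
    unfold Function.uncurry
    fun_prop
  have he1 (n : ℕ) (x y : X) :
      ‖Complex.exp (↑((√n)⁻¹ * ξ x y + (√n)⁻¹ ^ 2 * u x) * Complex.I)‖ ≤ 1 :=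
    (Complex.norm_exp_ofReal_mul_I _).le
  refine (hdrift.tendsto_integral_pathProd hPμ hμV hh hhV he he1 ?_).congr fun n ↦
    integral_congr_ae (ae_of_all _ (pathProd_exp_ofReal_mul_I ξ u (√n)⁻¹ n))
  have := hPμ.1
  rw [tendsto_zero_iff_enorm_tendsto_zero]
  refine tendsto_of_tendsto_of_tendsto_of_le_of_le' tendsto_const_nhds
    (tendsto_sum_lintegral_eigenfunctionDefect hΛ hdrift hπ hπV hPμ hμV hξ hu huV hh hhV hγ
      hpoisson) (.of_forall fun _ ↦ zero_le) ?_
  filter_upwards [eventually_ne_atTop 0] with n hn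
  have hr : ‖Complex.exp ((n : ℂ)⁻¹ * γ)‖ ≤ 1 := by
    rw [Complex.norm_exp, Real.exp_le_one_iff, ← Complex.ofReal_natCast, ← Complex.ofReal_inv,
      Complex.re_ofReal_mul]
    exact mul_nonpos_of_nonneg_of_nonpos (by positivity) hγ
  have hrn : Complex.exp ((n : ℂ)⁻¹ * γ) ^ n = Complex.exp γ := by
    rw [← Complex.exp_nat_mul, mul_inv_cancel_left₀ (Nat.cast_ne_zero.2 hn)]
  simpa only [hrn, eigenfunctionDefect, ofReal_inv_sqrt_natCast_sq] using
    hPμ.enorm_integral_pathProd_mul_sub_le (he n) (he1 n) (H := fun x ↦ 1 + (n : ℂ)⁻¹ * h x)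
      (measurable_const.add (hh.measurable.const_mul _))
      (fun k ↦ (integrable_const 1).add
        ((hdrift.integrable_comp_eval hPμ hμV hh hhV k).const_mul _)) hr n

end AdditiveFunctional

section IncrementCovariance

variable {P : Kernel X X} [IsMarkovKernel P] {V : X → ℝ≥0∞} {K : Set X} {l b : ℝ≥0∞}
  {π : Measure X} [IsProbabilityMeasure π]

lemma IsMartingaleIncrement.memLp_compProd {ξ : X → X → ℝ} (hξ : IsMartingaleIncrement P V ξ)
    (hdrift : IsGeometricDrift P V K l b) (hπV : ∫⁻ x, V x ∂π < ∞) :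
    MemLp (Function.uncurry ξ) 2 (π ⊗ₘ P) := by
  have hmeas := (hξ.measurable.pow_const 2).aestronglyMeasurable (μ := π ⊗ₘ P)
  refine (memLp_two_iff_integrable_sq hξ.measurable.aestronglyMeasurable).2
    ((Measure.integrable_compProd_iff hmeas).2
      ⟨.of_forall fun x ↦ (hξ.memLp x).integrable_sq, ?_⟩)
  simpa using hdrift.integrable_of_isBigO hπV hξ.measurable_integral_sq.stronglyMeasurable
    hξ.integral_sq_isBigO

variable {ι : Type*} {ξ : ι → X → X → ℝ}

/-- The covariance matrix of the vector of increments `(ξ i (Φ₀, Φ₁))ᵢ` of the chain with transition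
kernel `P` started from `π`; the increments are assumed to be centered, so that no means are
subtracted. -/
def incrementCovariance (P : Kernel X X) (π : Measure X) (ξ : ι → X → X → ℝ) : Matrix ι ι ℝ :=
  .of fun i j ↦ ∫ x, ∫ y, ξ i x y * ξ j x y ∂P x ∂π

variable [Fintype ι]

lemma dotProduct_incrementCovariance_mulVec (hξ : ∀ i, IsMartingaleIncrement P V (ξ i))
    (hdrift : IsGeometricDrift P V K l b) (hπV : ∫⁻ x, V x ∂π < ∞) (t : ι → ℝ) :
    t ⬝ᵥ (incrementCovariance P π ξ).mulVec t
      = ∫ x, ∫ y, (∑ i, t i * ξ i x y) ^ 2 ∂P x ∂π := by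
  have hint i j : Integrable (fun p : X × X ↦ ξ i p.1 p.2 * ξ j p.1 p.2) (π ⊗ₘ P) :=
    ((hξ i).memLp_compProd hdrift hπV).integrable_mul ((hξ j).memLp_compProd hdrift hπV)
  have hentry i j : incrementCovariance P π ξ i j
      = ∫ p, ξ i p.1 p.2 * ξ j p.1 p.2 ∂(π ⊗ₘ P) := (Measure.integral_compProd (hint i j)).symm
  have hexpand (p : X × X) : (∑ i, t i * ξ i p.1 p.2) ^ 2
      = ∑ i, ∑ j, t i * t j * (ξ i p.1 p.2 * ξ j p.1 p.2) := by
    simp_rw [sq, Finset.sum_mul_sum, mul_mul_mul_comm]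
  have hsq := ((IsMartingaleIncrement.sum_mul hξ t).memLp_compProd hdrift hπV).integrable_sq
  calc t ⬝ᵥ (incrementCovariance P π ξ).mulVec t
      = ∑ i, ∑ j, ∫ p, t i * t j * (ξ i p.1 p.2 * ξ j p.1 p.2) ∂(π ⊗ₘ P) := by
        simp_rw [integral_const_mul, ← hentry, dotProduct, Matrix.mulVec, dotProduct,
          Finset.mul_sum]
        exact Finset.sum_congr rfl fun i _ ↦ Finset.sum_congr rfl fun j _ ↦ by ring
    _ = ∫ p, (∑ i, t i * ξ i p.1 p.2) ^ 2 ∂(π ⊗ₘ P) := by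
        simp_rw [hexpand]
        rw [integral_finsetSum _ fun i _ ↦ integrable_finsetSum _ fun j _ ↦ (hint i j).const_mul _]
        simp_rw [integral_finsetSum _ fun j _ ↦ (hint _ j).const_mul _]
    _ = ∫ x, ∫ y, (∑ i, t i * ξ i x y) ^ 2 ∂P x ∂π := Measure.integral_compProd hsq

omit [Fintype ι] in
lemma posSemidef_incrementCovariance [Finite ι] (hξ : ∀ i, IsMartingaleIncrement P V (ξ i))
    (hdrift : IsGeometricDrift P V K l b) (hπV : ∫⁻ x, V x ∂π < ∞) :
    (incrementCovariance P π ξ).PosSemidef := by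
  have := Fintype.ofFinite ι
  refine .of_dotProduct_mulVec_nonneg ?_ fun t ↦ ?_
  · ext i j
    simp [incrementCovariance, mul_comm]
  · rw [star_trivial, dotProduct_incrementCovariance_mulVec hξ hdrift hπV]
    exact integral_nonneg fun x ↦ integral_nonneg fun y ↦ sq_nonneg _

end IncrementCovariance

section GaussianLimit

lemma tendstoInDistribution_of_tendsto_integral_exp_inner {E Ω Ω' : Type*} [NormedAddCommGroup E]
    [InnerProductSpace ℝ E] [FiniteDimensional ℝ E] [MeasurableSpace E] [BorelSpace E]
    [MeasurableSpace Ω] [MeasurableSpace Ω'] {ρ : Measure Ω} [IsProbabilityMeasure ρ]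
    {ρ' : Measure Ω'} [IsProbabilityMeasure ρ'] {Y : ℕ → Ω → E} {Z : Ω' → E}
    (hY : ∀ n, AEMeasurable (Y n) ρ) (hZ : AEMeasurable Z ρ')
    (h : ∀ t, Tendsto (fun n ↦ ∫ ω, Complex.exp (↑(inner ℝ (Y n ω) t) * Complex.I) ∂ρ) atTop
      (𝓝 (∫ ω, Complex.exp (↑(inner ℝ (Z ω) t) * Complex.I) ∂ρ'))) :
    TendstoInDistribution Y atTop Z (fun _ ↦ ρ) ρ' where
  forall_aemeasurable := hY
  aemeasurable_limit := hZ
  tendsto := ProbabilityMeasure.tendsto_of_tendsto_charFun fun t ↦ by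
    have hexp : Continuous fun x : E ↦ Complex.exp (↑(inner ℝ x t) * Complex.I) := by fun_prop
    simpa only [ProbabilityMeasure.coe_mk, charFun_apply,
      integral_map (hY _) hexp.aestronglyMeasurable,
      integral_map hZ hexp.aestronglyMeasurable] using h t

variable {ι κ : Type*} [Fintype ι] [DecidableEq ι] [Fintype κ]

lemma map_smul_multivariateGaussian_zero {S : Matrix ι ι ℝ} (hS : S.PosSemidef) (c : ℝ) :
    (multivariateGaussian 0 S).map (c • ·) = multivariateGaussian 0 (c ^ 2 • S) := by
  have := Measure.isProbabilityMeasure_map (μ := multivariateGaussian (0 : EuclideanSpace ℝ ι) S)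
    (f := (c • ·)) (by fun_prop)
  refine Measure.ext_of_charFun (funext fun t ↦ ?_)
  rw [charFun_map_smul, charFun_multivariateGaussian hS,
    charFun_multivariateGaussian (hS.smul (sq_nonneg c))]
  simp [Matrix.mulVec_smul, Matrix.smul_mulVec, sq, mul_assoc]

lemma map_mulVec_pi_gaussianReal (D : Matrix ι κ ℝ) :
    (Measure.pi fun _ : κ ↦ gaussianReal 0 1).map (fun w ↦ WithLp.toLp 2 (D.mulVec w))
      = multivariateGaussian 0 (D * D.transpose) := by
  have := Measure.isProbabilityMeasure_map (μ := Measure.pi fun _ : κ ↦ gaussianReal 0 1)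
    (f := fun w ↦ WithLp.toLp 2 (D.mulVec w)) (by fun_prop)
  have hS : (D * D.transpose).PosSemidef := Matrix.posSemidef_self_mul_conjTranspose D
  have hinner (t : EuclideanSpace ℝ ι) (w : κ → ℝ) :
      inner ℝ (WithLp.toLp 2 (D.mulVec w)) t
        = inner ℝ (WithLp.toLp 2 w) (WithLp.toLp 2 (D.transpose.mulVec t)) := by
    simp [EuclideanSpace.inner_eq_star_dotProduct, Matrix.dotProduct_mulVec,
      Matrix.mulVec_transpose]
  have hnorm (t : EuclideanSpace ℝ ι) :
      ‖WithLp.toLp 2 (D.transpose.mulVec t)‖ ^ 2 = t ⬝ᵥ (D * D.transpose).mulVec t := by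
    rw [← real_inner_self_eq_norm_sq, ← hinner]
    simp [EuclideanSpace.inner_eq_star_dotProduct]
  refine Measure.ext_of_charFun (funext fun t ↦ ?_)
  calc charFun _ t
      = charFun (stdGaussian (EuclideanSpace ℝ κ)) (WithLp.toLp 2 (D.transpose.mulVec t)) := by
        rw [← map_pi_eq_stdGaussian, charFun_apply, charFun_apply, integral_map (by fun_prop)
          (by fun_prop), integral_map (by fun_prop) (by fun_prop)]
        simp_rw [hinner]
    _ = charFun (multivariateGaussian 0 (D * D.transpose)) t := by
        rw [charFun_stdGaussian, charFun_multivariateGaussian hS, ← hnorm]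
        simp [neg_div]

end GaussianLimit

section ProductLimit

variable {P : Kernel X X} [IsMarkovKernel P] {V : X → ℝ≥0∞} {K : Set X} {l b : ℝ≥0∞} {m : ℕ}
  {δ : ℝ≥0} {ν π μ : Measure X} [IsProbabilityMeasure ν] [IsProbabilityMeasure π]
  {Pμ : Measure (ℕ → X)} [IsProbabilityMeasure Pμ]
  {ι : Type*} [Fintype ι] [DecidableEq ι] {ξ : ι → X → X → ℝ} {f : X → ℝ}

theorem tendstoInDistribution_martingale_prodMk_average
    (hdrift : IsGeometricDrift P V K l b) (hsmall : IsSmallSet P K m δ ν) (hπ : P.Invariant π)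
    (hπV : ∫⁻ x, V x ∂π < ∞) (hPμ : IsMarkovChainLaw μ P Pμ) (hμV : ∫⁻ x, V x ∂μ < ∞)
    (hξ : ∀ i, IsMartingaleIncrement P V (ξ i)) (hf : Measurable f)
    (hfV : f =O[⊤] fun x ↦ (V x).toReal) :
    TendstoInDistribution
      (fun (n : ℕ) (ω : ℕ → X) ↦ WithLp.toLp 2
        ((WithLp.toLp 2 fun i ↦ (√n)⁻¹ * ∑ k ∈ Finset.range n, ξ i (ω k) (ω (k + 1)) :
          EuclideanSpace ℝ ι), (n : ℝ)⁻¹ * ∑ k ∈ Finset.range n, f (ω k)))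
      atTop (fun z ↦ WithLp.toLp 2 (z, ∫ x, f x ∂π)) (fun _ ↦ Pμ)
      (multivariateGaussian 0 (incrementCovariance P π ξ)) := by
  have hmeas (n : ℕ) : Measurable fun ω : ℕ → X ↦
      (WithLp.toLp 2 fun i ↦ (√n)⁻¹ * ∑ k ∈ Finset.range n, ξ i (ω k) (ω (k + 1)) :
        EuclideanSpace ℝ ι) := by
    have hpair (k : ℕ) : Measurable fun ω : ℕ → X ↦ (ω k, ω (k + 1)) := by fun_prop
    exact (WithLp.measurable_toLp 2 _).comp (measurable_pi_lambda _ fun i ↦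
      (Finset.measurable_fun_sum _ fun k _ ↦ (hξ i).measurable.comp (hpair k)).const_mul _)
  refine tendstoInDistribution_of_tendsto_integral_exp_inner
    (fun n ↦ Measurable.aemeasurable (by fun_prop)) (by fun_prop) fun t ↦ ?_
  have hlim := tendsto_integral_exp_additiveFunctional hdrift hsmall hπ hπV hPμ hμV
    (IsMartingaleIncrement.sum_mul hξ t.fst) (hf.const_mul t.snd) (hfV.const_mul_left t.snd)
  rw [← dotProduct_incrementCovariance_mulVec hξ hdrift hπV, integral_const_mul] at hlim
  convert hlim using 2 with n
  · refine integral_congr_ae (.of_forall fun ω ↦ ?_)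
    simp only [WithLp.prod_inner_apply, PiLp.inner_apply, RCLike.inner_apply, conj_trivial,
      inv_pow, Real.sq_sqrt n.cast_nonneg, Finset.mul_sum]
    rw [Finset.sum_comm]
    simp only [mul_left_comm _ (√n)⁻¹, mul_left_comm _ (n : ℝ)⁻¹]
    rfl
  · calc ∫ z, Complex.exp (↑(inner ℝ (WithLp.toLp 2 (z, ∫ x, f x ∂π)) t) * Complex.I)
          ∂(multivariateGaussian 0 (incrementCovariance P π ξ))
        = charFun (multivariateGaussian 0 (incrementCovariance P π ξ)) t.fst
          * Complex.exp (↑(t.snd * ∫ x, f x ∂π) * Complex.I) := by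
          simp [charFun_apply, ← integral_mul_const, ← Complex.exp_add, add_mul]
      _ = _ := by
          rw [charFun_multivariateGaussian (posSemidef_incrementCovariance hξ hdrift hπV),
            ← Complex.exp_add]
          simp [neg_div]

theorem tendstoInDistribution_average_smul_martingale
    (hdrift : IsGeometricDrift P V K l b) (hsmall : IsSmallSet P K m δ ν) (hπ : P.Invariant π)
    (hπV : ∫⁻ x, V x ∂π < ∞) (hPμ : IsMarkovChainLaw μ P Pμ) (hμV : ∫⁻ x, V x ∂μ < ∞)
    (hξ : ∀ i, IsMartingaleIncrement P V (ξ i)) (hf : Measurable f)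
    (hfV : f =O[⊤] fun x ↦ (V x).toReal) :
    TendstoInDistribution
      (fun (n : ℕ) (ω : ℕ → X) ↦ ((n : ℝ)⁻¹ * ∑ k ∈ Finset.range n, f (ω k)) •
        (WithLp.toLp 2 fun i ↦ (√n)⁻¹ * ∑ k ∈ Finset.range n, ξ i (ω k) (ω (k + 1)) :
          EuclideanSpace ℝ ι))
      atTop (fun z ↦ (∫ x, f x ∂π) • z) (fun _ ↦ Pμ)
      (multivariateGaussian 0 (incrementCovariance P π ξ)) :=
  (tendstoInDistribution_martingale_prodMk_average hdrift hsmall hπ hπV hPμ hμV hξ hf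
    hfV).continuous_comp (g := fun p : WithLp 2 (EuclideanSpace ℝ ι × ℝ) ↦ p.snd • p.fst)
    (by fun_prop)

end ProductLimit

end KernelOperator

section RealLyapunov

variable {X : Type*} [MeasurableSpace X]

lemma kpow_eq_pow (P : Kernel X X) (n : ℕ) : kpow P n = P ^ n := by
  induction n with
  | zero => rfl
  | succ n ih => rw [kpow, ih, pow_succ']; rfl

variable {P : Kernel X X} {V : X → ℝ} {K : Set X}

lemma isGeometricDrift_ofReal {l b : ℝ} (hV : Measurable V) (hV1 : ∀ x, 1 ≤ V x)
    (hK : MeasurableSet K) (hl : l < 1)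
    (h : ∀ x, ∫⁻ y, ENNReal.ofReal (V y) ∂P x
      ≤ ENNReal.ofReal (l * V x + b * K.indicator (fun _ ↦ 1) x)) :
    IsGeometricDrift P (fun x ↦ ENNReal.ofReal (V x)) K (ENNReal.ofReal l) (ENNReal.ofReal b) where
  measurable := hV.ennreal_ofReal
  one_le x := ENNReal.one_le_ofReal.2 (hV1 x)
  ne_top x := ENNReal.ofReal_ne_top
  measurableSet := hK
  rate_lt_one := ENNReal.ofReal_lt_one.2 hl
  const_ne_top := ENNReal.ofReal_ne_top
  lintegralOp_le x := calc
    ∫⁻ y, ENNReal.ofReal (V y) ∂P x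
      ≤ ENNReal.ofReal (l * V x) + ENNReal.ofReal (b * K.indicator (fun _ ↦ 1) x) :=
        (h x).trans ENNReal.ofReal_add_le
    _ = ENNReal.ofReal l * ENNReal.ofReal (V x) + ENNReal.ofReal b * K.indicator 1 x := by
        rw [ENNReal.ofReal_mul' (zero_le_one.trans (hV1 x)),
          ENNReal.ofReal_mul' (Set.indicator_nonneg (fun _ _ ↦ zero_le_one) x)]
        by_cases hx : x ∈ K <;> simp [hx]

lemma isSmallSet_of_forall_measurableSet {m : ℕ} {δ : ℝ} {ν : Measure X} (hδ : 0 < δ)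
    (h : ∀ x ∈ K, ∀ A : Set X, MeasurableSet A → ENNReal.ofReal δ * ν A ≤ kpow P m x A) :
    IsSmallSet P K m δ.toNNReal ν :=
  ⟨(Real.toNNReal_pos.2 hδ).ne', fun x hx ↦
    Measure.le_iff.2 fun A hA ↦ kpow_eq_pow P m ▸ h x hx A hA⟩

lemma memLp_two_of_lintegral_ofReal_sq_ne_top {ρ : Measure X} {q : X → ℝ} (hq : Measurable q)
    (h : ∫⁻ y, ENNReal.ofReal (q y ^ 2) ∂ρ ≠ ∞) : MemLp q 2 ρ :=
  (memLp_two_iff_integrable_sq hq.aestronglyMeasurable).2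
    ((lintegral_ofReal_ne_top_iff_integrable (hq.pow_const 2).aestronglyMeasurable
      (.of_forall fun y ↦ sq_nonneg (q y))).1 h)

lemma isMartingaleIncrement_of_lintegral_ofReal_sq_le {ξ : X → X → ℝ} {C : ℝ}
    (hV : ∀ x, 0 ≤ V x) (hξ : Measurable (Function.uncurry ξ)) (hmean : ∀ x, ∫ y, ξ x y ∂P x = 0)
    (hsq : ∀ x, ∫⁻ y, ENNReal.ofReal (ξ x y ^ 2) ∂P x ≤ ENNReal.ofReal (C * V x)) :
    IsMartingaleIncrement P (fun x ↦ ENNReal.ofReal (V x)) ξ where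
  measurable := hξ
  memLp x := memLp_two_of_lintegral_ofReal_sq_ne_top hξ.of_uncurry_left
    ((hsq x).trans_lt ENNReal.ofReal_lt_top).ne
  integral_eq_zero := hmean
  integral_sq_isBigO := by
    refine (isBigO_top_toReal_iff fun x ↦ ENNReal.ofReal_ne_top).2
      ⟨ENNReal.ofReal C, ENNReal.ofReal_ne_top, fun x ↦ ?_⟩
    calc ‖∫ y, ξ x y ^ 2 ∂P x‖ₑ ≤ ∫⁻ y, ‖ξ x y ^ 2‖ₑ ∂P x := enorm_integral_le_lintegral_enorm _
      _ = ∫⁻ y, ENNReal.ofReal (ξ x y ^ 2) ∂P x := by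
          simp_rw [Real.enorm_of_nonneg (sq_nonneg _)]
      _ ≤ ENNReal.ofReal C * ENNReal.ofReal (V x) :=
          (hsq x).trans_eq (ENNReal.ofReal_mul' (hV x))

end RealLyapunov

lemma isBigO_toReal_of_abs_le_mul_sqrt {X : Type*} {V f : X → ℝ} {c : ℝ}
    (hV1 : ∀ x, 1 ≤ V x)
    (hf : ∀ x, |f x| ≤ c * √(V x)) : f =O[⊤] fun x ↦ (ENNReal.ofReal (V x)).toReal := by
  have hsqrt : f =O[⊤] fun x ↦ √(V x) := .of_bound c <| .of_forall fun x ↦ by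
    simpa [abs_of_nonneg (Real.sqrt_nonneg _)] using hf x
  refine hsqrt.trans (Asymptotics.isBigO_of_le _ fun x ↦ ?_)
  have hV0 := zero_le_one.trans (hV1 x)
  rw [ENNReal.toReal_ofReal hV0]
  exact abs_le_abs_of_nonneg (Real.sqrt_nonneg _)
    (Real.sqrt_le_iff.2 ⟨hV0, le_self_pow₀ (hV1 x) two_ne_zero⟩)

section Score

variable {X : Type*} [MeasurableSpace X] {ρ : Measure X}

lemma integrable_and_integral_eq_one_of_withDensity {q : X → ℝ} (hq : Measurable q) (hq0 : 0 ≤ q)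
    (h : IsProbabilityMeasure (ρ.withDensity fun y ↦ ENNReal.ofReal (q y))) :
    Integrable q ρ ∧ ∫ y, q y ∂ρ = 1 := by
  have hlint : ∫⁻ y, ENNReal.ofReal (q y) ∂ρ = 1 := by
    rw [← setLIntegral_univ, ← withDensity_apply _ .univ, h.measure_univ]
  have hae : 0 ≤ᵐ[ρ] q := .of_forall hq0
  refine ⟨(lintegral_ofReal_ne_top_iff_integrable hq.aestronglyMeasurable hae).1 (by simp [hlint]),
    ?_⟩
  rw [integral_eq_lintegral_of_nonneg_ae hae hq.aestronglyMeasurable, hlint, ENNReal.toReal_one]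

lemma integral_eq_zero_of_tendsto_slope_density [IsProbabilityMeasure ρ]
    {q : ℝ → X → ℝ} {q' : X → ℝ} (hq' : Integrable q' ρ)
    (hq : ∀ᶠ h in 𝓝[≠] 0, Integrable (q h) ρ ∧ ∫ y, q h y ∂ρ = 1)
    (hlim : Tendsto (fun h ↦ ∫ y, ((q h y - 1) / h - q' y) ∂ρ) (𝓝[≠] 0) (𝓝 0)) :
    ∫ y, q' y ∂ρ = 0 := by
  have heq : ∀ᶠ h in 𝓝[≠] 0, ∫ y, ((q h y - 1) / h - q' y) ∂ρ = -∫ y, q' y ∂ρ := by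
    filter_upwards [hq] with h ⟨hint, hone⟩
    have hslope : Integrable (fun y ↦ (q h y - 1) / h) ρ :=
      (hint.sub (integrable_const 1)).div_const h
    rw [integral_sub hslope hq', integral_div, integral_sub hint (integrable_const 1), hone]
    simp
  exact neg_eq_zero.1 (tendsto_nhds_unique (tendsto_const_nhds.congr' (heq.mono fun _ ↦ Eq.symm))
    hlim)

lemma tendsto_nhdsNE_zero_of_forall_abs_le_mul {F : ℝ → ℝ} {c : ℝ} (hc : 0 < c)
    (hF : ∀ r, 0 < r → ∃ η > 0, ∀ h, h ≠ 0 → |h| < η → |F h| ≤ r * c) :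
    Tendsto F (𝓝[≠] 0) (𝓝 0) := by
  refine Metric.tendsto_nhdsWithin_nhds.2 fun r hr ↦ ?_
  obtain ⟨η, hη, h⟩ := hF (r / 2 / c) (by positivity)
  refine ⟨η, hη, fun {t} ht htη ↦ ?_⟩
  rw [dist_zero_right, Real.norm_eq_abs] at htη ⊢
  exact (h t ht htη).trans_lt (by rw [div_mul_cancel₀ _ hc.ne']; exact half_lt_self hr)

theorem isMartingaleIncrement_score {Θ : Type*} [SeminormedAddCommGroup Θ] [NormedSpace ℝ Θ]
    {θ₀ e : Θ} {ε : ℝ} {P : Θ → Kernel X X} {p : Θ → X → X → ℝ}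
    {p' : X → X → ℝ} {V : X → ℝ} (hε : 0 < ε)
    (hP : ∀ θ ∈ Metric.ball θ₀ ε, IsMarkovKernel (P θ))
    (hp : ∀ θ ∈ Metric.ball θ₀ ε, Measurable (Function.uncurry (p θ)))
    (hp0 : ∀ θ ∈ Metric.ball θ₀ ε, ∀ x y, 0 ≤ p θ x y)
    (hPp : ∀ θ ∈ Metric.ball θ₀ ε, ∀ x,
      P θ x = (P θ₀ x).withDensity fun y ↦ ENNReal.ofReal (p θ x y))
    (hp' : Measurable (Function.uncurry p')) (hV1 : ∀ x, 1 ≤ V x)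
    (hdiff : ∀ r, 0 < r → ∃ η > 0, ∀ h : ℝ, h ≠ 0 → |h| < η → ∀ x,
      |∫ y, ((p (θ₀ + h • e) x y - 1) / h - p' x y) ∂P θ₀ x| ≤ r * V x)
    (hsq : ∃ C : ℝ, ∀ x, ∫⁻ y, ENNReal.ofReal (p' x y ^ 2) ∂P θ₀ x ≤ ENNReal.ofReal (C * V x)) :
    IsMartingaleIncrement (P θ₀) (fun x ↦ ENNReal.ofReal (V x)) p' := by
  obtain ⟨C, hC⟩ := hsq
  have := hP θ₀ (Metric.mem_ball_self hε)
  have hball : ∀ᶠ h : ℝ in 𝓝[≠] 0, θ₀ + h • e ∈ Metric.ball θ₀ ε :=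
    tendsto_nhdsWithin_of_tendsto_nhds (Continuous.tendsto' (by fun_prop) _ _ (by simp))
      |>.eventually (Metric.ball_mem_nhds θ₀ hε)
  refine isMartingaleIncrement_of_lintegral_ofReal_sq_le (fun x ↦ zero_le_one.trans (hV1 x)) hp'
    (fun x ↦ integral_eq_zero_of_tendsto_slope_density ?_ (hball.mono fun h hθ ↦ ?_) <|
      tendsto_nhdsNE_zero_of_forall_abs_le_mul (zero_lt_one.trans_le (hV1 x)) fun r hr ↦
        (hdiff r hr).imp fun η ⟨hη, H⟩ ↦ ⟨hη, fun h h0 hhη ↦ H h h0 hhη x⟩) hC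
  · exact (memLp_two_of_lintegral_ofReal_sq_ne_top hp'.of_uncurry_left
      ((hC x).trans_lt ENNReal.ofReal_lt_top).ne).integrable one_le_two
  · have := hP _ hθ
    exact integrable_and_integral_eq_one_of_withDensity (hp _ hθ).of_uncurry_left (hp0 _ hθ x)
      (hPp _ hθ x ▸ inferInstance)

end Score

theorem naive_estimator_clt_general {X : Type*} [MeasurableSpace X] {P : Kernel X X}
    [IsMarkovKernel P] {V : X → ℝ≥0∞} {K : Set X} {l b : ℝ≥0∞} {m : ℕ} {δ : ℝ≥0}
    {ν π μ : Measure X} [IsProbabilityMeasure ν] [IsProbabilityMeasure π] {Pμ : Measure (ℕ → X)}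
    {ι κ : Type*} [Finite ι] [Fintype κ] {ξ : ι → X → X → ℝ} {f : X → ℝ}
    (hdrift : IsGeometricDrift P V K l b) (hsmall : IsSmallSet P K m δ ν) (hπ : P.Invariant π)
    (hπV : ∫⁻ x, V x ∂π < ∞) (hPμ : IsMarkovChainLaw μ P Pμ) (hμV : ∫⁻ x, V x ∂μ < ∞)
    (hξ : ∀ i, IsMartingaleIncrement P V (ξ i)) (hf : Measurable f)
    (hfV : f =O[⊤] fun x ↦ (V x).toReal) {C : Matrix ι κ ℝ}
    (hC : C * C.transpose = (∫ x, f x ∂π) ^ 2 • incrementCovariance P π ξ)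
    (φ : BoundedContinuousFunction (ι → ℝ) ℝ) :
    Tendsto (fun n : ℕ ↦ ∫ ω, φ fun i ↦ (1 / (n : ℝ) * ∑ k ∈ Finset.range n, f (ω k)) *
      (∑ k ∈ Finset.range n, ξ i (ω k) (ω (k + 1))) / √n ∂Pμ) atTop
      (𝓝 (∫ w, φ (C.mulVec w) ∂(Measure.pi fun _ : κ ↦ gaussianReal 0 1))) := by
  classical
  have := Fintype.ofFinite ι
  have := hPμ.1
  let ψ : BoundedContinuousFunction (EuclideanSpace ℝ ι) ℝ :=
    φ.compContinuous ⟨WithLp.ofLp, by fun_prop⟩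
  have hclt := tendstoInDistribution_average_smul_martingale hdrift hsmall hπ hπV hPμ hμV hξ hf hfV
  have hlaw : (multivariateGaussian 0 (incrementCovariance P π ξ)).map ((∫ x, f x ∂π) • ·)
      = (Measure.pi fun _ : κ ↦ gaussianReal 0 1).map (fun w ↦ WithLp.toLp 2 (C.mulVec w)) := by
    rw [map_smul_multivariateGaussian_zero (posSemidef_incrementCovariance hξ hdrift hπV),
      map_mulVec_pi_gaussianReal, hC]
  have hψ := ProbabilityMeasure.tendsto_iff_forall_integral_tendsto.1 hclt.tendsto ψ
  simp only [ProbabilityMeasure.coe_mk, hlaw] at hψ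
  rw [integral_map (by fun_prop) (by fun_prop)] at hψ
  refine hψ.congr fun n ↦ ?_
  rw [integral_map (hclt.forall_aemeasurable n) (by fun_prop)]
  refine integral_congr_ae (.of_forall fun ω ↦ congrArg φ (funext fun i ↦ ?_))
  change (_ : ℝ) * ((_ : ℝ) * (_ : ℝ)) = _
  ring

/-- Proposition 3.1: under Assumption 1, `n^{−1/2}·α_n·∇L_n(θ₀)` converges in distribution
to a centered multivariate Gaussian with covariance `α(θ₀)²·Σ`. -/
theorem naive_estimator_clt {X : Type*} [MeasurableSpace X] (d : ℕ)
    (θ₀ : Fin d → ℝ) (ε : ℝ) (hε : 0 < ε)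
    (P : (Fin d → ℝ) → Kernel X X)
    (hPmarkov : ∀ θ ∈ Metric.ball θ₀ ε, IsMarkovKernel (P θ))
    [IsMarkovKernel (P θ₀)]
    -- densities with respect to `P θ₀`
    (p : (Fin d → ℝ) → X → X → ℝ)
    (hp_meas : ∀ θ ∈ Metric.ball θ₀ ε, Measurable (Function.uncurry (p θ)))
    (hp_nonneg : ∀ θ ∈ Metric.ball θ₀ ε, ∀ x y, 0 ≤ p θ x y)
    (hp_density : ∀ θ ∈ Metric.ball θ₀ ε, ∀ x,
      (P θ) x = ((P θ₀) x).withDensity fun y => ENNReal.ofReal (p θ x y))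
    (hp_one : ∀ x y, p θ₀ x y = 1)
    -- differentiability of the densities at `θ₀` with partial derivatives `dp i`
    (dp : Fin d → X → X → ℝ)
    (hdp_meas : ∀ i, Measurable (Function.uncurry (dp i)))
    (hdp : ∀ x y, HasFDerivAt (fun θ => p θ x y)
      (∑ i : Fin d, dp i x y • (ContinuousLinearMap.proj i : (Fin d → ℝ) →L[ℝ] ℝ)) θ₀)
    -- (i) ψ-irreducibility
    (ψ : Measure X) [SigmaFinite ψ] (hψ : ψ ≠ 0)
    (hirr : ∀ θ ∈ Metric.ball θ₀ ε, ∀ A : Set X, MeasurableSet A → 0 < ψ A →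
      ∀ x, ∃ n : ℕ, 0 < (kpow (P θ) n) x A)
    -- (ii) minorization on the small set `K`
    (K : Set X) (hK : MeasurableSet K) (δ : ℝ) (hδ : 0 < δ) (m : ℕ)
    (ν : Measure X) [IsProbabilityMeasure ν]
    (hminor : ∀ θ ∈ Metric.ball θ₀ ε, ∀ x ∈ K, ∀ A : Set X, MeasurableSet A →
      ENNReal.ofReal δ * ν A ≤ (kpow (P θ) m) x A)
    -- (iii) drift condition
    (V : X → ℝ) (hVmeas : Measurable V) (hV1 : ∀ x, 1 ≤ V x)
    (l b : ℝ) (hl0 : 0 < l) (hl1 : l < 1) (hb : 0 ≤ b)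
    (hdrift : ∀ θ ∈ Metric.ball θ₀ ε, ∀ x,
      ∫⁻ y, ENNReal.ofReal (V y) ∂((P θ) x)
        ≤ ENNReal.ofReal (l * V x + b * K.indicator (fun _ => 1) x))
    -- (iv) finiteness of `|||P^{(i)}(θ₀)|||_V` and differentiability in `V`-operator norm
    (hPi_bdd : ∀ i : Fin d, ∃ C : ℝ, ∀ x, ∀ g : X → ℝ, Measurable g → (∀ y, |g y| ≤ V y) →
      |∫ y, g y * dp i x y ∂((P θ₀) x)| ≤ C * V x)
    (hPi_diff : ∀ i : Fin d, ∀ δ' : ℝ, 0 < δ' → ∃ η > 0, ∀ h : ℝ, h ≠ 0 → |h| < η →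
      ∀ x, ∀ g : X → ℝ, Measurable g → (∀ y, |g y| ≤ V y) →
        |∫ y, g y * ((p (θ₀ + h • (Pi.single i 1 : Fin d → ℝ)) x y - 1) / h - dp i x y) ∂((P θ₀) x)|
          ≤ δ' * V x)
    -- (v) `sup_x g_{ii}(x)/V(x) < ∞`
    (hgV : ∀ i : Fin d, ∃ C : ℝ, ∀ x,
      ∫⁻ y, ENNReal.ofReal ((dp i x y) ^ 2) ∂((P θ₀) x) ≤ ENNReal.ofReal (C * V x))
    -- (vi) `sup_x |f(x)|/√V(x) < ∞`
    (f : X → ℝ) (hf_meas : Measurable f)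
    (hf_bdd : ∃ κ : ℝ, ∀ x, |f x| ≤ κ * Real.sqrt (V x))
    -- invariant probability measure with `πV < ∞`
    (π : Measure X) [IsProbabilityMeasure π]
    (hπ_inv : π.bind (fun x => (P θ₀) x) = π)
    (hπV : ∫⁻ x, ENNReal.ofReal (V x) ∂π < ⊤)
    (α : ℝ) (hα : α = ∫ x, f x ∂π)
    (Sig : Matrix (Fin d) (Fin d) ℝ)
    (hSig : ∀ i j, Sig i j = ∫ x, ∫ y, dp i x y * dp j x y ∂((P θ₀) x) ∂π)
    -- the chain with initial distribution `μ`
    (μ : Measure X) [IsProbabilityMeasure μ]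
    (hμV : ∫⁻ x, ENNReal.ofReal (V x) ∂μ < ⊤)
    (Pμ : Measure (ℕ → X)) (hPμ : IsMarkovChainLaw μ (P θ₀) Pμ)
    (A : ℕ → (ℕ → X) → ℝ)
    (hA : ∀ n ω, A n ω = (1 / (n : ℝ)) * ∑ j ∈ Finset.range n, f (ω j))
    (M : ℕ → (ℕ → X) → Fin d → ℝ)
    (hM : ∀ n ω i, M n ω i = ∑ j ∈ Finset.range n, dp i (ω j) (ω (j + 1))) :
    ∀ C : Matrix (Fin d) (Fin d) ℝ, C * C.transpose = (α ^ 2) • Sig →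
      ∀ φ : BoundedContinuousFunction (Fin d → ℝ) ℝ,
        Tendsto (fun n : ℕ => ∫ ω, φ (fun i => A n ω * M n ω i / Real.sqrt n) ∂Pμ)
          atTop
          (nhds (∫ w, φ (C.mulVec w) ∂(Measure.pi fun _ : Fin d => gaussianReal 0 1))) := by
  intro C hC φ
  have hθ₀ : θ₀ ∈ Metric.ball θ₀ ε := Metric.mem_ball_self hε
  have hscore (i : Fin d) :
      IsMartingaleIncrement (P θ₀) (fun x ↦ ENNReal.ofReal (V x)) (dp i) :=
    isMartingaleIncrement_score hε hPmarkov hp_meas hp_nonneg hp_density (hdp_meas i) hV1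
      (fun r hr ↦ (hPi_diff i r hr).imp fun η ⟨hη, hdiff⟩ ↦ ⟨hη, fun h h0 hhη x ↦ by
        simpa using hdiff h h0 hhη x (fun _ ↦ 1) measurable_const (by simpa using hV1)⟩) (hgV i)
  have hcov : Sig = incrementCovariance (P θ₀) π dp := Matrix.ext hSig
  obtain ⟨κ, hκ⟩ := hf_bdd
  simpa only [hA, hM] using naive_estimator_clt_general
    (isGeometricDrift_ofReal hVmeas hV1 hK hl1 (hdrift θ₀ hθ₀))
    (isSmallSet_of_forall_measurableSet hδ (hminor θ₀ hθ₀)) hπ_inv hπV hPμ hμV hscore hf_meas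
    (isBigO_toReal_of_abs_le_mul_sqrt hV1 hκ) (hα ▸ hcov ▸ hC) φ

end
end
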